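/- arXiv:1904.00146 — 2 statements merged into one kernel-verified Lean document; each statement's English description precedes it below -/
import Mathlib

section
/- Let ℓ > r ≥ 2 be integers and let F be a 2-graph (simple graph) with chromatic number χ(F) = ℓ. Then the Turán density of the expansion H_F^(r) satisfies π(H_F^(r)) = (r!/(ℓ−1)^r)·C(ℓ−1, r); that is, the sequence ex(n, H_F^(r))/C(n, r) converges as n → ∞ to (r!/(ℓ−1)^r)·C(ℓ−1, r). -/
open Finset

/-- An `r`-graph: a set of edges each of which has exactly `r` vertices. -/
def IsRGraph {α : Type*} (r : ℕ) (G : Finset (Finset α)) : Prop :=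
  ∀ e ∈ G, e.card = r

/-- `G` contains a (not necessarily induced) copy of `H`, i.e. a subgraph isomorphic to `H`. -/
def ContainsCopy {α β : Type*} [DecidableEq β]
    (H : Finset (Finset α)) (G : Finset (Finset β)) : Prop :=
  ∃ f : α → β, Function.Injective f ∧ ∀ e ∈ H, e.image f ∈ G

/-- There is a homomorphism from `H` to `G`. -/
def ContainsHom {α β : Type*} [DecidableEq β]
    (H : Finset (Finset α)) (G : Finset (Finset β)) : Prop :=
  ∃ f : α → β, ∀ e ∈ H, e.image f ∈ G

/-- The Turán number `ex(n, H)` for `r`-graphs: the maximum number of edges in an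
`n`-vertex `H`-free `r`-graph. -/
noncomputable def exNum {α : Type*} (r n : ℕ) (H : Finset (Finset α)) : ℕ :=
  sSup {m | ∃ G : Finset (Finset (Fin n)), IsRGraph r G ∧ ¬ ContainsCopy H G ∧ G.card = m}

/-- The two endpoints of an edge of a simple graph, as a `Finset`. -/
def sym2ToFinset {α : Type*} [Fintype α] [DecidableEq α] (e : Sym2 α) : Finset α :=
  Finset.univ.filter (· ∈ e)

/-- The expansion `H_F^(r)` of a 2-graph `F`: each edge of `F` is enlarged with a new set of
`r - 2` vertices, distinct edges getting disjoint sets of new vertices. -/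
def expansion {α : Type*} [Fintype α] [DecidableEq α] (r : ℕ)
    (F : SimpleGraph α) [DecidableRel F.Adj] :
    Finset (Finset (α ⊕ (F.edgeFinset × Fin (r - 2)))) :=
  F.edgeFinset.attach.image (fun e =>
    (sym2ToFinset e.1).image Sum.inl ∪
      (Finset.univ : Finset (Fin (r - 2))).image (fun i => Sum.inr (e, i)))

/-- The complete balanced `l`-partite `r`-graph `T_r(n, l)` on vertex set `Fin n`,
with vertex classes the residue classes modulo `l` (which differ in size by at most 1):
its edges are all `r`-sets meeting each class in at most one vertex. -/
def turanGraph (r n l : ℕ) : Finset (Finset (Fin n)) :=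
  (Finset.univ.powersetCard r).filter
    (fun e => ∀ u ∈ e, ∀ v ∈ e, (u : ℕ) % l = (v : ℕ) % l → u = v)

/-- `t_r(n, l)`, the number of edges of `T_r(n, l)`. -/
def turanNum (r n l : ℕ) : ℕ := (turanGraph r n l).card

/-- Two `r`-graphs on `Fin n` are `ε`-close if some relabelling of the first one has
symmetric difference at most `ε·C(n,r)` with the second one. -/
def EpsClose (r n : ℕ) (ε : ℝ) (G₁ G₂ : Finset (Finset (Fin n))) : Prop :=
  ∃ σ : Fin n ≃ Fin n,
    ((((G₁.image fun e => e.image σ) \ G₂) ∪ (G₂ \ (G₁.image fun e => e.image σ))).card : ℝ)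
      ≤ ε * (n.choose r)

/-- `G` contains a member of the decomposition family `𝓕_F` (w.r.t. proper `ℓ`-colourings of
`F`) as a subgraph, with all its vertices placed inside `S`.  A member of `𝓕_F` is obtained
from `F` by deleting the vertices of `ℓ - 2` colour classes of a proper `ℓ`-colouring of `F`. -/
def ContainsDecompMemberOn {α β : Type*} [DecidableEq β] (ℓ : ℕ) (F : SimpleGraph α)
    (G : Finset (Finset β)) (S : Set β) : Prop :=
  ∃ c : α → Fin ℓ, (∀ ⦃u v⦄, F.Adj u v → c u ≠ c v) ∧
    ∃ i j : Fin ℓ, i ≠ j ∧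
      ∃ f : {v : α // c v = i ∨ c v = j} → β, Function.Injective f ∧
        (∀ v, f v ∈ S) ∧
        ∀ u v : {v : α // c v = i ∨ c v = j}, F.Adj u.1 v.1 → ({f u, f v} : Finset β) ∈ G

/-- `biex(n, F) = ex(n, 𝓕_F)`: the maximum number of edges in an `n`-vertex 2-graph containing
no member of the decomposition family of `F` (w.r.t. proper `ℓ`-colourings) as a subgraph. -/
noncomputable def biex {α : Type*} (ℓ : ℕ) (F : SimpleGraph α) (n : ℕ) : ℕ :=
  sSup {m | ∃ G : Finset (Finset (Fin n)), IsRGraph 2 G ∧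
    ¬ ContainsDecompMemberOn ℓ F G Set.univ ∧ G.card = m}

/-- The Lagrangian of an `r`-graph `G`:
`λ(G) = max { Σ_{e ∈ G} Π_{i ∈ e} w i }` over all legal weightings `w`. -/
noncomputable def lagrangian {α : Type*} [Fintype α] (G : Finset (Finset α)) : ℝ :=
  sSup {x : ℝ | ∃ w : α → ℝ, (∀ i, 0 ≤ w i) ∧ (∑ i, w i) = 1 ∧
    x = ∑ e ∈ G, ∏ i ∈ e, w i}

/-!
Write `L = ℓ - 1`. For the lower bound, a copy of the expansion in the family of `r`-cliques of the
Turán graph `T(n, L)` would give a copy of `F` in `T(n, L)`, which is `L`-colourable.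

For the upper bound, call a pair of vertices of an expansion-free `r`-graph heavy if no bounded set
of further vertices meets all edges through it. A copy of `F` formed by heavy pairs extends greedily
to a copy of the expansion, so the graph of heavy pairs is `F`-free. By Erdős' theorem on complete
multipartite subhypergraphs its density of `L + 1`-cliques tends to `0`, and the Moon–Moser
inequalities propagate this down to an asymptotic bound on its `r`-cliques, by their number in
`T(n, L)`. All but `O(n ^ (r - 1))` edges of the `r`-graph are such cliques, because any other edge
meets the small transversal of a light pair it contains.
-/

section CliqueCounting

variable {V : Type*} [Fintype V] [DecidableEq V] (Γ : SimpleGraph V) [DecidableRel Γ.Adj]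

/-- The common neighbourhood of a set of vertices, i.e. the vertices extending a clique on that
set to a larger clique. -/
def commonNbrs (A : Finset V) : Finset V := {v | ∀ a ∈ A, Γ.Adj v a}

variable {Γ} in
lemma mem_commonNbrs {A : Finset V} {v : V} : v ∈ commonNbrs Γ A ↔ ∀ a ∈ A, Γ.Adj v a := by
  simp [commonNbrs]

variable {Γ} in
lemma notMem_of_mem_commonNbrs {A : Finset V} {v : V} (hv : v ∈ commonNbrs Γ A) : v ∉ A :=
  fun hvA => Γ.irrefl (mem_commonNbrs.1 hv v hvA)

lemma sum_cliqueFinset_succ_sum_erase (s : ℕ) (g : Finset V → ℕ) :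
    ∑ A ∈ Γ.cliqueFinset (s + 1), ∑ v ∈ A, g (A.erase v) =
      ∑ B ∈ Γ.cliqueFinset s, #(commonNbrs Γ B) * g B := by
  simp_rw [← smul_eq_mul, ← sum_const]
  rw [sum_sigma', sum_sigma']
  refine sum_bij' (fun p _ => ⟨p.1.erase p.2, p.2⟩) (fun q _ => ⟨insert q.2 q.1, q.2⟩)
    ?_ ?_ ?_ ?_ fun _ _ => rfl
  · rintro ⟨A, v⟩ hA
    simp only [mem_sigma, SimpleGraph.mem_cliqueFinset_iff] at hA ⊢
    refine ⟨hA.1.erase_of_mem hA.2, mem_commonNbrs.2 fun a ha => ?_⟩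
    exact hA.1.isClique hA.2 (mem_of_mem_erase ha) (ne_of_mem_erase ha).symm
  · rintro ⟨B, v⟩ hB
    simp only [mem_sigma, SimpleGraph.mem_cliqueFinset_iff] at hB ⊢
    exact ⟨hB.1.insert (mem_commonNbrs.1 hB.2), mem_insert_self v B⟩
  · rintro ⟨A, v⟩ hA
    simp [insert_erase (mem_sigma.1 hA).2]
  · rintro ⟨B, v⟩ hB
    simp [erase_insert (notMem_of_mem_commonNbrs (mem_sigma.1 hB).2)]

lemma sum_card_commonNbrs (s : ℕ) :
    ∑ B ∈ Γ.cliqueFinset s, #(commonNbrs Γ B) = (s + 1) * #(Γ.cliqueFinset (s + 1)) := by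
  have hcount := sum_cliqueFinset_succ_sum_erase Γ s fun _ => 1
  simp only [mul_one, sum_const, smul_eq_mul] at hcount
  rw [← hcount, sum_congr rfl fun A hA => (SimpleGraph.mem_cliqueFinset_iff.1 hA).card_eq,
    sum_const, smul_eq_mul, mul_comm]

lemma sum_card_commonNbrs_erase_add_le (A : Finset V) :
    ∑ v ∈ A, #(commonNbrs Γ (A.erase v)) + #(commonNbrs Γ A) ≤
      #A * #(commonNbrs Γ A) + Fintype.card V := by
  simp only [commonNbrs, card_filter, mem_erase, ← card_univ (α := V), card_eq_sum_ones univ]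
  rw [sum_comm, ← sum_add_distrib, mul_sum, ← sum_add_distrib]
  refine sum_le_sum fun w _ => ?_
  by_cases hw : ∀ a ∈ A, Γ.Adj w a
  · simp +contextual [hw]
  · -- If `w` misses some `a ∈ A`, only the deletion of `a` can make `w` a common neighbour.
    obtain ⟨a, ha, hwa⟩ := by simpa using hw
    have hunique : ∀ v ∈ A, (∀ b, b ≠ v ∧ b ∈ A → Γ.Adj w b) → v = a := fun v _ hv =>
      by_contra fun hva => hwa (hv a ⟨Ne.symm hva, ha⟩)
    rw [if_neg hw, add_zero, mul_zero, zero_add, ← card_filter]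
    refine card_le_one.2 fun v hv v' hv' => ?_
    rw [mem_filter] at hv hv'
    exact (hunique v hv.1 hv.2).trans (hunique v' hv'.1 hv'.2).symm

/-- The **Moon–Moser inequality**. -/
theorem sq_card_cliqueFinset_succ_le (s : ℕ) :
    ((s + 1) * #(Γ.cliqueFinset (s + 1))) ^ 2 ≤ #(Γ.cliqueFinset s) *
      (s * ((s + 2) * #(Γ.cliqueFinset (s + 2))) +
        Fintype.card V * #(Γ.cliqueFinset (s + 1))) := by
  have hdegree : ∀ A ∈ Γ.cliqueFinset (s + 1), ∑ v ∈ A, #(commonNbrs Γ (A.erase v)) ≤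
      s * #(commonNbrs Γ A) + Fintype.card V := fun A hA => by
    have := sum_card_commonNbrs_erase_add_le Γ A
    rw [(SimpleGraph.mem_cliqueFinset_iff.1 hA).card_eq] at this
    linarith
  rw [← sum_card_commonNbrs]
  refine sq_sum_le_card_mul_sum_sq.trans (Nat.mul_le_mul_left _ ?_)
  calc ∑ B ∈ Γ.cliqueFinset s, #(commonNbrs Γ B) ^ 2
      = ∑ A ∈ Γ.cliqueFinset (s + 1), ∑ v ∈ A, #(commonNbrs Γ (A.erase v)) := by
        simp_rw [sq, sum_cliqueFinset_succ_sum_erase Γ s fun B => #(commonNbrs Γ B)]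
    _ ≤ ∑ A ∈ Γ.cliqueFinset (s + 1), (s * #(commonNbrs Γ A) + Fintype.card V) :=
        sum_le_sum hdegree
    _ = s * ((s + 2) * #(Γ.cliqueFinset (s + 2))) +
          Fintype.card V * #(Γ.cliqueFinset (s + 1)) := by
        rw [sum_add_distrib, ← mul_sum, sum_card_commonNbrs, sum_const, smul_eq_mul,
          mul_comm (Fintype.card V)]

/-- The normalised number of `s`-cliques of a graph: up to lower order terms, the proportion of
`s`-tuples of vertices which span a clique. -/
noncomputable def cliqueDensity (s : ℕ) : ℝ :=
  s.factorial * #(Γ.cliqueFinset s) / (Fintype.card V : ℝ) ^ s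

/-- Sequences `t` of numbers in `[0, 1]` which satisfy the Moon–Moser inequality, in the form it
takes for the clique densities of a graph. -/
structure IsMoonMoser (t : ℕ → ℝ) : Prop where
  nonneg : ∀ s, 0 ≤ t s
  le_one : ∀ s, t s ≤ 1
  mul_sq_le : ∀ s : ℕ, (s + 1) * t (s + 1) ^ 2 ≤ t s * (s * t (s + 2) + t (s + 1))

lemma cliqueDensity_le_one (s : ℕ) : cliqueDensity Γ s ≤ 1 := by
  refine div_le_one_of_le₀ ?_ (by positivity)
  have hcard : s.factorial * #(Γ.cliqueFinset s) ≤ Fintype.card V ^ s :=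
    calc s.factorial * #(Γ.cliqueFinset s)
        ≤ s.factorial * (Fintype.card V).choose s := by
          gcongr; exact Γ.card_cliqueFinset_le
      _ = (Fintype.card V).descFactorial s := (Nat.descFactorial_eq_factorial_mul_choose _ s).symm
      _ ≤ Fintype.card V ^ s := Nat.descFactorial_le_pow _ s
  exact_mod_cast hcard

theorem isMoonMoser_cliqueDensity : IsMoonMoser (cliqueDensity Γ) where
  nonneg s := by unfold cliqueDensity; positivity
  le_one := cliqueDensity_le_one Γ
  mul_sq_le s := by
    cases isEmpty_or_nonempty V
    · simp [cliqueDensity]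
    have hMM : ((s + 1) * #(Γ.cliqueFinset (s + 1)) : ℝ) ^ 2 ≤ #(Γ.cliqueFinset s) *
        (s * ((s + 2) * #(Γ.cliqueFinset (s + 2))) +
          (Fintype.card V : ℝ) * #(Γ.cliqueFinset (s + 1))) := by
      exact_mod_cast sq_card_cliqueFinset_succ_le Γ s
    have hscale := mul_le_mul_of_nonneg_left hMM
      (show 0 ≤ (s + 1 : ℝ) * (s.factorial / (Fintype.card V : ℝ) ^ (s + 1)) ^ 2 by positivity)
    simp only [cliqueDensity, Nat.factorial_succ, Nat.cast_mul, Nat.cast_succ]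
    refine le_of_eq_of_le ?_ (hscale.trans_eq ?_)
    · ring
    · field_simp
      ring

end CliqueCounting

section MoonMoserSequences

lemma IsMoonMoser.le_mul_add {t : ℕ → ℝ} (ht : IsMoonMoser t) {s L : ℕ} (hL : 0 < L) (hsL : s ≤ L)
    {ε : ℝ} (hε : 0 ≤ ε) (hstep : t (s + 2) ≤ (1 - (s + 1 : ℕ) / L) * t (s + 1) + ε ^ 2) :
    t (s + 1) ≤ (1 - s / L) * t s + ε := by
  set a : ℝ := (1 - s / L) * t s with ha
  have ha0 : 0 ≤ a := by
    refine mul_nonneg (sub_nonneg.2 ?_) (ht.nonneg s)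
    exact div_le_one_of_le₀ (by exact_mod_cast hsL) (by positivity)
  have hquad : t (s + 1) ^ 2 ≤ a * t (s + 1) + ε ^ 2 := by
    refine le_of_mul_le_mul_left ?_ (show (0 : ℝ) < s + 1 by positivity)
    calc (s + 1) * t (s + 1) ^ 2
        ≤ t s * (s * t (s + 2) + t (s + 1)) := ht.mul_sq_le s
      _ ≤ t s * (s * ((1 - (s + 1 : ℕ) / L) * t (s + 1) + ε ^ 2) + t (s + 1)) := by
          have := ht.nonneg s
          gcongr
      _ = (s + 1) * (a * t (s + 1)) + s * ε ^ 2 * t s := by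
          rw [ha]; push_cast; field_simp; ring
      _ ≤ (s + 1) * (a * t (s + 1)) + (s + 1) * ε ^ 2 * 1 := by
          have := mul_le_mul_of_nonneg_left (ht.le_one s) (show 0 ≤ s * ε ^ 2 by positivity)
          nlinarith [sq_nonneg ε]
      _ = (s + 1) * (a * t (s + 1) + ε ^ 2) := by ring
  by_contra! hlt
  nlinarith

variable {ι : Type*} {l : Filter ι} {t : ι → ℕ → ℝ} {L : ℕ}

lemma eventually_le_one_sub_div_mul_add (ht : ∀ i, IsMoonMoser (t i)) (hL : 0 < L)
    (hlim : Filter.Tendsto (t · (L + 1)) l (nhds 0)) {s : ℕ} (hs : s ≤ L) :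
    ∀ ε > 0, ∀ᶠ i in l, t i (s + 1) ≤ (1 - s / L) * t i s + ε := by
  induction hs using Nat.decreasingInduction with
  | self =>
    intro ε hε
    filter_upwards [hlim.eventually_le_const hε] with i hi
    simpa [div_self (Nat.cast_ne_zero.2 hL.ne' : (L : ℝ) ≠ 0)] using hi
  | of_succ s hs ih =>
    intro ε hε
    filter_upwards [ih (ε ^ 2) (by positivity)] with i hi
    exact (ht i).le_mul_add hL hs.le hε.le hi

lemma descFactorial_succ_div_pow_succ {L r : ℕ} (hL : 0 < L) (hr : r ≤ L) :
    (L.descFactorial (r + 1) : ℝ) / L ^ (r + 1) =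
      (1 - r / L) * (L.descFactorial r / L ^ r) := by
  rw [Nat.descFactorial_succ, Nat.cast_mul, Nat.cast_sub hr]
  field_simp
  ring

/-- If the `L + 1`-st terms tend to `0`, then asymptotically the terms up to `L` are at most the
clique densities of the complete `L`-partite graph. -/
theorem eventually_le_descFactorial_div_pow_add (ht : ∀ i, IsMoonMoser (t i)) (hL : 0 < L)
    (hlim : Filter.Tendsto (t · (L + 1)) l (nhds 0)) {r : ℕ} (hr : r ≤ L) :
    ∀ ε > 0, ∀ᶠ i in l, t i r ≤ L.descFactorial r / (L : ℝ) ^ r + ε := by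
  induction r with
  | zero =>
    refine fun ε hε => .of_forall fun i => ?_
    simpa using ((ht i).le_one 0).trans (le_add_of_nonneg_right hε.le)
  | succ r ih =>
    intro ε hε
    filter_upwards [ih (by lia) (ε / 2) (half_pos hε),
      eventually_le_one_sub_div_mul_add ht hL hlim (s := r) (by lia) (ε / 2) (half_pos hε)]
      with i hprev hstep
    have hfactor : (r : ℝ) / L ≤ 1 := div_le_one_of_le₀ (by exact_mod_cast (by lia : r ≤ L))
      (by positivity)
    have hfactor' : (0 : ℝ) ≤ r / L := by positivity
    rw [descFactorial_succ_div_pow_succ hL (by lia)]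
    nlinarith [mul_le_mul_of_nonneg_left hprev (sub_nonneg.2 hfactor)]

end MoonMoserSequences

section Boxes

variable {V : Type*} [Fintype V] [DecidableEq V] {l t : ℕ}

/-- The common link of the vertices `z j` in the `l + 1`-partite `l + 1`-graph `S`: all tuples `y`
such that each `z j`, prepended to `y`, gives an edge. -/
def commonLink (S : Finset (Fin (l + 1) → V)) (z : Fin t → V) : Finset (Fin l → V) :=
  {y | ∀ j, (Fin.cons (z j) y : Fin (l + 1) → V) ∈ S}

lemma sum_card_filter_cons_mem (S : Finset (Fin (l + 1) → V)) :
    ∑ y : Fin l → V, #{v : V | (Fin.cons v y : Fin (l + 1) → V) ∈ S} = #S := by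
  have hS : #S = ∑ x, if x ∈ S then 1 else 0 := by simp
  rw [hS, ← (Fin.consEquiv fun _ => V).sum_comp, Fintype.sum_prod_type_right]
  simp only [card_filter]
  rfl

lemma sum_card_commonLink (S : Finset (Fin (l + 1) → V)) :
    ∑ z : Fin t → V, #(commonLink S z) =
      ∑ y : Fin l → V, #{v : V | (Fin.cons v y : Fin (l + 1) → V) ∈ S} ^ t := by
  simp only [commonLink, card_filter _ univ]
  rw [sum_comm]
  refine sum_congr rfl fun y _ => ?_
  have hpi : ({z | ∀ j, (Fin.cons (z j) y : Fin (l + 1) → V) ∈ S} : Finset (Fin t → V)) =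
      Fintype.piFinset fun _ => {v : V | (Fin.cons v y : Fin (l + 1) → V) ∈ S} := by
    ext z; simp [Fintype.mem_piFinset]
  rw [← card_filter, ← card_filter, hpi, Fintype.card_piFinset_const]

lemma pow_mul_pow_le_sum_card_commonLink [Nonempty V] {S : Finset (Fin (l + 1) → V)} {ε : ℝ}
    (hε : 0 ≤ ε) (hS : ε * (Fintype.card V : ℝ) ^ (l + 1) ≤ #S) :
    ε ^ t * (Fintype.card V : ℝ) ^ (l + t) ≤ ∑ z : Fin t → V, (#(commonLink S z) : ℝ) := by
  have hsum : ∑ z : Fin t → V, (#(commonLink S z) : ℝ) = ∑ y : Fin l → V,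
      (#{v : V | (Fin.cons v y : Fin (l + 1) → V) ∈ S} : ℝ) ^ t := by
    exact_mod_cast sum_card_commonLink S
  rw [hsum]
  cases t with
  | zero => simp
  | succ t =>
    refine le_trans ?_ (pow_sum_div_card_le_sum_pow (fun _ _ => by positivity) t)
    rw [← Nat.cast_sum, sum_card_filter_cons_mem, card_univ, Fintype.card_pi_const, Nat.cast_pow,
      le_div_iff₀ (by positivity)]
    calc ε ^ (t + 1) * (Fintype.card V : ℝ) ^ (l + (t + 1)) * ((Fintype.card V : ℝ) ^ l) ^ t
        = (ε * (Fintype.card V : ℝ) ^ (l + 1)) ^ (t + 1) := by ring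
      _ ≤ (#S : ℝ) ^ (t + 1) := by gcongr

lemma card_filter_injective (V : Type*) [Fintype V] (t : ℕ)
    [DecidablePred (Function.Injective : (Fin t → V) → Prop)] :
    #{z : Fin t → V | Function.Injective z} = (Fintype.card V).descFactorial t := by
  rw [← Fintype.card_subtype, Fintype.card_congr (Equiv.subtypeInjectiveEquivEmbedding _ _),
    Fintype.card_embedding_eq, Fintype.card_fin]

lemma card_filter_not_injective_add_descFactorial (V : Type*) [Fintype V] (t : ℕ)
    [DecidablePred (Function.Injective : (Fin t → V) → Prop)] :
    #{z : Fin t → V | ¬ Function.Injective z} + (Fintype.card V).descFactorial t =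
      Fintype.card V ^ t := by
  rw [← card_filter_injective, add_comm, card_filter_add_card_filter_not, card_univ,
    Fintype.card_pi_const]

lemma exists_injective_le_card_commonLink [Nonempty V] {S : Finset (Fin (l + 1) → V)} {ε : ℝ}
    (hε : 0 ≤ ε) (hS : ε * (Fintype.card V : ℝ) ^ (l + 1) ≤ #S)
    (ht : (1 - ε ^ t / 2) * (Fintype.card V : ℝ) ^ t < (Fintype.card V).descFactorial t) :
    ∃ z : Fin t → V, Function.Injective z ∧
      ε ^ t / 2 * (Fintype.card V : ℝ) ^ l ≤ #(commonLink S z) := by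
  classical
  by_contra! hsmall
  have hinj : (#{z : Fin t → V | Function.Injective z} : ℝ) ≤ (Fintype.card V : ℝ) ^ t := by
    rw [card_filter_injective]
    exact_mod_cast Nat.descFactorial_le_pow _ t
  have hnoninj : (#{z : Fin t → V | ¬ Function.Injective z} : ℝ) <
      ε ^ t / 2 * (Fintype.card V : ℝ) ^ t := by
    have : (#{z : Fin t → V | ¬ Function.Injective z} : ℝ) +
        (Fintype.card V).descFactorial t = (Fintype.card V : ℝ) ^ t := by
      exact_mod_cast card_filter_not_injective_add_descFactorial V t
    linarith
  have htriv : ∀ z : Fin t → V, (#(commonLink S z) : ℝ) ≤ (Fintype.card V : ℝ) ^ l := fun z => by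
    have := card_le_univ (commonLink S z)
    rw [Fintype.card_pi_const] at this
    exact_mod_cast this
  refine (pow_mul_pow_le_sum_card_commonLink (t := t) hε hS).not_gt ?_
  calc ∑ z : Fin t → V, (#(commonLink S z) : ℝ)
      = ∑ z with Function.Injective z, (#(commonLink S z) : ℝ) +
          ∑ z with ¬ Function.Injective z, (#(commonLink S z) : ℝ) :=
        (sum_filter_add_sum_filter_not _ _ _).symm
    _ ≤ #{z : Fin t → V | Function.Injective z} * (ε ^ t / 2 * (Fintype.card V : ℝ) ^ l) +
          #{z : Fin t → V | ¬ Function.Injective z} * (Fintype.card V : ℝ) ^ l := by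
        simp only [← nsmul_eq_mul]
        exact add_le_add
          (sum_le_card_nsmul _ _ _ fun z hz => (hsmall z (mem_filter.1 hz).2).le)
          (sum_le_card_nsmul _ _ _ fun z _ => htriv z)
    _ < (Fintype.card V : ℝ) ^ t * (ε ^ t / 2 * (Fintype.card V : ℝ) ^ l) +
          ε ^ t / 2 * (Fintype.card V : ℝ) ^ t * (Fintype.card V : ℝ) ^ l :=
        add_lt_add_of_le_of_lt (by gcongr) (by gcongr)
    _ = ε ^ t * (Fintype.card V : ℝ) ^ (l + t) := by ring

lemma eventually_mul_pow_lt_descFactorial (t : ℕ) {c : ℝ} (hc : c < 1) :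
    ∀ᶠ n : ℕ in Filter.atTop, c * (n : ℝ) ^ t < n.descFactorial t := by
  have hpos : ∀ᶠ n : ℕ in Filter.atTop, 0 < (n : ℝ) ^ t := by
    filter_upwards [Filter.eventually_gt_atTop 0] with n hn
    positivity
  have hlim := (Asymptotics.isEquivalent_iff_tendsto_one (hpos.mono fun _ h => h.ne')).1
    (isEquivalent_descFactorial t)
  filter_upwards [hlim.eventually_const_lt hc, hpos] with n hn hn0
  exact (lt_div_iff₀ hn0).1 hn

/-- Erdős' theorem that dense `l`-partite `l`-graphs contain large complete `l`-partite
subgraphs. -/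
theorem eventually_exists_box_subset (l t : ℕ) : ∀ ε : ℝ, 0 < ε →
    ∀ᶠ n : ℕ in Filter.atTop, ∀ S : Finset (Fin l → Fin n), ε * (n : ℝ) ^ l ≤ #S →
      ∃ g : Fin l → Fin t → Fin n, (∀ i, Function.Injective (g i)) ∧
        ∀ j : Fin l → Fin t, (fun i => g i (j i)) ∈ S := by
  induction l with
  | zero =>
    refine fun ε hε => .of_forall fun n S hS => ⟨fun i => i.elim0, fun i => i.elim0, fun j => ?_⟩
    have hS0 : (0 : ℝ) < #S := by rw [pow_zero, mul_one] at hS; linarith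
    obtain ⟨x, hx⟩ := card_pos.1 (Nat.cast_pos.1 hS0)
    rwa [Subsingleton.elim (fun i => _) x]
  | succ l ih =>
    intro ε hε
    have hε' : 0 < ε ^ t / 2 := by positivity
    filter_upwards [ih (ε ^ t / 2) hε', Filter.eventually_gt_atTop 0,
      eventually_mul_pow_lt_descFactorial t (sub_lt_self 1 hε')] with n hbox hn hdesc S hS
    have : NeZero n := ⟨hn.ne'⟩
    obtain ⟨z, hz, hlink⟩ := exists_injective_le_card_commonLink (t := t) hε.le
      (by rwa [Fintype.card_fin]) (by rwa [Fintype.card_fin])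
    obtain ⟨g, hg, hmem⟩ := hbox (commonLink S z) (by rwa [Fintype.card_fin] at hlink)
    refine ⟨Fin.cons z g, Fin.cases hz hg, fun j => ?_⟩
    have hj := (mem_filter.1 (hmem fun i => j i.succ)).2 (j 0)
    convert hj using 1
    funext i
    cases i using Fin.cases <;> rfl

lemma card_cliqueFinset_le_card_pairwise_adj (Γ : SimpleGraph V) [DecidableRel Γ.Adj]
    [DecidablePred fun x : Fin l → V => Pairwise fun i j => Γ.Adj (x i) (x j)] :
    #(Γ.cliqueFinset l) ≤ #{x : Fin l → V | Pairwise fun i j => Γ.Adj (x i) (x j)} := by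
  refine card_le_card_of_surjOn (fun x => univ.image x) fun A hA => ?_
  obtain ⟨hclique, hcard⟩ := SimpleGraph.mem_cliqueFinset_iff.1 hA
  let e := A.equivFinOfCardEq hcard
  refine ⟨fun i => e.symm i, ?_, ?_⟩
  · simp only [coe_filter, mem_univ, true_and]
    exact fun i j hij => hclique (e.symm i).2 (e.symm j).2
      fun h => hij (e.symm.injective (Subtype.ext h))
  · ext a
    simp only [mem_image, mem_univ, true_and]
    exact ⟨fun ⟨i, hi⟩ => hi ▸ (e.symm i).2, fun ha => ⟨e ⟨a, ha⟩, by simp⟩⟩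

lemma completeEquipartiteGraph_isContained_of_box {V : Type*} {Γ : SimpleGraph V}
    {g : Fin l → Fin t → V}
    (hg : ∀ i, Function.Injective (g i))
    (hadj : ∀ j : Fin l → Fin t, Pairwise fun i i' => Γ.Adj (g i (j i)) (g i' (j i'))) :
    (SimpleGraph.completeEquipartiteGraph l t).IsContained Γ := by
  have hmap : ∀ p q : Fin l × Fin t, p.1 ≠ q.1 → Γ.Adj (g p.1 p.2) (g q.1 q.2) := fun p q hpq => by
    simpa [hpq.symm] using hadj (fun i => if i = p.1 then p.2 else q.2) hpq
  refine ⟨⟨⟨fun p => g p.1 p.2, fun {p q} h => hmap p q h⟩, fun p q hpq => ?_⟩⟩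
  by_cases h : p.1 = q.1
  · refine Prod.ext h (hg p.1 ?_)
    simpa [h] using hpq
  · exact absurd hpq (hmap p q h).ne

theorem tendsto_cliqueDensity_of_completeEquipartiteGraph_free {Γ : ∀ n, SimpleGraph (Fin n)}
    [∀ n, DecidableRel (Γ n).Adj]
    (hfree : ∀ n, (SimpleGraph.completeEquipartiteGraph l t).Free (Γ n)) :
    Filter.Tendsto (fun n => cliqueDensity (Γ n) l) Filter.atTop (nhds 0) := by
  classical
  refine tendsto_order.2 ⟨fun a ha => .of_forall fun n =>
    ha.trans_le ((isMoonMoser_cliqueDensity (Γ n)).nonneg l), fun ε hε => ?_⟩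
  have hε' : 0 < ε / l.factorial := by positivity
  filter_upwards [eventually_exists_box_subset l t _ hε', Filter.eventually_gt_atTop 0]
    with n hbox hn
  by_contra! hdense
  rw [cliqueDensity, Fintype.card_fin, le_div_iff₀ (by positivity)] at hdense
  obtain ⟨g, hg, hmem⟩ := hbox {x | Pairwise fun i j => (Γ n).Adj (x i) (x j)} <| by
    refine le_trans ?_ (Nat.cast_le.2 (card_cliqueFinset_le_card_pairwise_adj (Γ n)))
    rw [div_mul_eq_mul_div, div_le_iff₀ (by positivity)]
    linarith
  exact hfree n (completeEquipartiteGraph_isContained_of_box hg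
    fun j => (mem_filter.1 (hmem j)).2)

theorem tendsto_cliqueDensity_of_colorable_of_free {α : Type*} [Finite α] {F : SimpleGraph α}
    (hF : F.Colorable l) {Γ : ∀ n, SimpleGraph (Fin n)} [∀ n, DecidableRel (Γ n).Adj]
    (hfree : ∀ n, F.Free (Γ n)) :
    Filter.Tendsto (fun n => cliqueDensity (Γ n) l) Filter.atTop (nhds 0) := by
  classical
  cases nonempty_fintype α
  have hpart := SimpleGraph.isContained_completeEquipartiteGraph_of_colorable hF.some
    (Fintype.card α) fun c => set_fintype_card_le_univ _
  exact tendsto_cliqueDensity_of_completeEquipartiteGraph_free fun n h =>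
    hfree n (hpart.trans h)

end Boxes

section HeavyPairs

variable {V : Type*} [DecidableEq V] {G : Finset (Finset V)} {M r : ℕ}

/-- The graph of `M`-heavy pairs of a hypergraph: `u` and `v` are joined when no set of at most
`M` vertices meets all the sets `e \ {u, v}`, where `e` runs over the edges through `u` and `v`.
This leaves enough room to find, greedily, edges through many heavy pairs which overlap only in
these pairs. -/
def heavyGraph (G : Finset (Finset V)) (M : ℕ) : SimpleGraph V where
  Adj u v := u ≠ v ∧ ∀ S : Finset V, #S ≤ M → ∃ e ∈ G, u ∈ e ∧ v ∈ e ∧ Disjoint (e \ {u, v}) S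
  symm := ⟨fun u v h => ⟨h.1.symm, fun S hS => by
    simpa only [and_left_comm, pair_comm u v] using h.2 S hS⟩⟩
  loopless := ⟨fun _ h => h.1 rfl⟩

lemma card_filter_powersetCard_subset_mul_le [Fintype V] (A : Finset V) (r : ℕ) :
    #{e ∈ (univ : Finset V).powersetCard r | A ⊆ e} * Fintype.card V ^ #A ≤
      Fintype.card V ^ r := by
  by_cases hAr : #A ≤ r
  · rw [card_filter_powersetCard_subset A univ r (subset_univ A) hAr, card_univ]
    calc (Fintype.card V - #A).choose (r - #A) * Fintype.card V ^ #A
        ≤ Fintype.card V ^ (r - #A) * Fintype.card V ^ #A := by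
          gcongr
          exact (Nat.choose_le_pow _ _).trans (Nat.pow_le_pow_left (Nat.sub_le _ _) _)
      _ = Fintype.card V ^ r := by rw [← pow_add, Nat.sub_add_cancel hAr]
  · rw [filter_eq_empty_iff.2, card_empty, zero_mul]
    · exact Nat.zero_le _
    · exact fun e he hAe => hAr ((mem_powersetCard.1 he).2 ▸ card_le_card hAe)

lemma exists_transversal_of_not_heavyGraph_adj (G : Finset (Finset V)) (M : ℕ) (u v : V) :
    ∃ S : Finset V, #S ≤ M ∧ (∀ w ∈ S, #{u, v, w} = 3) ∧
      (u ≠ v → ¬ (heavyGraph G M).Adj u v → ∀ e ∈ G, u ∈ e → v ∈ e → ∃ w ∈ S, w ∈ e) := by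
  by_cases h : u ≠ v ∧ ¬ (heavyGraph G M).Adj u v
  · obtain ⟨huv, hadj⟩ := h
    obtain ⟨S, hS, hmeet⟩ : ∃ S : Finset V, #S ≤ M ∧
        ∀ e ∈ G, u ∈ e → v ∈ e → ¬ Disjoint (e \ {u, v}) S := by
      simpa [heavyGraph, huv] using hadj
    refine ⟨S \ {u, v}, (card_le_card sdiff_subset).trans hS, fun w hw => ?_,
      fun _ _ e he hu hv => ?_⟩
    · simp only [mem_sdiff, mem_insert, mem_singleton, not_or] at hw
      exact card_eq_three.2 ⟨u, v, w, huv, Ne.symm hw.2.1, Ne.symm hw.2.2, rfl⟩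
    · obtain ⟨w, hwe, hwS⟩ := not_disjoint_iff.1 (hmeet e he hu hv)
      rw [mem_sdiff] at hwe
      exact ⟨w, mem_sdiff.2 ⟨hwS, hwe.2⟩, hwe.1⟩
  · exact ⟨∅, by simp, by simp, fun huv hadj => absurd ⟨huv, hadj⟩ h⟩

/-- An edge which is not a clique of heavy pairs contains a light pair `u`, `v` together with a
third vertex from the transversal of `u`, `v`; there are at most `M * n ^ 2` such triples. -/
lemma card_sdiff_cliqueFinset_heavyGraph_mul_le [Fintype V] [DecidableRel (heavyGraph G M).Adj]
    (hG : IsRGraph r G) :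
    #(G \ (heavyGraph G M).cliqueFinset r) * Fintype.card V ≤ M * Fintype.card V ^ r := by
  cases isEmpty_or_nonempty V
  · simp
  choose S hSM hS3 hSmeet using exists_transversal_of_not_heavyGraph_adj G M
  let B (u v w : V) : Finset (Finset V) := {e ∈ univ.powersetCard r | {u, v, w} ⊆ e}
  have hcover : G \ (heavyGraph G M).cliqueFinset r ⊆
      univ.biUnion fun u => univ.biUnion fun v => (S u v).biUnion (B u v) := fun e he => by
    obtain ⟨heG, hclique⟩ := mem_sdiff.1 he
    obtain ⟨u, hu, v, hv, huv, hadj⟩ : ∃ u ∈ e, ∃ v ∈ e, u ≠ v ∧ ¬ (heavyGraph G M).Adj u v := by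
      simpa [SimpleGraph.mem_cliqueFinset_iff, SimpleGraph.isNClique_iff, hG e heG,
        SimpleGraph.isClique_iff, Set.Pairwise] using hclique
    obtain ⟨w, hw, hwe⟩ := hSmeet u v huv hadj e heG hu hv
    simp only [B, mem_biUnion, mem_univ, true_and, mem_filter, mem_powersetCard, subset_univ]
    exact ⟨u, v, w, hw, hG e heG, by simp [insert_subset_iff, hu, hv, hwe]⟩
  have hB : ∀ u v, ∀ w ∈ S u v, #(B u v w) * Fintype.card V ^ 3 ≤ Fintype.card V ^ r :=
    fun u v w hw => hS3 u v w hw ▸ card_filter_powersetCard_subset_mul_le {u, v, w} r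
  refine Nat.le_of_mul_le_mul_right (c := Fintype.card V ^ 2) ?_ (by positivity)
  calc #(G \ (heavyGraph G M).cliqueFinset r) * Fintype.card V * Fintype.card V ^ 2
      ≤ (∑ u, ∑ v, ∑ w ∈ S u v, #(B u v w)) * Fintype.card V ^ 3 := by
        rw [mul_assoc, ← pow_succ']
        gcongr
        exact (card_le_card hcover).trans <| card_biUnion_le.trans <| sum_le_sum fun u _ =>
          card_biUnion_le.trans <| sum_le_sum fun v _ => card_biUnion_le
    _ ≤ ∑ _ : V, ∑ _ : V, M * Fintype.card V ^ r := by
        simp only [sum_mul]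
        gcongr with u _ v _
        exact (sum_le_card_nsmul _ _ _ (hB u v)).trans (Nat.mul_le_mul_right _ (hSM u v))
    _ = M * Fintype.card V ^ r * Fintype.card V ^ 2 := by
        simp only [sum_const, card_univ, smul_eq_mul]
        ring

end HeavyPairs

section GreedyEmbedding

variable {α V : Type*}

theorem exists_pairwiseDisjoint_of_forall_exists_disjoint {ι : Type*} {s : Finset ι}
    {P : ι → Finset V → Prop} {k : ℕ} {T : Finset V} (hcard : ∀ i R, P i R → #R ≤ k)
    (hex : ∀ i ∈ s, ∀ S : Finset V, #S ≤ #T + #s * k → ∃ R, P i R ∧ Disjoint R S) :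
    ∃ R : ι → Finset V, (∀ i ∈ s, P i (R i) ∧ Disjoint (R i) T) ∧
      (s : Set ι).PairwiseDisjoint R := by
  classical
  induction s using Finset.induction_on with
  | empty => exact ⟨fun _ => ∅, by simp, by simp⟩
  | insert a s ha ih =>
    obtain ⟨R, hR, hdisj⟩ := ih fun i hi S hS => hex i (mem_insert_of_mem hi) S <| hS.trans <| by
      gcongr
      exact subset_insert a s
    obtain ⟨A, hPA, hA⟩ := hex a (mem_insert_self a s) (T ∪ s.biUnion R) <|
      (card_union_le _ _).trans <| Nat.add_le_add_left
        ((card_biUnion_le_card_mul s R k fun i hi => hcard i _ (hR i hi).1).trans <| by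
          gcongr
          exact subset_insert a s) _
    rw [disjoint_union_right, disjoint_biUnion_right] at hA
    have hne : ∀ i ∈ s, i ≠ a := fun i hi hia => ha (hia ▸ hi)
    have hupdate : ∀ i ∈ s, Function.update R a A i = R i := fun i hi =>
      Function.update_of_ne (hne i hi) _ _
    refine ⟨Function.update R a A, forall_mem_insert _ _ _ |>.2 ⟨?_, fun i hi => ?_⟩, ?_⟩
    · rw [Function.update_self]
      exact ⟨hPA, hA.1⟩
    · rw [hupdate i hi]
      exact hR i hi
    · rw [coe_insert, Set.pairwiseDisjoint_insert_of_notMem (by exact_mod_cast ha)]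
      refine ⟨fun i hi j hj hij => ?_, fun i hi => ?_⟩
      · simpa only [Function.onFun, hupdate i hi, hupdate j hj] using hdisj hi hj hij
      · rw [Function.update_self, hupdate i hi]
        exact hA.2 i hi

lemma sym2ToFinset_mk [Fintype α] [DecidableEq α] (u v : α) : sym2ToFinset s(u, v) = {u, v} := by
  ext; simp [sym2ToFinset]

variable [Fintype α] [DecidableEq α] [DecidableEq V] {F : SimpleGraph α}
  [DecidableRel F.Adj] {G : Finset (Finset V)} {r : ℕ}

lemma containsCopy_expansion_of_pairwiseDisjoint {f : α → V} (hf : Function.Injective f)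
    {R : F.edgeFinset → Finset V} (hcard : ∀ e, #(R e) = r - 2)
    (hfR : ∀ e, Disjoint (R e) (univ.image f)) (hR : Pairwise (Function.onFun Disjoint R))
    (hmem : ∀ e, (sym2ToFinset e.1).image f ∪ R e ∈ G) :
    ContainsCopy (expansion r F) G := by
  let h (e : F.edgeFinset) : Fin (r - 2) ≃ R e := ((R e).equivFinOfCardEq (hcard e)).symm
  refine ⟨Sum.elim f fun p => h p.1 p.2, hf.sumElim ?_ ?_, fun E hE => ?_⟩
  · rintro ⟨e, i⟩ ⟨e', i'⟩ (hee : (h e i : V) = h e' i')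
    obtain rfl : e = e' := by_contra fun hne =>
      disjoint_left.1 (hR hne) (h e i).2 (hee ▸ (h e' i').2)
    rw [(h e).injective (Subtype.ext hee)]
  · rintro a ⟨e, i⟩ hae
    exact disjoint_right.1 (hfR e) (mem_image_of_mem f (mem_univ a)) (hae ▸ (h e i).2)
  · obtain ⟨e, -, rfl⟩ := mem_image.1 hE
    convert hmem e using 1
    rw [image_union, image_image, image_image]
    congr 1
    ext x
    simp only [mem_image, mem_univ, true_and, Function.comp, Sum.elim_inr]
    exact ⟨fun ⟨i, hi⟩ => hi ▸ (h e i).2, fun hx => ⟨(h e).symm ⟨x, hx⟩, by simp⟩⟩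

theorem containsCopy_expansion_of_isContained_heavyGraph (hG : IsRGraph r G)
    (hF : F.IsContained (heavyGraph G (Fintype.card α + #F.edgeFinset * (r - 2)))) :
    ContainsCopy (expansion r F) G := by
  obtain ⟨φ⟩ := hF
  have hφ : Function.Injective φ := φ.injective
  let P (e : F.edgeFinset) (R : Finset V) : Prop :=
    #R = r - 2 ∧ (sym2ToFinset e.1).image φ ∪ R ∈ G
  have hex : ∀ e ∈ (univ : Finset F.edgeFinset), ∀ S : Finset V,
      #S ≤ #(univ.image φ) + #(univ : Finset F.edgeFinset) * (r - 2) →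
        ∃ R, P e R ∧ Disjoint R S := by
    rintro ⟨e, he⟩ - S hS
    induction e using Sym2.ind with | _ u v
    have hadj : (heavyGraph G _).Adj (φ u) (φ v) :=
      φ.toHom.map_adj (SimpleGraph.mem_edgeFinset.1 he)
    rw [card_image_of_injective _ hφ, card_univ, card_univ, Fintype.card_coe] at hS
    obtain ⟨A, hA, hu, hv, hdisj⟩ := hadj.2 S hS
    have hsub : {φ u, φ v} ⊆ A := by simp [insert_subset_iff, hu, hv]
    refine ⟨A \ {φ u, φ v}, ⟨?_, ?_⟩, hdisj⟩
    · rw [card_sdiff_of_subset hsub, hG A hA, card_pair hadj.1]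
    · rwa [sym2ToFinset_mk, image_insert, image_singleton, union_sdiff_of_subset hsub]
  obtain ⟨R, hR, hdisj⟩ :=
    exists_pairwiseDisjoint_of_forall_exists_disjoint (fun _ _ h => h.1.le) hex
  exact containsCopy_expansion_of_pairwiseDisjoint hφ
    (fun e => (hR e (mem_univ e)).1.1) (fun e => (hR e (mem_univ e)).2)
    (fun e e' hee => hdisj (mem_coe.2 (mem_univ e)) (mem_coe.2 (mem_univ e')) hee)
    (fun e => (hR e (mem_univ e)).1.2)

end GreedyEmbedding

section UpperBound

lemma factorial_mul_card_div_pow_le_cliqueDensity_heavyGraph_add {V : Type*} [Fintype V]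
    [DecidableEq V] [Nonempty V] {G : Finset (Finset V)} {r : ℕ} (hG : IsRGraph r G) (M : ℕ)
    [DecidableRel (heavyGraph G M).Adj] :
    r.factorial * #G / (Fintype.card V : ℝ) ^ r ≤
      cliqueDensity (heavyGraph G M) r + r.factorial * M / (Fintype.card V : ℝ) := by
  have hn : (0 : ℝ) < Fintype.card V := by exact_mod_cast Fintype.card_pos
  have hlight : (#(G \ (heavyGraph G M).cliqueFinset r) : ℝ) * Fintype.card V ≤
      M * (Fintype.card V : ℝ) ^ r := by
    exact_mod_cast card_sdiff_cliqueFinset_heavyGraph_mul_le hG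
  have hsplit : (#G : ℝ) ≤
      #(G \ (heavyGraph G M).cliqueFinset r) + #((heavyGraph G M).cliqueFinset r) := by
    exact_mod_cast card_le_card_sdiff_add_card
  calc r.factorial * #G / (Fintype.card V : ℝ) ^ r
      ≤ r.factorial * (#(G \ (heavyGraph G M).cliqueFinset r) +
          #((heavyGraph G M).cliqueFinset r)) / (Fintype.card V : ℝ) ^ r := by gcongr
    _ = cliqueDensity (heavyGraph G M) r + r.factorial *
          (#(G \ (heavyGraph G M).cliqueFinset r) / (Fintype.card V : ℝ) ^ r) := by
        rw [cliqueDensity]; ring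
    _ ≤ cliqueDensity (heavyGraph G M) r + r.factorial * (M / (Fintype.card V : ℝ)) := by
        refine add_le_add_right (mul_le_mul_of_nonneg_left ?_ (by positivity)) _
        rwa [div_le_div_iff₀ (by positivity) hn]
    _ = cliqueDensity (heavyGraph G M) r + r.factorial * M / (Fintype.card V : ℝ) := by ring

theorem eventually_factorial_mul_card_div_pow_lt {α : Type*} [Fintype α] [DecidableEq α]
    {F : SimpleGraph α} [DecidableRel F.Adj] {r L : ℕ} (hF : F.Colorable (L + 1)) (hL : 0 < L)
    (hrL : r ≤ L) {G : ∀ n, Finset (Finset (Fin n))} (hG : ∀ n, IsRGraph r (G n))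
    (hfree : ∀ n, ¬ ContainsCopy (expansion r F) (G n)) {a : ℝ}
    (ha : L.descFactorial r / (L : ℝ) ^ r < a) :
    ∀ᶠ n : ℕ in Filter.atTop, r.factorial * #(G n) / (n : ℝ) ^ r < a := by
  classical
  set M := Fintype.card α + #F.edgeFinset * (r - 2)
  have hlim := tendsto_cliqueDensity_of_colorable_of_free hF fun n h =>
    hfree n (containsCopy_expansion_of_isContained_heavyGraph (hG n) h)
  have hε := half_pos (sub_pos.2 ha)
  filter_upwards [Filter.eventually_gt_atTop 0,
    eventually_le_descFactorial_div_pow_add (fun n => isMoonMoser_cliqueDensity _) hL hlim hrL _ hε,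
    (tendsto_const_div_atTop_nhds_zero_nat (r.factorial * M : ℝ)).eventually_lt_const hε]
    with n hn hclique hlight
  have : NeZero n := ⟨hn.ne'⟩
  have hsplit := factorial_mul_card_div_pow_le_cliqueDensity_heavyGraph_add (hG n) M
  rw [Fintype.card_fin] at hsplit
  linarith

end UpperBound

section LowerBound

section MinDegree

variable {V : Type*} [Fintype V] [DecidableEq V] {Γ : SimpleGraph V} [DecidableRel Γ.Adj] {d : ℕ}

lemma card_le_card_commonNbrs_add (hd : ∀ v, #{w | ¬ Γ.Adj w v} ≤ d) (A : Finset V) :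
    Fintype.card V ≤ #(commonNbrs Γ A) + #A * d := by
  have hcover : univ ⊆ commonNbrs Γ A ∪ A.biUnion fun a => {w | ¬ Γ.Adj w a} := fun w _ => by
    simp [mem_commonNbrs, or_iff_not_imp_left]
  calc Fintype.card V ≤ #(commonNbrs Γ A ∪ A.biUnion fun a => {w | ¬ Γ.Adj w a}) :=
        card_le_card hcover
    _ ≤ #(commonNbrs Γ A) + #A * d := (card_union_le _ _).trans <|
        Nat.add_le_add_left (card_biUnion_le_card_mul _ _ _ fun a _ => hd a) _

lemma card_mul_card_cliqueFinset_le (hd : ∀ v, #{w | ¬ Γ.Adj w v} ≤ d) (s : ℕ) :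
    Fintype.card V * #(Γ.cliqueFinset s) ≤
      (s + 1) * #(Γ.cliqueFinset (s + 1)) + s * d * #(Γ.cliqueFinset s) := by
  calc Fintype.card V * #(Γ.cliqueFinset s)
      = ∑ _ ∈ Γ.cliqueFinset s, Fintype.card V := by rw [sum_const, smul_eq_mul, mul_comm]
    _ ≤ ∑ A ∈ Γ.cliqueFinset s, (#(commonNbrs Γ A) + s * d) := sum_le_sum fun A hA =>
        (SimpleGraph.mem_cliqueFinset_iff.1 hA).card_eq ▸ card_le_card_commonNbrs_add hd A
    _ = (s + 1) * #(Γ.cliqueFinset (s + 1)) + s * d * #(Γ.cliqueFinset s) := by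
        rw [sum_add_distrib, sum_card_commonNbrs, sum_const, smul_eq_mul, mul_comm (s * d)]

lemma one_sub_mul_cliqueDensity_le [Nonempty V] (hd : ∀ v, #{w | ¬ Γ.Adj w v} ≤ d) (s : ℕ) :
    (1 - s * (d / (Fintype.card V : ℝ))) * cliqueDensity Γ s ≤ cliqueDensity Γ (s + 1) := by
  have hcount : (Fintype.card V : ℝ) * #(Γ.cliqueFinset s) ≤
      (s + 1) * #(Γ.cliqueFinset (s + 1)) + s * d * #(Γ.cliqueFinset s) := by
    exact_mod_cast card_mul_card_cliqueFinset_le hd s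
  calc (1 - s * (d / (Fintype.card V : ℝ))) * cliqueDensity Γ s
      = s.factorial * ((Fintype.card V - s * d) * #(Γ.cliqueFinset s)) /
          (Fintype.card V : ℝ) ^ (s + 1) := by
        rw [cliqueDensity]; field_simp; ring
    _ ≤ s.factorial * ((s + 1) * #(Γ.cliqueFinset (s + 1))) / (Fintype.card V : ℝ) ^ (s + 1) := by
        gcongr ?_ * ?_ / ?_
        linarith
    _ = cliqueDensity Γ (s + 1) := by
        rw [cliqueDensity, Nat.factorial_succ]; push_cast; ring

end MinDegree

lemma card_filter_not_turanGraph_adj_le (n : ℕ) {L : ℕ} (hL : 0 < L) (v : Fin n) :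
    #{w | ¬ (SimpleGraph.turanGraph n L).Adj w v} ≤ n / L + 1 := by
  calc #{w | ¬ (SimpleGraph.turanGraph n L).Adj w v}
      ≤ n.count (· ≡ v [MOD L]) := by
        rw [Nat.count_eq_card_filter_range]
        refine card_le_card_of_injOn Fin.val (fun w hw => ?_) Fin.val_injective.injOn
        rw [mem_coe, mem_filter, mem_range]
        exact ⟨w.2, by simpa [SimpleGraph.turanGraph, Nat.ModEq] using hw⟩
    _ ≤ n / L + 1 := by
        rw [Nat.count_modEq_card _ hL]
        split_ifs <;> simp

lemma colorable_turanGraph (n : ℕ) {L : ℕ} (hL : 0 < L) :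
    (SimpleGraph.turanGraph n L).Colorable L :=
  ⟨.mk (fun v => ⟨v % L, Nat.mod_lt _ hL⟩) fun hvw h => hvw (Fin.ext_iff.1 h)⟩

lemma one_sub_mul_cliqueDensity_turanGraph_le {n L : ℕ} (hn : 0 < n) (hL : 0 < L) (s : ℕ) :
    (1 - s * (1 / L + 1 / (n : ℝ))) * cliqueDensity (SimpleGraph.turanGraph n L) s ≤
      cliqueDensity (SimpleGraph.turanGraph n L) (s + 1) := by
  have : NeZero n := ⟨hn.ne'⟩
  have hstep := one_sub_mul_cliqueDensity_le (card_filter_not_turanGraph_adj_le n hL) s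
  rw [Fintype.card_fin] at hstep
  refine le_trans (mul_le_mul_of_nonneg_right ?_ ((isMoonMoser_cliqueDensity _).nonneg s)) hstep
  have hdiv : ((n / L + 1 : ℕ) : ℝ) / n ≤ 1 / L + 1 / n := by
    calc ((n / L + 1 : ℕ) : ℝ) / n ≤ ((n : ℝ) / L + 1) / n := by
          push_cast
          gcongr
          exact Nat.cast_div_le
      _ = 1 / L + 1 / n := by field_simp
  gcongr

lemma cliqueDensity_turanGraph_succ (n : ℕ) {L : ℕ} (hL : 0 < L) :
    cliqueDensity (SimpleGraph.turanGraph n L) (L + 1) = 0 := by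
  have hempty := SimpleGraph.cliqueFinset_eq_empty_iff.2
    (SimpleGraph.turanGraph_cliqueFree (n := n) hL)
  rw [cliqueDensity, hempty, card_empty, Nat.cast_zero, mul_zero, zero_div]

theorem tendsto_cliqueDensity_turanGraph {r L : ℕ} (hL : 0 < L) (hrL : r ≤ L) :
    Filter.Tendsto (fun n => cliqueDensity (SimpleGraph.turanGraph n L) r) Filter.atTop
      (nhds (L.descFactorial r / (L : ℝ) ^ r)) := by
  induction r with
  | zero =>
    have hempty (n : ℕ) : (SimpleGraph.turanGraph n L).cliqueFinset 0 = {∅} := by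
      ext; simp [SimpleGraph.mem_cliqueFinset_iff]
    simp [cliqueDensity, hempty]
  | succ r ih =>
    have hlower : Filter.Tendsto (fun n : ℕ => (1 - r * (1 / L + 1 / (n : ℝ))) *
        cliqueDensity (SimpleGraph.turanGraph n L) r) Filter.atTop
        (nhds (L.descFactorial (r + 1) / (L : ℝ) ^ (r + 1))) := by
      have := ((tendsto_one_div_atTop_nhds_zero_nat.const_add (1 / L : ℝ)).const_mul
        (r : ℝ)).const_sub 1 |>.mul (ih (by lia))
      rwa [add_zero, mul_one_div, ← descFactorial_succ_div_pow_succ hL (by lia)] at this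
    refine tendsto_order.2 ⟨fun a ha => ?_, fun a ha => ?_⟩
    · filter_upwards [hlower.eventually_const_lt ha, Filter.eventually_gt_atTop 0] with n hlt hn
      exact hlt.trans_le (one_sub_mul_cliqueDensity_turanGraph_le hn hL r)
    · have hlim : Filter.Tendsto (fun n => cliqueDensity (SimpleGraph.turanGraph n L) (L + 1))
          Filter.atTop (nhds 0) := by
        simp only [cliqueDensity_turanGraph_succ _ hL, tendsto_const_nhds]
      filter_upwards [eventually_le_descFactorial_div_pow_add
        (fun n => isMoonMoser_cliqueDensity _) hL hlim hrL _ (half_pos (sub_pos.2 ha))] with n hn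
      linarith

variable {α : Type*} [Fintype α] [DecidableEq α] {F : SimpleGraph α} [DecidableRel F.Adj]

lemma isContained_of_containsCopy_expansion_cliqueFinset {V : Type*} [Fintype V] [DecidableEq V]
    {Γ : SimpleGraph V} [DecidableRel Γ.Adj] {r : ℕ}
    (h : ContainsCopy (expansion r F) (Γ.cliqueFinset r)) : F.IsContained Γ := by
  obtain ⟨f, hf, hclique⟩ := h
  refine ⟨⟨⟨f ∘ Sum.inl, fun {u v} huv => ?_⟩, hf.comp Sum.inl_injective⟩⟩
  have hmem : s(u, v) ∈ F.edgeFinset := SimpleGraph.mem_edgeFinset.2 huv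
  have hedge := hclique _ (mem_image_of_mem _ (mem_attach _ ⟨s(u, v), hmem⟩))
  refine (SimpleGraph.mem_cliqueFinset_iff.1 hedge).isClique ?_ ?_
    (hf.ne (Sum.inl_injective.ne huv.ne)) <;>
  simp [sym2ToFinset_mk]

end LowerBound

section TuranNumbers

variable {α : Type*} {H : Finset (Finset α)} {r n : ℕ}

lemma bddAbove_setOf_card_not_containsCopy (r n : ℕ) (H : Finset (Finset α)) :
    BddAbove {m | ∃ G : Finset (Finset (Fin n)),
      IsRGraph r G ∧ ¬ ContainsCopy H G ∧ #G = m} :=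
  ⟨Fintype.card (Finset (Fin n)), fun _ ⟨G, _, _, hm⟩ => hm ▸ card_le_univ G⟩

lemma card_le_exNum {G : Finset (Finset (Fin n))} (hG : IsRGraph r G)
    (hfree : ¬ ContainsCopy H G) : #G ≤ exNum r n H :=
  le_csSup (bddAbove_setOf_card_not_containsCopy r n H) ⟨G, hG, hfree, rfl⟩

lemma exists_card_eq_exNum (hH : ∃ G : Finset (Finset (Fin n)), IsRGraph r G ∧ ¬ ContainsCopy H G) :
    ∃ G : Finset (Finset (Fin n)), IsRGraph r G ∧ ¬ ContainsCopy H G ∧ #G = exNum r n H :=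
  have hne : {m | ∃ G : Finset (Finset (Fin n)),
      IsRGraph r G ∧ ¬ ContainsCopy H G ∧ #G = m}.Nonempty :=
    have ⟨G, hG, hfree⟩ := hH
    ⟨#G, G, hG, hfree, rfl⟩
  Nat.sSup_mem hne (bddAbove_setOf_card_not_containsCopy r n H)

theorem tendsto_factorial_mul_exNum_expansion_div_pow [Fintype α] [DecidableEq α]
    {F : SimpleGraph α} [DecidableRel F.Adj] {L : ℕ} (hF : F.Colorable (L + 1))
    (hF' : ¬ F.Colorable L) (hL : 0 < L) (hrL : r ≤ L) :
    Filter.Tendsto (fun n : ℕ => r.factorial * exNum r n (expansion r F) / (n : ℝ) ^ r)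
      Filter.atTop (nhds (L.descFactorial r / (L : ℝ) ^ r)) := by
  let T (n : ℕ) : Finset (Finset (Fin n)) := (SimpleGraph.turanGraph n L).cliqueFinset r
  have hT (n : ℕ) : IsRGraph r (T n) :=
    fun e he => (SimpleGraph.mem_cliqueFinset_iff.1 he).card_eq
  have hTfree (n : ℕ) : ¬ ContainsCopy (expansion r F) (T n) := fun h =>
    have ⟨φ⟩ := isContained_of_containsCopy_expansion_cliqueFinset h
    hF' ((colorable_turanGraph n hL).of_hom φ.toHom)
  refine tendsto_order.2 ⟨fun a ha => ?_, fun a ha => ?_⟩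
  · filter_upwards [(tendsto_cliqueDensity_turanGraph hL hrL).eventually_const_lt ha] with n hn
    refine hn.trans_le ?_
    rw [cliqueDensity, Fintype.card_fin]
    gcongr
    exact card_le_exNum (hT n) (hTfree n)
  · choose G hG hfree hcard using fun n =>
      exists_card_eq_exNum ⟨T n, hT n, hTfree n⟩
    simpa only [hcard] using eventually_factorial_mul_card_div_pow_lt hF hL hrL hG hfree ha

lemma tendsto_pow_div_factorial_mul_choose (r : ℕ) :
    Filter.Tendsto (fun n : ℕ => (n : ℝ) ^ r / (r.factorial * n.choose r)) Filter.atTop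
      (nhds 1) := by
  have hpos : ∀ᶠ n : ℕ in Filter.atTop, (n.descFactorial r : ℝ) ≠ 0 := by
    filter_upwards [Filter.eventually_ge_atTop r] with n hn
    exact_mod_cast (Nat.descFactorial_pos.2 hn).ne'
  have hlim := (Asymptotics.isEquivalent_iff_tendsto_one hpos).1 (isEquivalent_descFactorial r).symm
  exact hlim.congr fun n => by
    rw [Pi.div_apply, Nat.descFactorial_eq_factorial_mul_choose, Nat.cast_mul]

end TuranNumbers

/-- **Theorem (Turán density of expansions).**  Let `ℓ > r ≥ 2` and let `F` be a 2-graph with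
`χ(F) = ℓ`.  Then `ex(n, H_F^(r)) / C(n,r) → (r!/(ℓ-1)^r)·C(ℓ-1, r)` as `n → ∞`. -/
theorem turan_density_expansion {α : Type*} [Fintype α] [DecidableEq α]
    (r ℓ : ℕ) (hr : 2 ≤ r) (hrl : r < ℓ)
    (F : SimpleGraph α) [DecidableRel F.Adj] (hχ : F.chromaticNumber = (ℓ : ℕ∞)) :
    Filter.Tendsto (fun n => (exNum r n (expansion r F) : ℝ) / (n.choose r))
      Filter.atTop
      (nhds ((r.factorial : ℝ) / ((ℓ - 1 : ℕ) : ℝ) ^ r * ((ℓ - 1).choose r : ℝ))) := by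
  obtain ⟨L, rfl⟩ : ∃ L, ℓ = L + 1 := ⟨ℓ - 1, by lia⟩
  have hF : F.Colorable (L + 1) := SimpleGraph.chromaticNumber_le_iff_colorable.1 hχ.le
  have hF' : ¬ F.Colorable L := fun h => by
    rw [← SimpleGraph.chromaticNumber_le_iff_colorable, hχ] at h
    exact absurd (Nat.cast_le.1 h) (by lia)
  have hlim := (tendsto_factorial_mul_exNum_expansion_div_pow (r := r) hF hF' (by lia)
    (by lia)).mul (tendsto_pow_div_factorial_mul_choose r)
  convert hlim.congr' ?_ using 2
  · rw [Nat.descFactorial_eq_factorial_mul_choose, Nat.add_sub_cancel]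
    push_cast
    ring
  · filter_upwards [Filter.eventually_gt_atTop 0] with n hn
    field_simp
end

section
/- Given a 2-graph F with χ(F) = ℓ > r ≥ 2, if F is edge-critical (i.e., there is an edge e of F with χ(F − e) < χ(F)), then for all sufficiently large n, ex(n, H_F^(r)) = t_r(n, ℓ−1). -/
open Finset

/-!
The lower bound holds because a copy of the expansion in the Turán hypergraph would properly colour
`F` with `ℓ - 1` colours. For the upper bound, call a pair of vertices thick if it lies in so many
essentially disjoint edges of `G` that an edge of `F` placed on it can still be expanded after all
other choices have been made. If the thick graph contains large sets `X₁, …, X_{ℓ-1}` that are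
complete to each other up to a few missing pairs, then, `F` having an `(ℓ - 1)`-colouring with a
single monochromatic edge, no two vertices of an edge of `G` can both be joined to everything in all
but one of the `Xᵢ`: the monochromatic edge would go there.

A hypergraph with more edges than `T_r(n, ℓ - 1)` has an induced subhypergraph with this property in
which moreover every degree is at least that in the Turán hypergraph, since otherwise deleting
vertices of small degree would make the excess outgrow the number of edges. So assume minimum degree
within `o(n ^ (r - 1))` of the Turán value. Few edges contain a pair that is not thick, so
`(r - 1)`-cliques in neighbourhoods and `r`-cliques in the whole thick graph are plentiful. The
Moon–Moser inequalities and supersaturation then give thick degrees of at least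
`(1 - 1 / (ℓ - 1) - o(1)) n` and a complete `(ℓ - 1)`-partite blow-up. The vertices missing exactly
one of its parts form classes which cover almost everything and meet each edge of `G` at most once;
the remaining vertices can then be put in classes one by one, because a vertex with few neighbours
in its own class must by its degree have many in all the others. Hence `G` is `(ℓ - 1)`-partite, and
Maclaurin's inequality in its discrete form says that a balanced partition carries the most edges.
-/

section Cliques

variable {V : Type*} [Fintype V] [DecidableEq V] (S : SimpleGraph V) [DecidableRel S.Adj]
  (U : Finset V)

/-- The cliques of `S` with `t` vertices, all of them in `U`. -/
def cliquesIn (t : ℕ) : Finset (Finset V) := {T ∈ S.cliqueFinset t | T ⊆ U}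

/-- The vertices of `U` adjacent to every vertex of `T`. -/
def commonNeighborsIn (T : Finset V) : Finset V := {y ∈ U | ∀ x ∈ T, S.Adj x y}

variable {S U}

lemma mem_cliquesIn {t : ℕ} {T : Finset V} : T ∈ cliquesIn S U t ↔ S.IsNClique t T ∧ T ⊆ U := by
  simp [cliquesIn]

lemma mem_commonNeighborsIn {T : Finset V} {y : V} :
    y ∈ commonNeighborsIn S U T ↔ y ∈ U ∧ ∀ x ∈ T, S.Adj x y := by
  simp [commonNeighborsIn]

lemma card_cliquesIn_le_pow (t : ℕ) : #(cliquesIn S U t) ≤ Fintype.card V ^ t := by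
  have hsub : cliquesIn S U t ⊆ (univ : Finset V).powersetCard t := fun T hT ↦
    mem_powersetCard.2 ⟨subset_univ _, (mem_cliquesIn.1 hT).1.card_eq⟩
  calc #(cliquesIn S U t) ≤ #((univ : Finset V).powersetCard t) := card_le_card hsub
    _ = (Fintype.card V).choose t := by rw [card_powersetCard, card_univ]
    _ ≤ Fintype.card V ^ t := Nat.choose_le_pow _ _

lemma sum_cliquesIn_succ_sum_erase (t : ℕ) (f : Finset V → ℕ) :
    ∑ T ∈ cliquesIn S U (t + 1), ∑ x ∈ T, f (T.erase x) =
      ∑ R ∈ cliquesIn S U t, #(commonNeighborsIn S U R) * f R := by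
  have hconst : ∀ R ∈ cliquesIn S U t,
      #(commonNeighborsIn S U R) * f R = ∑ _x ∈ commonNeighborsIn S U R, f R := by simp
  rw [sum_congr rfl hconst, sum_sigma', sum_sigma']
  have notMem {R : Finset V} {x : V} (hx : ∀ y ∈ R, S.Adj y x) : x ∉ R := fun h ↦ (hx x h).ne rfl
  refine sum_bij' (fun p _ ↦ ⟨p.1.erase p.2, p.2⟩) (fun p _ ↦ ⟨insert p.2 p.1, p.2⟩) ?_ ?_ ?_ ?_ ?_
  · rintro ⟨T, x⟩ h
    simp only [mem_sigma, mem_cliquesIn, mem_commonNeighborsIn] at h ⊢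
    obtain ⟨⟨hT, hTU⟩, hx⟩ := h
    refine ⟨⟨by simpa using hT.erase_of_mem hx, (erase_subset _ _).trans hTU⟩, hTU hx, ?_⟩
    exact fun y hy ↦ hT.isClique (mem_of_mem_erase hy) hx (ne_of_mem_erase hy)
  · rintro ⟨R, x⟩ h
    simp only [mem_sigma, mem_cliquesIn, mem_commonNeighborsIn] at h ⊢
    obtain ⟨⟨hR, hRU⟩, hxU, hx⟩ := h
    exact ⟨⟨hR.insert fun y hy ↦ (hx y hy).symm, insert_subset hxU hRU⟩, mem_insert_self _ _⟩
  · rintro ⟨T, x⟩ h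
    simp only [mem_sigma] at h
    simp only [insert_erase h.2]
  · rintro ⟨R, x⟩ h
    simp only [mem_sigma, mem_commonNeighborsIn] at h
    simp only [erase_insert (notMem h.2.2)]
  · exact fun _ _ ↦ rfl

lemma sum_card_commonNeighborsIn (t : ℕ) :
    ∑ R ∈ cliquesIn S U t, #(commonNeighborsIn S U R) = (t + 1) * #(cliquesIn S U (t + 1)) := by
  have hcount := sum_cliquesIn_succ_sum_erase (S := S) (U := U) t fun _ ↦ 1
  simp only [sum_const, smul_eq_mul, mul_one] at hcount
  rw [← hcount, sum_congr rfl fun T hT ↦ (mem_cliquesIn.1 hT).1.card_eq, sum_const, smul_eq_mul,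
    mul_comm]

lemma sum_card_commonNeighborsIn_erase_le (T : Finset V) :
    ∑ x ∈ T, #(commonNeighborsIn S U (T.erase x)) ≤
      #U + (#T - 1) * #(commonNeighborsIn S U T) := by
  simp only [commonNeighborsIn, card_filter]
  rw [sum_comm, card_eq_sum_ones U, mul_sum, ← sum_add_distrib]
  refine sum_le_sum fun y _ ↦ ?_
  rw [← card_filter]
  by_cases hy : ∀ x ∈ T, S.Adj x y
  · have := card_filter_le T fun x ↦ ∀ z ∈ T.erase x, S.Adj z y
    rw [if_pos hy]
    omega
  · push Not at hy
    obtain ⟨w, hwT, hwy⟩ := hy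
    have huniq : ∀ x ∈ T.filter (fun x ↦ ∀ z ∈ T.erase x, S.Adj z y), x = w := fun x hx ↦ by
      by_contra hne
      exact hwy ((mem_filter.1 hx).2 w (mem_erase.2 ⟨Ne.symm hne, hwT⟩))
    exact le_add_right (card_le_one.2 fun x hx x' hx' ↦ (huniq x hx).trans (huniq x' hx').symm)

lemma moon_moser (t : ℕ) :
    ((t + 1) * #(cliquesIn S U (t + 1))) ^ 2 ≤ #(cliquesIn S U t) *
      (#U * #(cliquesIn S U (t + 1)) + t * ((t + 2) * #(cliquesIn S U (t + 2)))) := by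
  rw [← sum_card_commonNeighborsIn]
  refine sq_sum_le_card_mul_sum_sq.trans (Nat.mul_le_mul_left _ ?_)
  calc ∑ R ∈ cliquesIn S U t, #(commonNeighborsIn S U R) ^ 2
      = ∑ T ∈ cliquesIn S U (t + 1), ∑ x ∈ T, #(commonNeighborsIn S U (T.erase x)) := by
        simp only [sq, sum_cliquesIn_succ_sum_erase t fun R ↦ #(commonNeighborsIn S U R)]
    _ ≤ ∑ T ∈ cliquesIn S U (t + 1), (#U + t * #(commonNeighborsIn S U T)) :=
        sum_le_sum fun T hT ↦ by
          simpa [(mem_cliquesIn.1 hT).1.card_eq] using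
            sum_card_commonNeighborsIn_erase_le (S := S) (U := U) T
    _ = #U * #(cliquesIn S U (t + 1)) + t * ((t + 2) * #(cliquesIn S U (t + 2))) := by
        rw [sum_add_distrib, ← mul_sum, sum_card_commonNeighborsIn, sum_const, smul_eq_mul]
        ring

variable (S U) in
/-- Up to an error `ε |V| ^ (t + 1)`, the numbers of `t`- and `(t + 1)`-cliques of `S` in `U` are
related as in a `K_{k+1}`-free graph. -/
def CliqueRatioLE (k t : ℕ) (ε : ℝ) : Prop :=
  ((t : ℝ) + 1) * #(cliquesIn S U (t + 1)) ≤
    #U * (1 - t / k) * #(cliquesIn S U t) + ε * (Fintype.card V : ℝ) ^ (t + 1)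

lemma CliqueRatioLE.mono {k t : ℕ} {ε δ : ℝ} (h : CliqueRatioLE S U k t ε) (hεδ : ε ≤ δ) :
    CliqueRatioLE S U k t δ :=
  h.trans (by gcongr)

lemma CliqueRatioLE.of_succ {k t : ℕ} {ε δ : ℝ} (h : CliqueRatioLE S U k (t + 1) ε) (hk : 1 ≤ k)
    (htk : t ≤ k) (hδ : 0 < δ) (hεδ : t * ε ≤ δ ^ 2) : CliqueRatioLE S U k t δ := by
  have hmm : ((t + 1 : ℝ) * #(cliquesIn S U (t + 1))) ^ 2 ≤ #(cliquesIn S U t) *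
      (#U * #(cliquesIn S U (t + 1)) + t * ((t + 2) * #(cliquesIn S U (t + 2)))) := by
    exact_mod_cast moon_moser (S := S) (U := U) t
  have hct : (#(cliquesIn S U t) : ℝ) ≤ (Fintype.card V : ℝ) ^ t := by
    exact_mod_cast card_cliquesIn_le_pow t
  have hk0 : (0 : ℝ) < k := by exact_mod_cast hk
  have htk' : (t : ℝ) / k ≤ 1 := (div_le_one hk0).2 (by exact_mod_cast htk)
  unfold CliqueRatioLE at h ⊢
  push_cast [add_assoc, one_add_one_eq_two] at h
  set N : ℝ := (Fintype.card V : ℝ)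
  set c₀ : ℝ := (#(cliquesIn S U t) : ℝ)
  set c₁ : ℝ := (#(cliquesIn S U (t + 1)) : ℝ)
  set c₂ : ℝ := (#(cliquesIn S U (t + 2)) : ℝ)
  set a : ℝ := #U * (1 - t / k) * c₀ with ha
  set b : ℝ := δ * N ^ (t + 1)
  have ha0 : 0 ≤ a := mul_nonneg (mul_nonneg (by positivity) (by linarith)) (by positivity)
  have hquad : ((t + 1) * c₁) ^ 2 ≤ a * ((t + 1) * c₁) + b ^ 2 := by
    calc ((t + 1) * c₁) ^ 2 ≤ c₀ * (#U * c₁ + t * ((t + 2) * c₂)) := hmm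
      _ ≤ c₀ * (#U * c₁ + t * (#U * (1 - (t + 1) / k) * c₁ + ε * N ^ (t + 2))) := by gcongr
      _ = a * ((t + 1) * c₁) + c₀ * (t * ε * N ^ (t + 2)) := by rw [ha]; field_simp; ring
      _ ≤ a * ((t + 1) * c₁) + c₀ * (δ ^ 2 * N ^ (t + 2)) := by gcongr
      _ ≤ a * ((t + 1) * c₁) + N ^ t * (δ ^ 2 * N ^ (t + 2)) := by gcongr
      _ = a * ((t + 1) * c₁) + b ^ 2 := by ring
  have hb0 : 0 ≤ b := by positivity
  by_contra! hlt
  nlinarith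

end Cliques

lemma exists_forall_cliqueRatioLE (k : ℕ) (hk : 1 ≤ k) (ε : ℝ) (hε : 0 < ε) (d : ℕ) :
    ∃ η > 0, ∀ {V : Type*} [Fintype V] [DecidableEq V] (S : SimpleGraph V) [DecidableRel S.Adj]
      (U : Finset V), (#(cliquesIn S U (k + 1)) : ℝ) ≤ η * (Fintype.card V : ℝ) ^ (k + 1) →
      ∀ t, k ≤ t + d → t ≤ k → CliqueRatioLE S U k t ε := by
  have hk0 : (0 : ℝ) < k := by exact_mod_cast hk
  induction d generalizing ε with
  | zero =>
    refine ⟨ε / (k + 1), by positivity, fun S _ U hfew t hkt htk ↦ ?_⟩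
    obtain rfl : t = k := by omega
    rw [CliqueRatioLE, div_self hk0.ne', sub_self, mul_zero, zero_mul, zero_add]
    rwa [div_mul_eq_mul_div, le_div_iff₀' (by positivity)] at hfew
  | succ d ih =>
    obtain ⟨η, hη, H⟩ := ih (min ε (ε ^ 2 / (k + 1))) (lt_min hε (by positivity))
    refine ⟨η, hη, fun S _ U hfew t hkt htk ↦ ?_⟩
    rcases htk.eq_or_lt with rfl | htk'
    · exact (H S U hfew t (by omega) le_rfl).mono (min_le_left _ _)
    refine (H S U hfew (t + 1) (by omega) htk').of_succ hk htk hε ?_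
    have htk'' : (t : ℝ) ≤ k + 1 := by exact_mod_cast (by omega : t ≤ k + 1)
    calc (t : ℝ) * min ε (ε ^ 2 / (k + 1)) ≤ (k + 1) * (ε ^ 2 / (k + 1)) := by
          gcongr; exact min_le_right _ _
      _ = ε ^ 2 := by field_simp

lemma card_cliquesIn_le_of_cliqueRatioLE {V : Type*} [Fintype V] [DecidableEq V]
    {S : SimpleGraph V} [DecidableRel S.Adj] {U : Finset V} {k : ℕ} {δ : ℝ} (hk : 1 ≤ k)
    (hδ : 0 ≤ δ) (hratio : ∀ t ≤ k, CliqueRatioLE S U k t δ) (r : ℕ) (hr : r ≤ k + 1) :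
    (#(cliquesIn S U r) : ℝ) ≤
      k.choose r * ((#U : ℝ) / k) ^ r + r * δ * (Fintype.card V : ℝ) ^ r := by
  have hk0 : (0 : ℝ) < k := by exact_mod_cast hk
  induction r with
  | zero => simpa using card_cliquesIn_le_pow (S := S) (U := U) 0
  | succ r ih =>
    have hrk : r ≤ k := by omega
    have hstep := hratio r hrk
    have hU : (#U : ℝ) ≤ Fintype.card V := by exact_mod_cast card_le_univ U
    unfold CliqueRatioLE at hstep
    set N : ℝ := (Fintype.card V : ℝ)
    have hrk1 : (r : ℝ) / k ≤ 1 := (div_le_one hk0).2 (by exact_mod_cast hrk)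
    have hrk0 : 0 ≤ (r : ℝ) / k := by positivity
    have hchoose : (k.choose (r + 1) : ℝ) * (r + 1) = k.choose r * (k - r) := by
      rw [← Nat.cast_sub hrk]
      exact_mod_cast Nat.choose_succ_right_eq k r
    have hfactor : #U * (1 - (r : ℝ) / k) ≤ N := by
      nlinarith [(Nat.cast_nonneg #U : (0 : ℝ) ≤ #U)]
    refine le_of_mul_le_mul_left ?_ (by positivity : (0 : ℝ) < r + 1)
    calc (r + 1 : ℝ) * #(cliquesIn S U (r + 1))
        ≤ #U * (1 - r / k) * #(cliquesIn S U r) + δ * N ^ (r + 1) := hstep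
      _ ≤ #U * (1 - r / k) * (k.choose r * (#U / k) ^ r + r * δ * N ^ r) + δ * N ^ (r + 1) := by
          have := ih (by omega)
          have : 0 ≤ 1 - (r : ℝ) / k := by linarith
          gcongr
      _ = (r + 1) * (k.choose (r + 1) * (#U / k) ^ (r + 1)) +
            #U * (1 - r / k) * (r * δ * N ^ r) + δ * N ^ (r + 1) := by
          rw [← mul_assoc (r + 1 : ℝ), mul_comm (r + 1 : ℝ), hchoose, pow_succ (#U / k : ℝ)]
          field_simp
      _ ≤ (r + 1) * (k.choose (r + 1) * (#U / k) ^ (r + 1)) +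
            N * (r * δ * N ^ r) + δ * N ^ (r + 1) := by gcongr
      _ = (r + 1) * (k.choose (r + 1) * (#U / k) ^ (r + 1)) + (r + 1) * δ * N ^ (r + 1) := by ring
      _ ≤ (r + 1) * (k.choose (r + 1) * (#U / k) ^ (r + 1)) +
            (r + 1) * ((r + 1) * δ * N ^ (r + 1)) :=
          add_le_add le_rfl (le_mul_of_one_le_left (by positivity)
            (by linarith [Nat.cast_nonneg (α := ℝ) r]))
      _ = (r + 1) * (k.choose (r + 1) * (#U / k) ^ (r + 1) + (r + 1 : ℕ) * δ * N ^ (r + 1)) := by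
          push_cast
          ring

lemma exists_card_cliquesIn_le_of_few (k : ℕ) (hk : 1 ≤ k) (r : ℕ) (hr : r ≤ k + 1) (ε : ℝ)
    (hε : 0 < ε) :
    ∃ η > 0, ∀ {V : Type*} [Fintype V] [DecidableEq V] (S : SimpleGraph V) [DecidableRel S.Adj]
      (U : Finset V), (#(cliquesIn S U (k + 1)) : ℝ) ≤ η * (Fintype.card V : ℝ) ^ (k + 1) →
      (#(cliquesIn S U r) : ℝ) ≤
        k.choose r * ((#U : ℝ) / k) ^ r + ε * (Fintype.card V : ℝ) ^ r := by
  obtain ⟨η, hη, H⟩ := exists_forall_cliqueRatioLE k hk (ε / (k + 1)) (by positivity) k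
  refine ⟨η, hη, fun S _ U hfew ↦ ?_⟩
  refine (card_cliquesIn_le_of_cliqueRatioLE hk (by positivity)
    (fun t ht ↦ H S U hfew t (by omega) ht) r hr).trans ?_
  have hrk : (r : ℝ) ≤ k + 1 := by exact_mod_cast hr
  gcongr
  calc (r : ℝ) * (ε / (k + 1)) ≤ (k + 1) * (ε / (k + 1)) := by gcongr
    _ = ε := by field_simp

section Boxes

variable {V : Type*} [Fintype V] [DecidableEq V] {d : ℕ}

/-- The first coordinates of the points of `E` whose remaining coordinates are `w`. -/
def headFiber (E : Finset (Fin (d + 1) → V)) (w : Fin d → V) : Finset V :=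
  {x | (Fin.cons x w : Fin (d + 1) → V) ∈ E}

/-- The tails which every first coordinate in `A` extends to a point of `E`. -/
def commonTails (E : Finset (Fin (d + 1) → V)) (A : Finset V) : Finset (Fin d → V) :=
  {w | ∀ x ∈ A, (Fin.cons x w : Fin (d + 1) → V) ∈ E}

lemma sum_card_headFiber (E : Finset (Fin (d + 1) → V)) : ∑ w, #(headFiber E w) = #E := by
  rw [← card_sigma]
  refine card_bij' (fun p _ ↦ (Fin.cons p.2 p.1 : Fin (d + 1) → V))
    (fun f _ ↦ ⟨Fin.tail f, f 0⟩) ?_ ?_ ?_ ?_ <;> simp [headFiber]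

lemma sum_card_commonTails (E : Finset (Fin (d + 1) → V)) (t : ℕ) :
    ∑ A ∈ (univ : Finset V).powersetCard t, #(commonTails E A) =
      ∑ w, (#(headFiber E w)).choose t := by
  simp only [commonTails, card_filter]
  rw [sum_comm]
  refine sum_congr rfl fun w _ ↦ ?_
  rw [← card_filter, ← card_powersetCard]
  congr 1
  ext A
  simp only [headFiber, mem_filter, mem_powersetCard, subset_iff, mem_univ, implies_true, true_and]
  tauto

lemma card_heavy_headFiber_ge [Nonempty V] {ε : ℝ} (hε : 0 ≤ ε) {E : Finset (Fin (d + 1) → V)}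
    (hE : ε * (Fintype.card V : ℝ) ^ (d + 1) ≤ #E) :
    ε / 2 * (Fintype.card V : ℝ) ^ d ≤
      #{w | ε / 2 * Fintype.card V ≤ (#(headFiber E w) : ℝ)} := by
  have hN : (0 : ℝ) < Fintype.card V := by exact_mod_cast Fintype.card_pos
  have hcard : (#(univ : Finset (Fin d → V)) : ℝ) = (Fintype.card V : ℝ) ^ d := by simp
  set N : ℝ := (Fintype.card V : ℝ)
  have hsum : (#E : ℝ) ≤ N ^ d * (ε / 2 * N) + #{w | ε / 2 * N ≤ (#(headFiber E w) : ℝ)} * N := by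
    calc (#E : ℝ) = ∑ w, (#(headFiber E w) : ℝ) := by exact_mod_cast (sum_card_headFiber E).symm
      _ ≤ ∑ w, (ε / 2 * N + if ε / 2 * N ≤ (#(headFiber E w) : ℝ) then N else 0) := by
          refine sum_le_sum fun w _ ↦ ?_
          have : (#(headFiber E w) : ℝ) ≤ N := Nat.cast_le.2 (card_le_univ _)
          split_ifs with hw
          · linarith [mul_nonneg hε hN.le]
          · linarith
      _ = _ := by
          rw [sum_add_distrib, ← sum_filter, sum_const, sum_const, nsmul_eq_mul, nsmul_eq_mul,
            hcard]
  refine le_of_mul_le_mul_right ?_ hN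
  have : ε * N ^ (d + 1) = ε / 2 * N ^ d * N + N ^ d * (ε / 2 * N) := by ring
  linarith

lemma pow_div_factorial_le_choose {t m : ℕ} {y : ℝ} (hty : t ≤ y) (hym : 2 * y ≤ m) :
    y ^ t / t.factorial ≤ m.choose t := by
  have ht : (0 : ℝ) ≤ t := t.cast_nonneg
  have htm : t ≤ m + 1 := by
    have : (t : ℝ) ≤ (m + 1 : ℕ) := by push_cast; linarith
    exact_mod_cast this
  refine le_trans ?_ (Nat.pow_le_choose t m)
  have hym' : y ≤ ((m + 1 - t : ℕ) : ℝ) := by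
    rw [Nat.cast_sub htm]
    push_cast
    linarith
  have : 0 ≤ y := ht.trans hty
  gcongr

lemma exists_card_commonTails_ge [Nonempty V] {t : ℕ} {ε : ℝ} (hε : 0 ≤ ε)
    (htV : t ≤ Fintype.card V) (htε : (t : ℝ) ≤ ε / 4 * Fintype.card V)
    {E : Finset (Fin (d + 1) → V)} (hE : ε * (Fintype.card V : ℝ) ^ (d + 1) ≤ #E) :
    ∃ A : Finset V, #A = t ∧
      ε / 2 * ((ε / 4) ^ t / t.factorial) * (Fintype.card V : ℝ) ^ d ≤ #(commonTails E A) := by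
  have hheavy := card_heavy_headFiber_ge hε hE
  have hsets : (#((univ : Finset V).powersetCard t) : ℝ) ≤ (Fintype.card V : ℝ) ^ t := by
    rw [card_powersetCard, card_univ]
    exact_mod_cast Nat.choose_le_pow _ _
  set N : ℝ := (Fintype.card V : ℝ)
  set heavy : Finset (Fin d → V) := {w | ε / 2 * N ≤ (#(headFiber E w) : ℝ)}
  set c : ℝ := ε / 2 * ((ε / 4) ^ t / t.factorial) * N ^ d with hc
  suffices ∃ A ∈ (univ : Finset V).powersetCard t, c ≤ #(commonTails E A) by
    obtain ⟨A, hA, hcA⟩ := this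
    exact ⟨A, (mem_powersetCard.1 hA).2, hcA⟩
  refine exists_le_of_sum_le (powersetCard_nonempty.2 (by rwa [card_univ])) ?_
  calc ∑ _A ∈ (univ : Finset V).powersetCard t, c ≤ N ^ t * c := by
        rw [sum_const, nsmul_eq_mul]
        gcongr
    _ = ε / 2 * N ^ d * ((ε / 4 * N) ^ t / t.factorial) := by rw [hc]; ring
    _ ≤ #heavy * ((ε / 4 * N) ^ t / t.factorial) := by gcongr
    _ = ∑ w ∈ heavy, (ε / 4 * N) ^ t / t.factorial := by rw [sum_const, nsmul_eq_mul]
    _ ≤ ∑ w ∈ heavy, ((#(headFiber E w)).choose t : ℝ) := sum_le_sum fun w hw ↦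
        pow_div_factorial_le_choose htε (by linarith [(mem_filter.1 hw).2])
    _ ≤ ∑ w, ((#(headFiber E w)).choose t : ℝ) :=
        sum_le_sum_of_subset_of_nonneg (subset_univ _) fun _ _ _ ↦ by positivity
    _ = ∑ A ∈ (univ : Finset V).powersetCard t, (#(commonTails E A) : ℝ) := by
        exact_mod_cast (sum_card_commonTails E t).symm

end Boxes

lemma exists_box_subset (t d : ℕ) (ε : ℝ) (hε : 0 < ε) :
    ∃ n₀ : ℕ, ∀ {V : Type*} [Fintype V] [DecidableEq V], n₀ ≤ Fintype.card V →
      ∀ E : Finset (Fin d → V), ε * (Fintype.card V : ℝ) ^ d ≤ #E →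
      ∃ A : Fin d → Finset V, (∀ i, #(A i) = t) ∧ Fintype.piFinset A ⊆ E := by
  induction d generalizing ε with
  | zero =>
    refine ⟨0, fun _ E hE ↦ ⟨Fin.elim0, fun i ↦ i.elim0, fun f _ ↦ ?_⟩⟩
    have hpos : (0 : ℝ) < #E := hε.trans_le (by simpa using hE)
    obtain ⟨g, hg⟩ := card_pos.1 (Nat.cast_pos.1 hpos)
    rwa [Subsingleton.elim f g]
  | succ d ih =>
    obtain ⟨n₁, hn₁⟩ := ih (ε / 2 * ((ε / 4) ^ t / t.factorial)) (by positivity)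
    obtain ⟨n₂, hn₂⟩ := exists_nat_ge (t / (ε / 4))
    refine ⟨max n₁ (max n₂ (t + 1)), fun {V} _ _ hn E hE ↦ ?_⟩
    obtain ⟨hnn₁, hnn₂, hnt⟩ : n₁ ≤ Fintype.card V ∧ n₂ ≤ Fintype.card V ∧
      t + 1 ≤ Fintype.card V := by simpa only [max_le_iff] using hn
    have : Nonempty V := Fintype.card_pos_iff.1 (by omega)
    have htε : (t : ℝ) ≤ ε / 4 * Fintype.card V := by
      rw [← div_le_iff₀' (by positivity)]
      exact hn₂.trans (by exact_mod_cast hnn₂)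
    obtain ⟨A₀, hA₀, hbig⟩ := exists_card_commonTails_ge hε.le (by omega) htε hE
    obtain ⟨A, hA, hAE⟩ := hn₁ hnn₁ _ hbig
    refine ⟨Fin.cons A₀ A, Fin.cases hA₀ hA, fun f hf ↦ ?_⟩
    rw [Fintype.mem_piFinset] at hf
    have htail : Fin.tail f ∈ commonTails E A₀ :=
      hAE (Fintype.mem_piFinset.2 fun i ↦ by simpa [Fin.tail] using hf i.succ)
    simpa using (mem_filter.1 htail).2 (f 0) (by simpa using hf 0)

/-- The parts `A i` span a complete multipartite subgraph of `S`. -/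
def IsBlowUp {V ι : Type*} (S : SimpleGraph V) (A : ι → Finset V) : Prop :=
  ∀ i j, i ≠ j → ∀ x ∈ A i, ∀ y ∈ A j, S.Adj x y

lemma card_cliquesIn_le_card_tuples {V : Type*} [Fintype V] [DecidableEq V] (S : SimpleGraph V)
    [DecidableRel S.Adj] (U : Finset V) (k : ℕ) :
    #(cliquesIn S U k) ≤
      #{f : Fin k → V | (∀ i, f i ∈ U) ∧ ∀ i j, i ≠ j → S.Adj (f i) (f j)} := by
  refine le_trans (card_le_card fun T hT ↦ ?_) (card_image_le (f := fun f ↦ univ.image f))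
  obtain ⟨hT, hTU⟩ := mem_cliquesIn.1 hT
  let e := (equivFinOfCardEq hT.card_eq).symm
  refine mem_image.2 ⟨fun i ↦ e i, mem_filter.2 ⟨mem_univ _, fun i ↦ hTU (e i).2, ?_⟩, ?_⟩
  · exact fun i j hij ↦ hT.isClique (e i).2 (e j).2 fun h ↦ hij (e.injective (Subtype.ext h))
  · ext x
    refine ⟨fun hx ↦ ?_, fun hx ↦ mem_image.2 ⟨e.symm ⟨x, hx⟩, mem_univ _, by simp⟩⟩
    obtain ⟨i, -, rfl⟩ := mem_image.1 hx
    exact (e i).2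

lemma exists_isBlowUp_of_many_cliques (k t : ℕ) (ht : 1 ≤ t) (η : ℝ) (hη : 0 < η) :
    ∃ n₀ : ℕ, ∀ {V : Type*} [Fintype V] [DecidableEq V] (S : SimpleGraph V) [DecidableRel S.Adj]
      (U : Finset V), n₀ ≤ Fintype.card V →
      η * (Fintype.card V : ℝ) ^ k ≤ #(cliquesIn S U k) →
      ∃ A : Fin k → Finset V, (∀ i, A i ⊆ U) ∧ (∀ i, #(A i) = t) ∧ IsBlowUp S A := by
  obtain ⟨n₀, hn₀⟩ := exists_box_subset t k η hη
  refine ⟨n₀, fun S _ U hn hmany ↦ ?_⟩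
  obtain ⟨A, hA, hAE⟩ := hn₀ hn _
    (hmany.trans (by exact_mod_cast card_cliquesIn_le_card_tuples S U k))
  have hne : ∀ i, (A i).Nonempty := fun i ↦ card_pos.1 (by rw [hA i]; omega)
  choose g hg using hne
  have hmem : ∀ i, ∀ x ∈ A i, Function.update g i x ∈ Fintype.piFinset A := fun i x hx ↦
    Fintype.mem_piFinset.2 fun j ↦ by
      rcases eq_or_ne j i with rfl | hji <;> simp [*]
  refine ⟨A, fun i x hx ↦ ?_, hA, fun i j hij x hx y hy ↦ ?_⟩
  · simpa using (mem_filter.1 (hAE (hmem i x hx))).2.1 i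
  · have hxy : Function.update (Function.update g i x) j y ∈ Fintype.piFinset A :=
      Fintype.mem_piFinset.2 fun l ↦ by
        rcases eq_or_ne l j with rfl | hlj
        · simpa using hy
        · simpa [hlj] using Fintype.mem_piFinset.1 (hmem i x hx) l
    simpa [hij] using (mem_filter.1 (hAE hxy)).2.2 i j hij

lemma exists_card_cliquesIn_le_of_no_isBlowUp (k : ℕ) (hk : 1 ≤ k) (r : ℕ) (hr : r ≤ k + 1)
    (t : ℕ) (ht : 1 ≤ t) (ε : ℝ) (hε : 0 < ε) :
    ∃ n₀ : ℕ, ∀ {V : Type*} [Fintype V] [DecidableEq V] (S : SimpleGraph V) [DecidableRel S.Adj]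
      (U : Finset V), n₀ ≤ Fintype.card V →
      (¬ ∃ A : Fin (k + 1) → Finset V, (∀ i, A i ⊆ U) ∧ (∀ i, #(A i) = t) ∧ IsBlowUp S A) →
      (#(cliquesIn S U r) : ℝ) ≤
        k.choose r * ((#U : ℝ) / k) ^ r + ε * (Fintype.card V : ℝ) ^ r := by
  obtain ⟨η, hη, hfew⟩ := exists_card_cliquesIn_le_of_few k hk r hr ε hε
  obtain ⟨n₀, hmany⟩ := exists_isBlowUp_of_many_cliques (k + 1) t ht η hη
  refine ⟨n₀, fun S _ U hn hno ↦ hfew S U ?_⟩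
  by_contra! hlt
  exact hno (hmany S U hn hlt.le)

section ElementarySymmetric

lemma esymm_cons_succ {R : Type*} [CommSemiring R] (a : R) (s : Multiset R) (n : ℕ) :
    (a ::ₘ s).esymm (n + 1) = s.esymm (n + 1) + a * s.esymm n := by
  simp only [Multiset.esymm, Multiset.powersetCard_cons, Multiset.map_add, Multiset.sum_add,
    Multiset.map_map, Function.comp_def, Multiset.prod_cons, Multiset.sum_map_mul_left]

lemma esymm_cons_cons_le {a b : ℕ} (hba : b + 1 ≤ a) (t : Multiset ℕ) (r : ℕ) :
    ((a + 1) ::ₘ b ::ₘ t).esymm r ≤ (a ::ₘ (b + 1) ::ₘ t).esymm r := by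
  rcases r with _ | _ | r
  · simp [Multiset.esymm]
  · have hzero (s : Multiset ℕ) : s.esymm 0 = 1 := by simp [Multiset.esymm]
    simp only [esymm_cons_succ, hzero]
    omega
  · simp only [esymm_cons_succ]
    obtain ⟨c, rfl⟩ := Nat.exists_eq_add_of_le hba
    nlinarith [Nat.zero_le (c * t.esymm r)]

/-- The part sizes of the balanced partition of `n` into `k` parts, with multiplicity. -/
def balancedParts (k n : ℕ) : Multiset ℕ :=
  Multiset.replicate (n % k) (n / k + 1) + Multiset.replicate (k - n % k) (n / k)

lemma eq_div_or_eq_div_add_one {s : Multiset ℕ} (hs : ∀ a ∈ s, ∀ b ∈ s, a ≤ b + 1) {a : ℕ}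
    (ha : a ∈ s) : a = s.sum / s.card ∨ a = s.sum / s.card + 1 := by
  have hcard : 0 < s.card := Multiset.card_pos_iff_exists_mem.2 ⟨a, ha⟩
  obtain ⟨t, rfl⟩ := Multiset.exists_cons_of_mem ha
  have hupper : t.sum ≤ t.card * (a + 1) := by
    simpa using Multiset.sum_le_card_nsmul t (a + 1) fun b hb ↦
      hs b (Multiset.mem_cons_of_mem hb) a (Multiset.mem_cons_self a t)
  have hlower : t.card * (a - 1) ≤ t.sum := by
    simpa using Multiset.card_nsmul_le_sum (s := t) (a := a - 1) fun b hb ↦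
      Nat.sub_le_iff_le_add.2 (hs a (Multiset.mem_cons_self a t) b (Multiset.mem_cons_of_mem hb))
  simp only [Multiset.sum_cons, Multiset.card_cons] at hcard ⊢
  have hdiv_le : (a + t.sum) / (t.card + 1) < a + 1 := by
    rw [Nat.div_lt_iff_lt_mul hcard]
    nlinarith
  have hle_div : a - 1 ≤ (a + t.sum) / (t.card + 1) := by
    rw [Nat.le_div_iff_mul_le hcard]
    nlinarith [Nat.sub_le a 1]
  omega

lemma eq_balancedParts {s : Multiset ℕ} (hs : ∀ a ∈ s, ∀ b ∈ s, a ≤ b + 1) :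
    s = balancedParts s.card s.sum := by
  set q := s.sum / s.card with hq
  have hvalues : ∀ b ∈ s, b = q ∨ b = q + 1 := fun b hb ↦ eq_div_or_eq_div_add_one hs hb
  have hsplit : s = Multiset.replicate (s.card - s.count q) (q + 1) +
      Multiset.replicate (s.count q) q := by
    have hrest : s.filter (¬ · = q) = Multiset.replicate (s.filter (¬ · = q)).card (q + 1) :=
      Multiset.eq_replicate_card.2 fun b hb ↦ by
        obtain ⟨hbs, hbq⟩ := Multiset.mem_filter.1 hb
        exact (hvalues b hbs).resolve_left hbq
    have hparts := s.filter_add_not (· = q)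
    rw [Multiset.filter_eq', hrest] at hparts
    have hcard := congrArg Multiset.card hparts
    rw [Multiset.card_add, Multiset.card_replicate, Multiset.card_replicate] at hcard
    rw [add_comm, ← Nat.eq_sub_of_add_eq' hcard]
    exact hparts.symm
  have hmod : s.card - s.count q = s.sum % s.card := by
    have hsum := congrArg Multiset.sum hsplit
    rw [Multiset.sum_add, Multiset.sum_replicate, Multiset.sum_replicate, smul_eq_mul,
      smul_eq_mul] at hsum
    have hmulq : (s.card - s.count q) * q + s.count q * q = s.card * q := by
      rw [← add_mul, Nat.sub_add_cancel (Multiset.count_le_card q s)]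
    have := Nat.div_add_mod s.sum s.card
    rw [← hq] at this
    linarith
  rw [balancedParts, ← hq, ← hmod, Nat.sub_sub_self (Multiset.count_le_card q s)]
  exact hsplit

lemma exists_balancedParts_eq_cons (k n : ℕ) :
    ∃ t : Multiset ℕ, t.card = k ∧ (∀ a ∈ t, n / (k + 1) ≤ a) ∧
      balancedParts (k + 1) n = (n / (k + 1)) ::ₘ t ∧
      balancedParts (k + 1) (n + 1) = (n / (k + 1) + 1) ::ₘ t := by
  have hmod : n % (k + 1) < k + 1 := Nat.mod_lt n k.succ_pos
  set q := n / (k + 1)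
  set t := Multiset.replicate (n % (k + 1)) (q + 1) + Multiset.replicate (k - n % (k + 1)) q with ht
  have hcard : t.card = k := by
    simp only [ht, Multiset.card_add, Multiset.card_replicate]
    omega
  have hval : ∀ a ∈ t, a = q + 1 ∨ a = q := fun a ha ↦
    (Multiset.mem_add.1 ha).imp Multiset.eq_of_mem_replicate Multiset.eq_of_mem_replicate
  have hn : balancedParts (k + 1) n = q ::ₘ t := by
    rw [balancedParts, Nat.sub_add_comm (by omega), Multiset.replicate_succ, ht, Multiset.add_cons]
  have hsum : (q ::ₘ t).sum = n := by
    have hmulq : n % (k + 1) * q + (k - n % (k + 1)) * q = k * q := by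
      rw [← add_mul, Nat.add_sub_cancel' (by omega)]
    have : (k + 1) * q + n % (k + 1) = n := Nat.div_add_mod n (k + 1)
    simp only [ht, Multiset.sum_cons, Multiset.sum_add, Multiset.sum_replicate, smul_eq_mul]
    linarith
  refine ⟨t, hcard, fun a ha ↦ by have := hval a ha; omega, hn, ?_⟩
  have hbal : ∀ a ∈ (q + 1) ::ₘ t, ∀ b ∈ (q + 1) ::ₘ t, a ≤ b + 1 := by
    simp only [Multiset.mem_cons]
    rintro a (rfl | ha) b (rfl | hb)
    · omega
    · have := hval b hb; omega
    · have := hval a ha; omega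
    · have := hval a ha; have := hval b hb; omega
  rw [eq_balancedParts hbal, Multiset.card_cons, hcard, Multiset.sum_cons]
  congr 1
  rw [Multiset.sum_cons] at hsum
  omega

lemma esymm_le_esymm_balancedParts (s : Multiset ℕ) (r : ℕ) :
    s.esymm r ≤ (balancedParts s.card s.sum).esymm r := by
  induction hm : (s.map (· ^ 2)).sum using Nat.strong_induction_on generalizing s with
  | _ m ih =>
  by_cases hs : ∀ a ∈ s, ∀ b ∈ s, a ≤ b + 1
  · rw [← eq_balancedParts hs]
  push Not at hs
  obtain ⟨a, ha, b, hb, hba⟩ := hs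
  obtain ⟨a, rfl⟩ : ∃ a', a = a' + 1 := ⟨a - 1, by omega⟩
  obtain ⟨t, rfl⟩ := Multiset.exists_cons_of_mem ha
  obtain ⟨t, rfl⟩ := Multiset.exists_cons_of_mem ((Multiset.mem_cons.1 hb).resolve_left (by omega))
  have hsq : ((a ::ₘ (b + 1) ::ₘ t).map (· ^ 2)).sum < m := by
    simp only [← hm, Multiset.map_cons, Multiset.sum_cons]
    nlinarith
  refine (esymm_cons_cons_le (by omega) t r).trans ((ih _ hsq _ rfl).trans_eq ?_)
  simp only [Multiset.card_cons, Multiset.sum_cons]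
  congr 2
  omega

lemma choose_mul_pow_le_esymm {t : Multiset ℕ} {q : ℕ} (ht : ∀ a ∈ t, q ≤ a) (r : ℕ) :
    t.card.choose r * q ^ r ≤ t.esymm r := by
  rw [← Multiset.card_powersetCard, ← Multiset.card_map Multiset.prod, ← smul_eq_mul]
  refine Multiset.card_nsmul_le_sum fun x hx ↦ ?_
  obtain ⟨u, hu, rfl⟩ := Multiset.mem_map.1 hx
  obtain ⟨hut, rfl⟩ := Multiset.mem_powersetCard.1 hu
  exact Multiset.pow_card_le_prod fun a ha ↦ ht a (Multiset.mem_of_le hut ha)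

end ElementarySymmetric

/-- A vertex colouring of a hypergraph is strong if it is injective on every edge. -/
def IsStrongColoring {V ι : Type*} (G : Finset (Finset V)) (χ : V → ι) : Prop :=
  ∀ e ∈ G, Set.InjOn χ e

section TuranNumber

lemma card_filter_image_eq {V ι : Type*} [DecidableEq ι] (χ : V → ι) (C : Finset V)
    (J : Finset ι) :
    #{e ∈ C.powersetCard #J | e.image χ = J} = ∏ j ∈ J, #{v ∈ C | χ v = j} := by
  classical
  rw [← prod_coe_sort, ← Fintype.card_piFinset]
  have hcolor {p : J → V} (hp : p ∈ Fintype.piFinset fun j : J ↦ {v ∈ C | χ v = j}) (j : J) :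
      p j ∈ C ∧ χ (p j) = j := mem_filter.1 (Fintype.mem_piFinset.1 hp j)
  symm
  refine card_bij (fun p _ ↦ univ.image p) (fun p hp ↦ ?_) (fun p hp q hq hpq ↦ ?_)
    (fun e he ↦ ?_)
  · have hinj : Function.Injective p := fun i j hij ↦
      Subtype.ext ((hcolor hp i).2.symm.trans (hij ▸ (hcolor hp j).2))
    refine mem_filter.2 ⟨mem_powersetCard.2 ⟨fun v hv ↦ ?_, ?_⟩, ?_⟩
    · obtain ⟨j, -, rfl⟩ := mem_image.1 hv
      exact (hcolor hp j).1
    · rw [card_image_of_injective _ hinj, card_univ, Fintype.card_coe]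
    · rw [image_image, show χ ∘ p = Subtype.val from funext fun j ↦ (hcolor hp j).2, univ_eq_attach,
        attach_image_val]
  · funext j
    obtain ⟨i, -, hi⟩ := mem_image.1 (hpq ▸ mem_image_of_mem p (mem_univ j))
    obtain rfl : i = j := Subtype.ext
      ((hcolor hq i).2.symm.trans ((congrArg χ hi).trans (hcolor hp j).2))
    exact hi.symm
  · obtain ⟨he, heJ⟩ := mem_filter.1 he
    obtain ⟨heC, hecard⟩ := mem_powersetCard.1 he
    have hinj : Set.InjOn χ e := card_image_iff.1 (by rw [heJ, hecard])
    have hex (j : J) : ∃ v ∈ e, χ v = j := mem_image.1 (heJ.symm ▸ j.2)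
    choose p hpe hpχ using hex
    refine ⟨p, Fintype.mem_piFinset.2 fun j ↦ mem_filter.2 ⟨heC (hpe j), hpχ j⟩, ?_⟩
    ext v
    refine ⟨fun hv ↦ ?_, fun hv ↦ ?_⟩
    · obtain ⟨j, -, rfl⟩ := mem_image.1 hv
      exact hpe j
    · have hvJ : χ v ∈ J := heJ ▸ mem_image_of_mem χ hv
      exact mem_image.2 ⟨⟨χ v, hvJ⟩, mem_univ _, hinj (hpe _) hv (hpχ _)⟩

lemma card_filter_card_image_eq {V ι : Type*} [Fintype ι] [DecidableEq ι] (χ : V → ι)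
    (C : Finset V) (r : ℕ) :
    #{e ∈ C.powersetCard r | #(e.image χ) = r} =
      ((univ : Finset ι).val.map fun i ↦ #{v ∈ C | χ v = i}).esymm r := by
  have hmaps : Set.MapsTo (image χ) ↑{e ∈ C.powersetCard r | #(e.image χ) = r}
      ((univ : Finset ι).powersetCard r : Set (Finset ι)) := fun e he ↦
    mem_powersetCard.2 ⟨subset_univ _, (mem_filter.1 he).2⟩
  rw [esymm_map_val, card_eq_sum_card_fiberwise hmaps]
  refine sum_congr rfl fun J hJ ↦ ?_
  obtain ⟨-, rfl⟩ := mem_powersetCard.1 hJ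
  rw [← card_filter_image_eq, filter_filter]
  congr 1
  exact filter_congr fun e _ ↦ ⟨And.right, fun h ↦ ⟨congrArg card h, h⟩⟩

lemma sum_card_filter_eq {V ι : Type*} [Fintype ι] [DecidableEq ι] (χ : V → ι) (C : Finset V) :
    ((univ : Finset ι).val.map fun i ↦ #{v ∈ C | χ v = i}).sum = #C :=
  (card_eq_sum_card_fiberwise fun _ _ ↦ mem_univ _).symm

lemma turanNum_eq_esymm_balancedParts (r n : ℕ) {k : ℕ} (hk : 0 < k) :
    turanNum r n k = (balancedParts k n).esymm r := by
  let χ (u : Fin n) : Fin k := ⟨u % k, Nat.mod_lt _ hk⟩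
  set s : Multiset ℕ := (univ : Finset (Fin k)).val.map fun i ↦ #{u : Fin n | χ u = i} with hs
  have hclass (i : Fin k) : #{u : Fin n | χ u = i} = n / k + if (i : ℕ) < n % k then 1 else 0 := by
    have hcount := Nat.count_modEq_card n hk i
    rw [Nat.mod_eq_of_lt i.2] at hcount
    rw [← hcount, Nat.count_eq_card_filter_range]
    refine card_bij (fun u _ ↦ (u : ℕ)) (fun u hu ↦ ?_) (fun u _ v _ huv ↦ Fin.ext huv)
      (fun m hm ↦ ?_)
    · simpa [χ, Fin.ext_iff, Nat.ModEq, Nat.mod_eq_of_lt i.2] using hu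
    · obtain ⟨hmn, hmi⟩ := mem_filter.1 hm
      refine ⟨⟨m, mem_range.1 hmn⟩, ?_, rfl⟩
      simpa [χ, Fin.ext_iff, Nat.ModEq, Nat.mod_eq_of_lt i.2] using hmi
  have hbal : ∀ a ∈ s, ∀ b ∈ s, a ≤ b + 1 := by
    simp only [hs, Multiset.mem_map, hclass]
    rintro _ ⟨i, -, rfl⟩ _ ⟨j, -, rfl⟩
    split_ifs <;> omega
  have hparts : s = balancedParts k n := by
    have hcard : s.card = k := by simp [hs]
    have hsum : s.sum = n := by rw [hs, sum_card_filter_eq, card_univ, Fintype.card_fin]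
    rw [eq_balancedParts hbal, hcard, hsum]
  rw [← hparts, hs, ← card_filter_card_image_eq, turanNum, turanGraph]
  congr 1
  refine filter_congr fun e he ↦ ?_
  rw [← (mem_powersetCard.1 he).2, card_image_iff]
  simp only [Set.InjOn, mem_coe, χ, Fin.mk.injEq]

lemma card_le_turanNum_of_isStrongColoring {V : Type*} [Fintype V] {r k : ℕ} (hk : 0 < k)
    {G : Finset (Finset V)} (hG : IsRGraph r G) {χ : V → Fin k}
    (hχ : IsStrongColoring G χ) : #G ≤ turanNum r (Fintype.card V) k := by
  have hsub : G ⊆ {e ∈ (univ : Finset V).powersetCard r | #(e.image χ) = r} := fun e he ↦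
    mem_filter.2 ⟨mem_powersetCard.2 ⟨subset_univ _, hG e he⟩,
      (card_image_of_injOn (hχ e he)).trans (hG e he)⟩
  refine (card_le_card hsub).trans ?_
  rw [card_filter_card_image_eq, turanNum_eq_esymm_balancedParts r _ hk]
  refine (esymm_le_esymm_balancedParts _ r).trans_eq ?_
  rw [sum_card_filter_eq, Multiset.card_map, card_val, card_univ, Fintype.card_fin, card_univ]

lemma turanNum_add_le_turanNum_succ (r n k : ℕ) :
    turanNum (r + 1) n (k + 1) + k.choose r * (n / (k + 1)) ^ r ≤
      turanNum (r + 1) (n + 1) (k + 1) := by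
  obtain ⟨t, rfl, ht, hn, hn'⟩ := exists_balancedParts_eq_cons k n
  rw [turanNum_eq_esymm_balancedParts _ _ (Nat.succ_pos _),
    turanNum_eq_esymm_balancedParts _ _ (Nat.succ_pos _), hn, hn', esymm_cons_succ,
    esymm_cons_succ, add_mul, one_mul, ← add_assoc]
  gcongr
  exact choose_mul_pow_le_esymm ht r

end TuranNumber

section Embedding

lemma exists_forall_and_pairwise {ι γ : Type*} [Finite ι] [Nonempty γ]
    {P : ι → γ → Prop} {R : ι → ι → γ → γ → Prop} (hR : ∀ ⦃i j x y⦄, R i j x y → R j i y x)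
    (hstep : ∀ (B : Finset ι) (g : ι → γ), (∀ j ∈ B, P j (g j)) → ∀ i ∉ B,
      ∃ x, P i x ∧ ∀ j ∈ B, R i j x (g j)) :
    ∃ g : ι → γ, (∀ i, P i (g i)) ∧ Pairwise fun i j ↦ R i j (g i) (g j) := by
  classical
  have := Fintype.ofFinite ι
  suffices hpartial : ∀ B : Finset ι, ∃ g : ι → γ, (∀ i ∈ B, P i (g i)) ∧
      (B : Set ι).Pairwise fun i j ↦ R i j (g i) (g j) by
    obtain ⟨g, hP, hpair⟩ := hpartial univ
    exact ⟨g, fun i ↦ hP i (mem_univ i), fun i j ↦ hpair (mem_univ i) (mem_univ j)⟩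
  intro B
  induction B using Finset.induction_on with
  | empty => exact ⟨fun _ ↦ Classical.arbitrary γ, by simp, by simp⟩
  | insert i B hi ih =>
    obtain ⟨g, hP, hpair⟩ := ih
    obtain ⟨x, hx, hRx⟩ := hstep B g hP i hi
    have hg {j : ι} (hj : j ∈ B) : Function.update g i x j = g j :=
      Function.update_of_ne (ne_of_mem_of_not_mem hj hi) _ _
    refine ⟨Function.update g i x, forall_mem_insert .. |>.2 ⟨?_, fun j hj ↦ ?_⟩, ?_⟩
    · rwa [Function.update_self]
    · rw [hg hj]
      exact hP j hj
    · have : Std.Symm fun j l ↦ R j l (Function.update g i x j) (Function.update g i x l) :=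
        ⟨fun _ _ h ↦ hR h⟩
      rw [coe_insert]
      refine Set.pairwise_insert_of_symm.2 ⟨fun j hj l hl hne ↦ ?_, fun j hj _ ↦ ?_⟩
      · simpa only [hg hj, hg hl] using hpair hj hl hne
      · rw [Function.update_self, hg hj]
        exact hRx j hj

variable {V : Type*}

/-- The graph of thick pairs of a hypergraph: pairs that lie in a common edge avoiding any
prescribed set of at most `M` other vertices. An edge of `F` placed on a thick pair can be expanded
after all other choices have been made. -/
def thickGraph (G : Finset (Finset V)) (M : ℕ) : SimpleGraph V where
  Adj u v := u ≠ v ∧ ∀ W : Finset V, #W ≤ M → u ∉ W → v ∉ W → ∃ e ∈ G, u ∈ e ∧ v ∈ e ∧ Disjoint e W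
  symm := ⟨fun _ _ h ↦ ⟨h.1.symm, fun W hW hv hu ↦
    (h.2 W hW hu hv).imp fun _ he ↦ ⟨he.1, he.2.2.1, he.2.1, he.2.2.2⟩⟩⟩
  loopless := ⟨fun _ h ↦ h.1 rfl⟩

noncomputable instance (G : Finset (Finset V)) (M : ℕ) : DecidableRel (thickGraph G M).Adj :=
  Classical.decRel _

/-- A family of vertex sets in which every vertex misses at most `q` vertices of each of the other
sets. -/
def IsAlmostBlowUp {ι : Type*} (S : SimpleGraph V) [DecidableRel S.Adj] (q : ℕ)
    (X : ι → Finset V) : Prop :=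
  ∀ i j, i ≠ j → ∀ v ∈ X i, #{w ∈ X j | ¬ S.Adj v w} ≤ q

lemma IsAlmostBlowUp.mono {ι : Type*} {S : SimpleGraph V} [DecidableRel S.Adj] {q : ℕ}
    {X Y : ι → Finset V} (hX : IsAlmostBlowUp S q X) (hYX : ∀ i, Y i ⊆ X i) :
    IsAlmostBlowUp S q Y := fun i j hij v hv ↦
  (card_le_card (filter_subset_filter _ (hYX j))).trans (hX i j hij v (hYX i hv))

/-- Whenever a system of `k` sets of more than `h (q + 1)` vertices is complete multipartite in `S`
up to `q` missing pairs per vertex and set, no two vertices of an edge of `G` can both be joined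
in `S` to everything in `k - 1` of the sets. -/
def NoJoinedPair (G : Finset (Finset V)) (S : SimpleGraph V) [DecidableRel S.Adj] (k h : ℕ) :
    Prop :=
  ∀ ⦃q : ℕ⦄ ⦃X : Fin k → Finset V⦄, IsAlmostBlowUp S q X → (∀ i, h * (q + 1) < #(X i)) →
    ∀ e ∈ G, ∀ u ∈ e, ∀ v ∈ e, u ≠ v → ∀ i, ∃ j ≠ i, ∃ x ∈ X j, ¬ (S.Adj u x ∧ S.Adj v x)

lemma NoJoinedPair.exists_not_adj {G : Finset (Finset V)} {k h M : ℕ}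
    (hG : NoJoinedPair G (thickGraph G M) (k + 1) h) {q : ℕ} {X : Fin (k + 1) → Finset V}
    (hX : IsAlmostBlowUp (thickGraph G M) q X) (hcard : ∀ i, (h + 1) * (q + 1) < #(X i)) (v : V) :
    ∃ i, ∃ x ∈ X i, ¬ (thickGraph G M).Adj v x := by
  by_contra! hjoin
  obtain ⟨w, hw⟩ : (X 0).Nonempty := card_pos.1 (Nat.zero_lt_of_lt (hcard 0))
  obtain ⟨e, he, hve, hwe, -⟩ := (hjoin 0 w hw).2 ∅ (by simp) (by simp) (by simp)
  let Y (j : Fin (k + 1)) : Finset V := if j = 0 then X 0 else {x ∈ X j | (thickGraph G M).Adj w x}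
  have hYX (j) : Y j ⊆ X j := by
    by_cases hj : j = 0
    · simp [Y, hj]
    · simp [Y, hj, filter_subset]
  have hYcard (j) : h * (q + 1) < #(Y j) := by
    by_cases hj : j = 0
    · simp only [Y, hj, if_true]
      exact lt_of_le_of_lt (Nat.mul_le_mul_right _ h.le_succ) (hcard 0)
    · simp only [Y, hj, if_false]
      have := card_filter_add_card_filter_not (s := X j) fun x ↦ (thickGraph G M).Adj w x
      have := hX 0 j (Ne.symm hj) w hw
      have := hcard j
      linarith
  obtain ⟨j, hj, x, hx, hvw⟩ := hG (hX.mono hYX) hYcard e he v hve w hwe (hjoin 0 w hw).1 0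
  simp only [Y, hj, if_false, mem_filter] at hx
  exact hvw ⟨hjoin j x hx.1, hx.2⟩

section Petals

variable [DecidableEq V]

variable {α : Type*} [Fintype α] [DecidableEq α] {F : SimpleGraph α} [DecidableRel F.Adj]

lemma sym2ToFinset_mk_s3 (x y : α) : sym2ToFinset s(x, y) = {x, y} := by
  ext z
  simp [sym2ToFinset]

/-- A set of `r - 2` vertices enlarging the image of the pair `e` to an edge of `G`. -/
def IsPetal (r : ℕ) (G : Finset (Finset V)) (f : α → V) (e : Sym2 α) (p : Finset V) : Prop :=
  #p = r - 2 ∧ (sym2ToFinset e).image f ∪ p ∈ G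

lemma isPetal_sdiff {r : ℕ} {G : Finset (Finset V)} (hG : IsRGraph r G) {f : α → V} {x y : α}
    {e : Finset V} (he : e ∈ G) (hx : f x ∈ e) (hy : f y ∈ e) (hxy : f x ≠ f y) :
    IsPetal r G f s(x, y) (e \ {f x, f y}) := by
  have hsub : {f x, f y} ⊆ e := insert_subset hx (singleton_subset_iff.2 hy)
  refine ⟨?_, ?_⟩
  · rw [card_sdiff_of_subset hsub, card_pair hxy, hG e he]
  · rwa [sym2ToFinset_mk_s3, image_insert, image_singleton, union_sdiff_of_subset hsub]

lemma exists_isPetal_of_thickGraph_adj {r M : ℕ} {G : Finset (Finset V)} (hG : IsRGraph r G)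
    {f : α → V} {x y : α} (hxy : (thickGraph G M).Adj (f x) (f y)) {W : Finset V} (hW : #W ≤ M) :
    ∃ p, IsPetal r G f s(x, y) p ∧ Disjoint p W := by
  obtain ⟨e, he, hx, hy, hdisj⟩ := hxy.2 ((W.erase (f x)).erase (f y))
    (card_erase_le.trans (card_erase_le.trans hW)) (by simp) (by simp)
  refine ⟨_, isPetal_sdiff hG he hx hy hxy.1, disjoint_left.2 fun v hv hvW ↦ ?_⟩
  simp only [mem_sdiff, mem_insert, mem_singleton, not_or] at hv
  exact disjoint_left.1 hdisj hv.1 (by simp [hv.2, hvW])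

lemma containsCopy_expansion_of_isPetal {r : ℕ} {G : Finset (Finset V)} {f : α → V}
    (hf : Function.Injective f) {g : F.edgeFinset → Finset V} (hG : ∀ e, IsPetal r G f e.1 (g e))
    (hfg : ∀ e, Disjoint (g e) (univ.image f))
    (hg : Pairwise fun e e' ↦ Disjoint (g e) (g e')) : ContainsCopy (expansion r F) G := by
  let φ (e : F.edgeFinset) : Fin (r - 2) ≃ g e := (equivFinOfCardEq (hG e).1).symm
  have hφf (e i x) : f x ≠ φ e i := fun h ↦
    disjoint_left.1 (hfg e) (φ e i).2 (h ▸ mem_image_of_mem f (mem_univ x))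
  refine ⟨Sum.elim f fun p ↦ φ p.1 p.2, hf.sumElim ?_ fun x p ↦ hφf p.1 p.2 x, fun E hE ↦ ?_⟩
  · rintro ⟨e, i⟩ ⟨e', i'⟩ h
    obtain rfl : e = e' := by
      by_contra hne
      exact disjoint_left.1 (hg hne) (φ e i).2 ((show (φ e i : V) = φ e' i' from h) ▸ (φ e' i').2)
    exact congrArg (Prod.mk e) ((φ e).injective (Subtype.ext h))
  · obtain ⟨e, -, rfl⟩ := mem_image.1 hE
    convert (hG e).2 using 1
    rw [image_union, image_image, image_image]
    congr 1
    ext v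
    refine mem_image.trans ⟨?_, fun hv ↦ ⟨(φ e).symm ⟨v, hv⟩, mem_univ _, by simp⟩⟩
    rintro ⟨i, -, rfl⟩
    exact (φ e i).2

lemma containsCopy_expansion_of_thickGraph {r M : ℕ} {G : Finset (Finset V)} (hG : IsRGraph r G)
    (hM : Fintype.card α + (#F.edgeFinset + 1) * r ≤ M) {f : α → V} (hf : Function.Injective f)
    {a b : α} (hab : F.Adj a b) {e₀ : Finset V} (he₀ : e₀ ∈ G)
    (hfe₀ : ∀ x, f x ∈ e₀ ↔ x = a ∨ x = b)
    (hthick : ∀ x y, F.Adj x y → s(x, y) ≠ s(a, b) → (thickGraph G M).Adj (f x) (f y)) :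
    ContainsCopy (expansion r F) G := by
  let p₀ : Finset V := e₀ \ {f a, f b}
  have hp₀ : IsPetal r G f s(a, b) p₀ :=
    isPetal_sdiff hG he₀ ((hfe₀ a).2 (.inl rfl)) ((hfe₀ b).2 (.inr rfl)) (hf.ne hab.ne)
  have hp₀f : Disjoint p₀ (univ.image f) := disjoint_right.2 fun v hv ↦ by
    obtain ⟨x, -, rfl⟩ := mem_image.1 hv
    simpa [p₀, hfe₀, hf.eq_iff] using Or.resolve_left
  let P (e : F.edgeFinset) (p : Finset V) : Prop :=
    (IsPetal r G f e.1 p ∧ Disjoint p (univ.image f)) ∧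
      (e.1 = s(a, b) → p = p₀) ∧ (e.1 ≠ s(a, b) → Disjoint p e₀)
  obtain ⟨g, hP, hg⟩ : ∃ g : F.edgeFinset → Finset V, (∀ e, P e (g e)) ∧
      Pairwise fun e e' ↦ Disjoint (g e) (g e') := by
    refine exists_forall_and_pairwise (R := fun _ _ p p' ↦ Disjoint p p')
      (fun _ _ _ _ h ↦ h.symm) fun B g hB e heB ↦ ?_
    by_cases he : e.1 = s(a, b)
    · exact ⟨p₀, ⟨⟨he ▸ hp₀, hp₀f⟩, fun _ ↦ rfl, fun h ↦ (h he).elim⟩, fun j hj ↦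
        (((hB j hj).2.2 fun h ↦ heB (Subtype.ext (he.trans h.symm) ▸ hj)).mono_right
          sdiff_subset).symm⟩
    · obtain ⟨⟨x, y⟩, heF⟩ := e
      have hW : #(univ.image f ∪ e₀ ∪ B.biUnion g) ≤ M := calc
        _ ≤ Fintype.card α + r + #F.edgeFinset * r := by
          refine (card_union_le _ _).trans (add_le_add ((card_union_le _ _).trans
            (add_le_add card_image_le (hG _ he₀).le)) ?_)
          refine (card_biUnion_le_card_mul _ _ r fun j hj ↦ ?_).trans
            (Nat.mul_le_mul_right r ((card_le_univ B).trans_eq (Fintype.card_coe _)))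
          exact (hB j hj).1.1.1.trans_le (Nat.sub_le r 2)
        _ ≤ M := by linarith
      obtain ⟨p, hp, hpW⟩ := exists_isPetal_of_thickGraph_adj hG
        (hthick x y (SimpleGraph.mem_edgeFinset.1 heF) he) hW
      rw [disjoint_union_right, disjoint_union_right, disjoint_biUnion_right] at hpW
      exact ⟨p, ⟨⟨hp, hpW.1.1⟩, fun h ↦ (he h).elim, fun _ ↦ hpW.1.2⟩, hpW.2⟩
  exact containsCopy_expansion_of_isPetal hf (fun e ↦ (hP e).1.1) (fun e ↦ (hP e).1.2) hg

end Petals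

lemma IsAlmostBlowUp.exists_embedding {α ι : Type*} [Fintype α] {S : SimpleGraph V}
    [DecidableRel S.Adj] {q : ℕ} {X : ι → Finset V} (hX : IsAlmostBlowUp S q X) [Nonempty V]
    (c : α → ι) {Z : Finset V}
    (hcard : ∀ i, #Z + Fintype.card α + Fintype.card α * q < #(X i)) :
    ∃ f : α → V, Function.Injective f ∧ (∀ x, f x ∈ X (c x) ∧ f x ∉ Z) ∧
      ∀ x y, c x ≠ c y → S.Adj (f x) (f y) := by
  classical
  obtain ⟨f, hfX, hf⟩ := exists_forall_and_pairwise (ι := α) (P := fun x v ↦ v ∈ X (c x) ∧ v ∉ Z)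
    (R := fun x y v w ↦ v ≠ w ∧ (c x ≠ c y → S.Adj v w))
    (fun _ _ _ _ h ↦ ⟨h.1.symm, fun hc ↦ (h.2 hc.symm).symm⟩) fun B g hB x _ ↦ by
      have hforbidden : #(Z ∪ B.image g ∪ {y ∈ B | c y ≠ c x}.biUnion
          fun y ↦ {w ∈ X (c x) | ¬ S.Adj (g y) w}) < #(X (c x)) := by
        refine lt_of_le_of_lt ((card_union_le _ _).trans (add_le_add ((card_union_le _ _).trans
          (add_le_add_right (card_image_le.trans (card_le_univ B)) _)) ?_)) (hcard (c x))
        refine (card_biUnion_le_card_mul _ _ q fun y hy ↦ ?_).trans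
          (Nat.mul_le_mul_right q ((card_filter_le _ _).trans (card_le_univ B)))
        exact hX _ _ (mem_filter.1 hy).2 _ (hB y (mem_filter.1 hy).1).1
      obtain ⟨v, hvX, hv⟩ := exists_mem_notMem_of_card_lt_card hforbidden
      simp only [mem_union, mem_image, mem_biUnion, mem_filter, not_or, not_exists, not_and,
        not_not] at hv
      exact ⟨v, ⟨hvX, hv.1.1⟩, fun y hy ↦ ⟨fun h ↦ hv.1.2 y hy h.symm,
        fun hc ↦ (hv.2 y ⟨hy, hc.symm⟩ hvX).symm⟩⟩
  refine ⟨f, fun x y hxy ↦ ?_, hfX, fun x y hc ↦ (hf fun h ↦ hc (congrArg c h)).2 hc⟩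
  by_contra hne
  exact (hf hne).1 hxy

/-- A colouring of `F` whose only monochromatic edge is `ab`. -/
structure IsCriticalColoring {α ι : Type*} (F : SimpleGraph α) (c : α → ι) (a b : α) : Prop where
  adj : F.Adj a b
  eq : c a = c b
  ne : ∀ ⦃x y⦄, F.Adj x y → s(x, y) ≠ s(a, b) → c x ≠ c y

lemma IsCriticalColoring.exists_embedding {α ι : Type*} [Fintype α] {F : SimpleGraph α} {c : α → ι}
    {a b : α} (hc : IsCriticalColoring F c a b) {S : SimpleGraph V} [DecidableRel S.Adj] {q : ℕ}
    {X : ι → Finset V} (hX : IsAlmostBlowUp S q X) {Z : Finset V}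
    (hcard : ∀ i, #Z + Fintype.card α + Fintype.card α * q < #(X i)) {u v : V} (hu : u ∈ Z)
    (hv : v ∈ Z) (huv : u ≠ v) (hjoin : ∀ j ≠ c a, ∀ x ∈ X j, S.Adj u x ∧ S.Adj v x) :
    ∃ f : α → V, Function.Injective f ∧ (∀ x, f x ∈ Z ↔ x = a ∨ x = b) ∧
      ∀ x y, F.Adj x y → s(x, y) ≠ s(a, b) → S.Adj (f x) (f y) := by
  classical
  have : Nonempty V := ⟨u⟩
  obtain ⟨g, hg, hgX, hgadj⟩ := hX.exists_embedding c hcard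
  let f (x : α) : V := if x = a then u else if x = b then v else g x
  have hab : b ≠ a := hc.adj.ne.symm
  have hfa : f a = u := if_pos rfl
  have hfb : f b = v := (if_neg hab).trans (if_pos rfl)
  have hf {x : α} (hxa : x ≠ a) (hxb : x ≠ b) : f x = g x := (if_neg hxa).trans (if_neg hxb)
  have hgu (x) : g x ≠ u := fun h ↦ (hgX x).2 (h ▸ hu)
  have hgv (x) : g x ≠ v := fun h ↦ (hgX x).2 (h ▸ hv)
  have hendpoint {x y : α} (hxy : F.Adj x y) (hne : s(x, y) ≠ s(a, b)) (hx : x = a ∨ x = b) :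
      S.Adj (f x) (f y) := by
    have hcx : c x = c a := by rcases hx with rfl | rfl; exacts [rfl, hc.eq.symm]
    have hcy : c y ≠ c a := fun h ↦ hc.ne hxy hne (hcx.trans h.symm)
    rw [hf (fun h ↦ hcy (h ▸ rfl)) (fun h ↦ hcy (h ▸ hc.eq.symm))]
    obtain ⟨hadju, hadjv⟩ := hjoin _ hcy (g y) (hgX y).1
    rcases hx with rfl | rfl
    exacts [hfa ▸ hadju, hfb ▸ hadjv]
  refine ⟨f, fun x y hxy ↦ ?_, fun x ↦ ?_, fun x y hxy hne ↦ ?_⟩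
  · grind
  · grind
  · by_cases hx : x = a ∨ x = b
    · exact hendpoint hxy hne hx
    by_cases hy : y = a ∨ y = b
    · exact (hendpoint hxy.symm (Sym2.eq_swap ▸ hne) hy).symm
    rw [not_or] at hx hy
    rw [hf hx.1 hx.2, hf hy.1 hy.2]
    exact hgadj x y (hc.ne hxy hne)

lemma IsCriticalColoring.noJoinedPair [DecidableEq V] {α : Type*} [Fintype α] [DecidableEq α]
    {F : SimpleGraph α} [DecidableRel F.Adj] {r k M : ℕ} {c : α → Fin k} {a b : α}
    (hc : IsCriticalColoring F c a b) {G : Finset (Finset V)} (hG : IsRGraph r G)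
    (hM : Fintype.card α + (#F.edgeFinset + 1) * r ≤ M)
    (hfree : ¬ ContainsCopy (expansion r F) G) :
    NoJoinedPair G (thickGraph G M) k (r + Fintype.card α) := by
  intro q X hX hcard e₀ he₀ u hu v hv huv i
  by_contra! hjoin
  let σ := Equiv.swap (c a) i
  have hσ {j : Fin k} (hj : j ≠ c a) : σ j ≠ i := fun h ↦
    hj (σ.injective (h.trans (Equiv.swap_apply_left _ _).symm))
  obtain ⟨f, hf, hfe₀, hthick⟩ := hc.exists_embedding (X := fun j ↦ X (σ j))
    (fun j l hjl ↦ hX _ _ (σ.injective.ne hjl))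
    (fun j ↦ lt_of_le_of_lt (by rw [hG e₀ he₀]; nlinarith [Nat.zero_le (r * q)]) (hcard (σ j)))
    hu hv huv fun j hj ↦ hjoin _ (hσ hj)
  exact hfree (containsCopy_expansion_of_thickGraph hG hM hf hc.adj he₀ hfe₀ hthick)

end Embedding

section ThinEdges

variable {V : Type*} {G : Finset (Finset V)} {r M : ℕ}

/-- The edges containing a pair that is not thick. -/
noncomputable def thinEdges (G : Finset (Finset V)) (M : ℕ) : Finset (Finset V) := by
  classical exact {e ∈ G | ¬ (thickGraph G M).IsClique e}

lemma mem_thinEdges {e : Finset V} :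
    e ∈ thinEdges G M ↔ e ∈ G ∧ ¬ (thickGraph G M).IsClique e := by
  classical simp [thinEdges]

variable [Fintype V]

section Codegree

variable [DecidableEq V]

lemma IsRGraph.card_filter_subset_mul_pow_le (hG : IsRGraph r G) (B : Finset V) :
    #{e ∈ G | B ⊆ e} * Fintype.card V ^ #B ≤ Fintype.card V ^ r := by
  obtain hB | hB := lt_or_ge r #B
  · have hempty : {e ∈ G | B ⊆ e} = ∅ := filter_eq_empty_iff.2 fun e he hBe ↦
      (card_le_card hBe).not_gt (hG e he ▸ hB)
    simp [hempty]
  have hinj : #{e ∈ G | B ⊆ e} ≤ #((univ : Finset V).powersetCard (r - #B)) := by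
    refine card_le_card_of_injOn (· \ B) (fun e he ↦ ?_) fun e he e' he' h ↦ ?_
    · obtain ⟨he, hBe⟩ := mem_filter.1 he
      simp [card_sdiff_of_subset hBe, hG e he]
    · rw [← sdiff_union_of_subset (mem_filter.1 he).2, ← sdiff_union_of_subset (mem_filter.1 he').2]
      exact congrArg (· ∪ B) h
  calc _ ≤ Fintype.card V ^ (r - #B) * Fintype.card V ^ #B :=
        Nat.mul_le_mul_right _ (hinj.trans (by
          rw [card_powersetCard, card_univ]
          exact Nat.choose_le_pow _ _))
    _ = Fintype.card V ^ r := by rw [← pow_add, Nat.sub_add_cancel hB]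

lemma IsRGraph.sum_card_filter_mem (hG : IsRGraph r G) : ∑ v, #{e ∈ G | v ∈ e} = r * #G := by
  rw [mul_comm, ← smul_eq_mul, ← sum_const, ← sum_congr rfl hG]
  simpa [bipartiteAbove, bipartiteBelow] using
    sum_card_bipartiteAbove_eq_sum_card_bipartiteBelow (s := univ) (t := G) (fun v e ↦ v ∈ e)

lemma IsRGraph.card_filter_pair_mul_le_of_not_adj (hG : IsRGraph r G) {u v : V} (huv : u ≠ v)
    (hthin : ¬ (thickGraph G M).Adj u v) :
    #{e ∈ G | u ∈ e ∧ v ∈ e} * Fintype.card V ^ 3 ≤ M * Fintype.card V ^ r := by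
  obtain ⟨W, hWM, huW, hvW, hW⟩ : ∃ W : Finset V, #W ≤ M ∧ u ∉ W ∧ v ∉ W ∧
      ∀ e ∈ G, u ∈ e → v ∈ e → ¬ Disjoint e W := by
    by_contra! hthick
    exact hthin ⟨huv, hthick⟩
  have hcover : {e ∈ G | u ∈ e ∧ v ∈ e} ⊆ W.biUnion fun w ↦ {e ∈ G | {u, v, w} ⊆ e} := by
    intro e he
    obtain ⟨he, hue, hve⟩ := mem_filter.1 he
    obtain ⟨w, hwe, hwW⟩ := not_disjoint_iff.1 (hW e he hue hve)
    simp only [mem_biUnion, mem_filter, insert_subset_iff, singleton_subset_iff]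
    exact ⟨w, hwW, he, hue, hve, hwe⟩
  have htriple {w : V} (hw : w ∈ W) : #{u, v, w} = 3 :=
    card_eq_three.2 ⟨u, v, w, huv, fun h ↦ huW (h ▸ hw), fun h ↦ hvW (h ▸ hw), rfl⟩
  calc _ ≤ (∑ w ∈ W, #{e ∈ G | {u, v, w} ⊆ e}) * Fintype.card V ^ 3 :=
        Nat.mul_le_mul_right _ ((card_le_card hcover).trans card_biUnion_le)
    _ ≤ ∑ _w ∈ W, Fintype.card V ^ r := by
        rw [sum_mul]
        exact sum_le_sum fun w hw ↦ htriple hw ▸ hG.card_filter_subset_mul_pow_le {u, v, w}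
    _ ≤ M * Fintype.card V ^ r := by
        rw [sum_const, smul_eq_mul]
        exact Nat.mul_le_mul_right _ hWM

lemma IsRGraph.card_filter_exists_not_adj_mul_le (hG : IsRGraph r G) (M : ℕ) (v : V) :
    #{e ∈ G | v ∈ e ∧ ∃ x ∈ e, v ≠ x ∧ ¬ (thickGraph G M).Adj v x} * Fintype.card V ^ 2 ≤
      M * Fintype.card V ^ r := by
  have hcover : {e ∈ G | v ∈ e ∧ ∃ x ∈ e, v ≠ x ∧ ¬ (thickGraph G M).Adj v x} ⊆
      ({x | v ≠ x ∧ ¬ (thickGraph G M).Adj v x} : Finset V).biUnion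
        fun x ↦ {e ∈ G | v ∈ e ∧ x ∈ e} := by
    intro e he
    obtain ⟨he, hve, x, hxe, hx⟩ := mem_filter.1 he
    exact mem_biUnion.2 ⟨x, by simpa using hx, mem_filter.2 ⟨he, hve, hxe⟩⟩
  refine Nat.le_of_mul_le_mul_right ?_ (Fintype.card_pos_iff.2 ⟨v⟩)
  rw [mul_assoc, ← pow_succ]
  calc _ ≤ (∑ x with v ≠ x ∧ ¬ (thickGraph G M).Adj v x, #{e ∈ G | v ∈ e ∧ x ∈ e}) *
          Fintype.card V ^ 3 :=
        Nat.mul_le_mul_right _ ((card_le_card hcover).trans card_biUnion_le)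
    _ ≤ ∑ x with v ≠ x ∧ ¬ (thickGraph G M).Adj v x, M * Fintype.card V ^ r := by
        rw [sum_mul]
        refine sum_le_sum fun x hx ↦ ?_
        obtain ⟨hvx, hthin⟩ := (mem_filter.1 hx).2
        exact hG.card_filter_pair_mul_le_of_not_adj hvx hthin
    _ ≤ M * Fintype.card V ^ r * Fintype.card V := by
        rw [sum_const, smul_eq_mul, mul_comm]
        exact Nat.mul_le_mul_left _ (card_le_univ _)

end Codegree

lemma IsRGraph.card_thinEdges_mul_le (hG : IsRGraph r G) (M : ℕ) :
    #(thinEdges G M) * Fintype.card V ≤ M * Fintype.card V ^ r := by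
  classical
  obtain hV | hV := (Fintype.card V).eq_zero_or_pos
  · simp [hV]
  have hcover : thinEdges G M ⊆ univ.biUnion fun v ↦
      {e ∈ G | v ∈ e ∧ ∃ x ∈ e, v ≠ x ∧ ¬ (thickGraph G M).Adj v x} := by
    intro e he
    obtain ⟨he, hclique⟩ := mem_thinEdges.1 he
    simp only [SimpleGraph.isClique_iff, Set.Pairwise, not_forall] at hclique
    obtain ⟨x, hx, y, hy, hxy, hthin⟩ := hclique
    exact mem_biUnion.2 ⟨x, mem_univ x, mem_filter.2 ⟨he, hx, y, hy, hxy, hthin⟩⟩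
  refine Nat.le_of_mul_le_mul_right ?_ hV
  rw [mul_assoc, ← sq]
  calc _ ≤ (∑ v, #{e ∈ G | v ∈ e ∧ ∃ x ∈ e, v ≠ x ∧ ¬ (thickGraph G M).Adj v x}) *
          Fintype.card V ^ 2 :=
        Nat.mul_le_mul_right _ ((card_le_card hcover).trans card_biUnion_le)
    _ ≤ ∑ _v : V, M * Fintype.card V ^ r := by
        rw [sum_mul]
        exact sum_le_sum fun v _ ↦ hG.card_filter_exists_not_adj_mul_le M v
    _ = M * Fintype.card V ^ r * Fintype.card V := by
        rw [sum_const, smul_eq_mul, mul_comm, card_univ]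

variable [DecidableEq V]

/-- The vertices of an `(r + 1)`-graph that lie in more than `ε N ^ r` thin edges, `N` being the
number of vertices. -/
noncomputable def exceptionalVertices (G : Finset (Finset V)) (r M : ℕ) (ε : ℝ) : Finset V := by
  classical exact {v | ε * (Fintype.card V : ℝ) ^ r < #{e ∈ thinEdges G M | v ∈ e}}

lemma mem_exceptionalVertices {ε : ℝ} {v : V} : v ∈ exceptionalVertices G r M ε ↔
    ε * (Fintype.card V : ℝ) ^ r < #{e ∈ thinEdges G M | v ∈ e} := by
  classical simp [exceptionalVertices]

lemma IsRGraph.card_exceptionalVertices_le (hG : IsRGraph (r + 1) G) (M : ℕ) {ε : ℝ} (hε : 0 < ε) :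
    (#(exceptionalVertices G r M ε) : ℝ) ≤ (r + 1) * M / ε := by
  obtain hV | hV := (Fintype.card V).eq_zero_or_pos
  · have hempty : #(exceptionalVertices G r M ε) = 0 := Nat.le_zero.1 (hV ▸ card_le_univ _)
    rw [hempty, Nat.cast_zero]
    positivity
  have hthin : IsRGraph (r + 1) (thinEdges G M) := fun e he ↦ hG e (mem_thinEdges.1 he).1
  have hcard : #(thinEdges G M) ≤ M * Fintype.card V ^ r := Nat.le_of_mul_le_mul_right
    ((hG.card_thinEdges_mul_le M).trans_eq (by ring)) hV
  rw [le_div_iff₀ hε]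
  refine le_of_mul_le_mul_right ?_ (show (0 : ℝ) < (Fintype.card V : ℝ) ^ r by positivity)
  calc #(exceptionalVertices G r M ε) * ε * (Fintype.card V : ℝ) ^ r
      ≤ ∑ v ∈ exceptionalVertices G r M ε, (#{e ∈ thinEdges G M | v ∈ e} : ℝ) := by
        rw [mul_assoc, ← nsmul_eq_mul]
        exact card_nsmul_le_sum _ _ _ fun v hv ↦ (mem_exceptionalVertices.1 hv).le
    _ ≤ ∑ v, (#{e ∈ thinEdges G M | v ∈ e} : ℝ) :=
        sum_le_sum_of_subset_of_nonneg (subset_univ _) fun _ _ _ ↦ Nat.cast_nonneg _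
    _ = (r + 1) * #(thinEdges G M) := mod_cast hthin.sum_card_filter_mem
    _ ≤ (r + 1) * M * (Fintype.card V : ℝ) ^ r := by
        rw [mul_assoc]
        exact mul_le_mul_of_nonneg_left (mod_cast hcard) (by positivity)

end ThinEdges

section ThickDegrees

lemma sub_le_of_mul_pow_sub_le {b η y C δ : ℝ} {r : ℕ} (hηb : η ≤ b) (hη : 0 ≤ η)
    (hC : 1 ≤ C) (hδ : δ < η * b ^ r) (h : C * b ^ (r + 1) - δ ≤ C * y ^ (r + 1)) (hy : 0 ≤ y) :
    b - η ≤ y := by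
  by_contra! hlt
  have hpow : y ^ (r + 1) ≤ b ^ (r + 1) - η * b ^ r := calc
    y ^ (r + 1) ≤ (b - η) ^ (r + 1) := pow_le_pow_left₀ hy hlt.le _
    _ = (b - η) ^ r * (b - η) := pow_succ _ _
    _ ≤ b ^ r * (b - η) := mul_le_mul_of_nonneg_right
        (pow_le_pow_left₀ (sub_nonneg.2 hηb) (sub_le_self b hη) r) (sub_nonneg.2 hηb)
    _ = b ^ (r + 1) - η * b ^ r := by ring
  have hgain : η * b ^ r ≤ C * (η * b ^ r) :=
    le_mul_of_one_le_left (mul_nonneg hη (pow_nonneg (hη.trans hηb) r)) hC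
  linarith [mul_le_mul_of_nonneg_left hpow (zero_le_one.trans hC)]

lemma choose_succ_div_pow_lt {k r : ℕ} (hr : 0 < r) (hrk : r ≤ k) :
    (k.choose (r + 1) : ℝ) / k ^ (r + 1) < k.choose r * (1 / (k + 1 : ℝ)) ^ r / (r + 1) := by
  have hr' : (0 : ℝ) < r := mod_cast hr
  have hk : (0 : ℝ) < k := mod_cast hr.trans_le hrk
  have hchoose : (k.choose (r + 1) : ℝ) * (r + 1) = k.choose r * (k - r) := by
    rw [← Nat.cast_sub hrk]
    exact_mod_cast Nat.choose_succ_right_eq k r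
  have hbernoulli : 1 + r * -(1 / (k + 1 : ℝ)) ≤ k ^ r * (1 / (k + 1 : ℝ)) ^ r := calc
    _ ≤ (1 + -(1 / (k + 1 : ℝ))) ^ r := one_add_mul_le_pow (by
        have : 1 / (k + 1 : ℝ) ≤ 1 := by rw [div_le_one (by positivity)]; linarith
        linarith) r
    _ = k ^ r * (1 / (k + 1 : ℝ)) ^ r := by
        rw [← mul_pow]
        congr 1
        field_simp
        ring
  have hstrict : (r : ℝ) * (1 / (k + 1)) < r / k := by
    rw [mul_one_div]
    exact div_lt_div_of_pos_left hr' hk (by linarith)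
  have hmain : (k - r : ℝ) / k < k ^ r * (1 / (k + 1 : ℝ)) ^ r := by
    rw [sub_div, div_self hk.ne']
    linarith
  rw [lt_div_iff₀ (by positivity), div_mul_eq_mul_div, hchoose, mul_div_assoc]
  refine mul_lt_mul_of_pos_left ?_ (mod_cast Nat.choose_pos hrk)
  rw [div_lt_iff₀ hk] at hmain
  rw [div_lt_iff₀ (by positivity), pow_succ]
  linarith

variable {V : Type*} [Fintype V] [DecidableEq V] {G : Finset (Finset V)} {k r M : ℕ} {ε : ℝ}

/-- Every vertex degree of the `(r + 1)`-graph `G` is at least that of a vertex of the balanced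
complete `(k + 1)`-partite `(r + 1)`-graph, up to `ε N ^ r`. -/
def HasTuranDegrees (G : Finset (Finset V)) (r k : ℕ) (ε : ℝ) : Prop :=
  ∀ v, (k.choose r * (1 / (k + 1 : ℝ)) ^ r - ε) * (Fintype.card V : ℝ) ^ r ≤ #{e ∈ G | v ∈ e}

lemma IsRGraph.card_filter_mem_le_cliquesIn_add (hG : IsRGraph (r + 1) G) (M : ℕ) (v : V) :
    #{e ∈ G | v ∈ e} ≤ #(cliquesIn (thickGraph G M) ((thickGraph G M).neighborFinset v) r) +
      #{e ∈ thinEdges G M | v ∈ e} := by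
  have hsplit : {e ∈ G | v ∈ e} ⊆
      {e ∈ G | v ∈ e ∧ e ∉ thinEdges G M} ∪ {e ∈ thinEdges G M | v ∈ e} := by
    intro e he
    simp only [mem_union, mem_filter] at he ⊢
    tauto
  refine (card_le_card hsplit).trans ((card_union_le _ _).trans (add_le_add_left ?_ _))
  refine card_le_card_of_injOn (·.erase v) (fun e he ↦ ?_) fun e he e' he' h ↦ ?_
  · obtain ⟨he, hve, hthick⟩ := mem_filter.1 he
    have hclique : (thickGraph G M).IsClique e := by
      by_contra h
      exact hthick (mem_thinEdges.2 ⟨he, h⟩)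
    refine mem_cliquesIn.2 ⟨⟨hclique.subset (coe_subset.2 (erase_subset v e)), ?_⟩, fun x hx ↦ ?_⟩
    · rw [card_erase_of_mem hve, hG e he, Nat.add_sub_cancel]
    · rw [SimpleGraph.mem_neighborFinset]
      exact hclique hve (mem_of_mem_erase hx) (ne_of_mem_erase hx).symm
  · rw [← insert_erase (mem_filter.1 he).2.1, ← insert_erase (mem_filter.1 he').2.1]
    exact congrArg (insert v) h

lemma HasTuranDegrees.le_card_neighborFinset (hdeg : HasTuranDegrees G (r + 1) k ε)
    (hG : IsRGraph (r + 2) G) (hrk : r + 1 ≤ k) {η : ℝ} (hη : 0 ≤ η) (hηk : η ≤ 1 / (k + 1))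
    (hε : 3 * ε < η * (1 / (k + 1 : ℝ)) ^ r) {v : V}
    (hv : v ∉ exceptionalVertices G (r + 1) M ε)
    (hcliques : (#(cliquesIn (thickGraph G M) ((thickGraph G M).neighborFinset v) (r + 1)) : ℝ) ≤
      k.choose (r + 1) * (#((thickGraph G M).neighborFinset v) / k : ℝ) ^ (r + 1) +
        ε * (Fintype.card V : ℝ) ^ (r + 1)) :
    k * (1 / (k + 1) - η) * Fintype.card V ≤ #((thickGraph G M).neighborFinset v) := by
  have hN : (0 : ℝ) < Fintype.card V := mod_cast Fintype.card_pos_iff.2 ⟨v⟩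
  set N : ℝ := (Fintype.card V : ℝ)
  set d : ℝ := (#((thickGraph G M).neighborFinset v) : ℝ)
  have hk : (0 : ℝ) < k := mod_cast Nat.zero_lt_of_lt hrk
  have hsum : (#{e ∈ G | v ∈ e} : ℝ) ≤
      #(cliquesIn (thickGraph G M) ((thickGraph G M).neighborFinset v) (r + 1)) +
        #{e ∈ thinEdges G M | v ∈ e} := mod_cast hG.card_filter_mem_le_cliquesIn_add M v
  have hthin : (#{e ∈ thinEdges G M | v ∈ e} : ℝ) ≤ ε * N ^ (r + 1) :=
    not_lt.1 (mt mem_exceptionalVertices.2 hv)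
  have hscaled : (d / k) ^ (r + 1) = (d / k / N) ^ (r + 1) * N ^ (r + 1) := by
    rw [← mul_pow, div_mul_cancel₀ _ hN.ne']
  have hdensity : k.choose (r + 1) * (1 / (k + 1 : ℝ)) ^ (r + 1) - 3 * ε ≤
      k.choose (r + 1) * (d / k / N) ^ (r + 1) := by
    have hdegree : (k.choose (r + 1) * (1 / (k + 1 : ℝ)) ^ (r + 1) - ε) * N ^ (r + 1) ≤
      #{e ∈ G | v ∈ e} := hdeg v
    rw [hscaled] at hcliques
    refine le_of_mul_le_mul_right ?_ (pow_pos hN (r + 1))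
    linarith
  have hd := sub_le_of_mul_pow_sub_le hηk hη (mod_cast Nat.choose_pos hrk) hε hdensity
    (by positivity)
  rw [le_div_iff₀ hN, le_div_iff₀ hk] at hd
  linarith

lemma IsRGraph.card_le_cliquesIn_add (hG : IsRGraph (r + 1) G) (M : ℕ) (B : Finset V) :
    #G ≤ #(cliquesIn (thickGraph G M) Bᶜ (r + 1)) + #(thinEdges G M) + #B * Fintype.card V ^ r := by
  obtain hV | hV := isEmpty_or_nonempty V
  · have hempty : G = ∅ := eq_empty_of_forall_notMem fun e he ↦ by
      simpa [eq_empty_of_isEmpty e] using hG e he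
    simp [hempty]
  have hcover : G ⊆ cliquesIn (thickGraph G M) Bᶜ (r + 1) ∪ thinEdges G M ∪
      B.biUnion fun v ↦ {e ∈ G | {v} ⊆ e} := by
    intro e he
    simp only [mem_union, mem_cliquesIn, mem_thinEdges, mem_biUnion, mem_filter,
      singleton_subset_iff]
    by_cases hB : ∃ v ∈ B, v ∈ e
    · exact .inr (hB.imp fun v hv ↦ ⟨hv.1, he, hv.2⟩)
    by_cases hclique : (thickGraph G M).IsClique e
    · exact .inl (.inl ⟨⟨hclique, hG e he⟩, fun x hx ↦ mem_compl.2 fun hxB ↦ hB ⟨x, hxB, hx⟩⟩)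
    · exact .inl (.inr ⟨he, hclique⟩)
  refine (card_le_card hcover).trans ((card_union_le _ _).trans (add_le_add (card_union_le _ _)
    (card_biUnion_le_card_mul _ _ _ fun v _ ↦ ?_)))
  refine Nat.le_of_mul_le_mul_right ?_ (Fintype.card_pos (α := V))
  simpa [pow_succ] using hG.card_filter_subset_mul_pow_le {v}

lemma HasTuranDegrees.lt_card_cliquesIn [Nonempty V] (hdeg : HasTuranDegrees G r k ε)
    (hG : IsRGraph (r + 1) G) (hk : 0 < k) (hε0 : 0 ≤ ε)
    (hε : (k.choose (r + 1) : ℝ) / k ^ (r + 1) + 3 * ε <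
      k.choose r * (1 / (k + 1 : ℝ)) ^ r / (r + 1))
    {B : Finset V} (hB : M + #B ≤ ε * Fintype.card V) :
    k.choose (r + 1) * (#Bᶜ / k : ℝ) ^ (r + 1) + ε * (Fintype.card V : ℝ) ^ (r + 1) <
      #(cliquesIn (thickGraph G M) Bᶜ (r + 1)) := by
  have hU : (#Bᶜ : ℝ) ≤ Fintype.card V := Nat.cast_le.2 (card_le_univ _)
  have hN : (0 : ℝ) < Fintype.card V := mod_cast Fintype.card_pos
  have hthin : (#(thinEdges G M) : ℝ) ≤ M * (Fintype.card V : ℝ) ^ r := mod_cast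
    Nat.le_of_mul_le_mul_right ((hG.card_thinEdges_mul_le M).trans_eq (by ring)) Fintype.card_pos
  have hcard : (#G : ℝ) ≤ #(cliquesIn (thickGraph G M) Bᶜ (r + 1)) + #(thinEdges G M) +
      #B * (Fintype.card V : ℝ) ^ r := mod_cast hG.card_le_cliquesIn_add M B
  have hhandshake : ∑ v, (#{e ∈ G | v ∈ e} : ℝ) = (r + 1) * #G := mod_cast hG.sum_card_filter_mem
  set N : ℝ := (Fintype.card V : ℝ) with hNdef
  set κ : ℝ := (k.choose (r + 1) : ℝ) / k ^ (r + 1)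
  set D : ℝ := k.choose r * (1 / (k + 1 : ℝ)) ^ r
  have hk' : (0 : ℝ) < k := mod_cast hk
  have hturan : k.choose (r + 1) * (#Bᶜ / k : ℝ) ^ (r + 1) ≤ κ * N ^ (r + 1) := calc
    _ ≤ k.choose (r + 1) * (N / k) ^ (r + 1) := by gcongr
    _ = κ * N ^ (r + 1) := by rw [div_pow]; ring
  have hsmall : M * N ^ r + #B * N ^ r ≤ ε * N ^ (r + 1) := calc
    _ = (M + #B) * N ^ r := by ring
    _ ≤ ε * N * N ^ r := by gcongr
    _ = ε * N ^ (r + 1) := by ring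
  have hmany : (D - ε) / (r + 1) * N ^ (r + 1) ≤ #G := by
    have hsum : Fintype.card V • ((D - ε) * N ^ r) ≤ ∑ v, (#{e ∈ G | v ∈ e} : ℝ) :=
      card_nsmul_le_sum _ _ _ fun v _ ↦ hdeg v
    rw [hhandshake, nsmul_eq_mul, ← hNdef] at hsum
    rw [div_mul_eq_mul_div, div_le_iff₀ (by positivity), pow_succ]
    linarith
  have hdensity : κ + 2 * ε < (D - ε) / (r + 1) := by
    have : ε / (r + 1) ≤ ε := div_le_self hε0 (by linarith [Nat.cast_nonneg (α := ℝ) r])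
    rw [sub_div]
    linarith
  linarith [mul_lt_mul_of_pos_right hdensity (pow_pos hN (r + 1))]

end ThickDegrees

section Core

lemma sum_le_and_three_mul_le {ι : Type*} [Fintype ι] {f : ι → ℕ} {t h : ℕ} {i : ι}
    (hf : ∀ j, f j ≤ t) (hi : f i ≤ h) :
    ∑ j, f j ≤ (Fintype.card ι - 1) * t + h ∧
      (4 * ((Fintype.card ι - 1) * t + h) ≤ 4 * ∑ j, f j + t → ∀ j ≠ i, 3 * t ≤ 4 * f j) := by
  classical
  have hrest (s : Finset ι) : ∑ j ∈ s, f j ≤ #s * t := by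
    simpa using sum_le_card_nsmul s f t fun j _ ↦ hf j
  have hcard : #(univ.erase i) = Fintype.card ι - 1 := card_erase_of_mem (mem_univ i)
  rw [← add_sum_erase _ f (mem_univ i), ← hcard]
  refine ⟨(add_comm _ _).trans_le (add_le_add (hrest _) hi), fun hlarge j hj ↦ ?_⟩
  have hmem : j ∈ univ.erase i := mem_erase.2 ⟨hj, mem_univ j⟩
  rw [← add_sum_erase _ f hmem, ← card_erase_add_one hmem, add_one_mul] at hlarge
  have := hrest ((univ.erase i).erase j)
  omega

lemma card_filter_add_lt_mul_add_sum_le {V : Type*} [Fintype V] {f : V → ℕ} {c : ℕ}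
    (hf : ∀ v, f v ≤ c) (d : ℕ) :
    #{v | f v + d < c} * d + ∑ v, f v ≤ Fintype.card V * c := by
  calc _ = ∑ v, ((if f v + d < c then d else 0) + f v) := by
        rw [sum_add_distrib, ← sum_filter, sum_const, smul_eq_mul]
    _ ≤ ∑ _v : V, c := by
        refine sum_le_sum fun v _ ↦ ?_
        split_ifs with hv
        · omega
        · simpa using hf v
    _ = Fintype.card V * c := by rw [sum_const, smul_eq_mul, card_univ]

variable {V : Type*} {G : Finset (Finset V)} {S : SimpleGraph V} [DecidableRel S.Adj] {k h t M : ℕ}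

lemma IsBlowUp.isAlmostBlowUp_zero {ι : Type*} {A : ι → Finset V} (hA : IsBlowUp S A) :
    IsAlmostBlowUp S 0 A := fun i j hij v hv ↦
  (card_eq_zero.2 (filter_eq_empty_iff.2 fun w hw ↦ not_not.2 (hA i j hij v hv w hw))).le

lemma IsBlowUp.exists_card_filter_adj_le {A : Fin (k + 1) → Finset V}
    (hA : IsBlowUp (thickGraph G M) A) (hG : NoJoinedPair G (thickGraph G M) (k + 1) h) (v : V) :
    ∃ i, #{a ∈ A i | (thickGraph G M).Adj v a} ≤ h + 1 := by
  by_contra! hlarge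
  obtain ⟨i, x, hx, hvx⟩ := hG.exists_not_adj
    (hA.isAlmostBlowUp_zero.mono fun i ↦ filter_subset _ (A i)) (fun i ↦ by simpa using hlarge i) v
  exact hvx (mem_filter.1 hx).2

lemma NoJoinedPair.eq_of_mem_edge (hG : NoJoinedPair G S k h) {q : ℕ} {X : Fin k → Finset V}
    (hX : IsAlmostBlowUp S q X) {e : Finset V} (he : e ∈ G) {u v : V} (hu : u ∈ e) (hv : v ∈ e)
    {i : Fin k} (hi : h * (q + 1) < #(X i))
    (hlarge : ∀ j ≠ i, h * (q + 1) + #(X j) < #{x ∈ X j | S.Adj u x} + #{x ∈ X j | S.Adj v x}) :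
    u = v := by
  classical
  by_contra huv
  let Y (j : Fin k) : Finset V :=
    if j = i then X j else {x ∈ X j | S.Adj u x} ∩ {x ∈ X j | S.Adj v x}
  have hYX (j) : Y j ⊆ X j := by
    by_cases hj : j = i
    · simp [Y, hj]
    · simpa [Y, hj] using inter_subset_left.trans (filter_subset _ (X j))
  have hYcard (j) : h * (q + 1) < #(Y j) := by
    by_cases hj : j = i
    · simpa [Y, hj] using hi
    · simp only [Y, hj, if_false]
      have hunion : #({x ∈ X j | S.Adj u x} ∪ {x ∈ X j | S.Adj v x}) ≤ #(X j) :=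
        card_le_card (union_subset (filter_subset _ _) (filter_subset _ _))
      have := card_union_add_card_inter {x ∈ X j | S.Adj u x} {x ∈ X j | S.Adj v x}
      have := hlarge j hj
      omega
  obtain ⟨j, hj, x, hx, hjoin⟩ := hG (hX.mono hYX) hYcard e he u hu v hv huv i
  simp only [Y, hj, if_false, mem_inter, mem_filter] at hx
  exact hjoin ⟨hx.1.2, hx.2.2⟩

variable [Fintype V]

lemma sum_sum_card_filter_adj {ι : Type*} [Fintype ι] (S : SimpleGraph V) [DecidableRel S.Adj]
    (A : ι → Finset V) :
    ∑ v, ∑ i, #{a ∈ A i | S.Adj v a} = ∑ i, ∑ a ∈ A i, #(S.neighborFinset a) := by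
  rw [sum_comm]
  refine sum_congr rfl fun i _ ↦
    (sum_card_bipartiteAbove_eq_sum_card_bipartiteBelow S.Adj).trans (sum_congr rfl fun a _ ↦ ?_)
  congr 1
  ext v
  simp [bipartiteBelow, S.adj_comm]

lemma le_sum_sum_card_filter_adj {A : Fin (k + 1) → Finset V} (hcard : ∀ i, #(A i) = t) {η : ℝ}
    (hdeg : ∀ i, ∀ a ∈ A i, k * (1 / (k + 1) - η) * Fintype.card V ≤ #(S.neighborFinset a)) :
    (1 - (k + 1) * η) * k * t * Fintype.card V ≤ ∑ v, ∑ i, #{a ∈ A i | S.Adj v a} := by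
  rw [sum_sum_card_filter_adj]
  push_cast
  calc (1 - (k + 1) * η) * k * t * Fintype.card V
      = ∑ _i : Fin (k + 1), t * (k * (1 / (k + 1) - η) * Fintype.card V) := by
        rw [sum_const, card_univ, Fintype.card_fin, nsmul_eq_mul]
        push_cast
        field_simp
    _ ≤ ∑ i, ∑ a ∈ A i, (#(S.neighborFinset a) : ℝ) := by
        refine sum_le_sum fun i _ ↦ ?_
        rw [← hcard i, ← nsmul_eq_mul]
        exact card_nsmul_le_sum _ _ _ (hdeg i)

lemma card_atypical_le {A : Fin (k + 1) → Finset V} (hcard : ∀ i, #(A i) = t) (ht : 0 < t)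
    {η ξ : ℝ} (hη : 8 * (k + 1) * k * η ≤ ξ) (hξ : 8 * h ≤ ξ * t)
    (hdeg : ∀ i, ∀ a ∈ A i, k * (1 / (k + 1) - η) * Fintype.card V ≤ #(S.neighborFinset a))
    (hmin : ∀ v, ∃ i, #{a ∈ A i | S.Adj v a} ≤ h) :
    (#{v | 4 * ∑ i, #{a ∈ A i | S.Adj v a} + t < 4 * (k * t + h)} : ℝ) ≤ ξ * Fintype.card V := by
  have hle (v : V) (i) : #{a ∈ A i | S.Adj v a} ≤ t := hcard i ▸ card_filter_le _ _
  have hmarkov := card_filter_add_lt_mul_add_sum_le (c := 4 * (k * t + h)) (fun v ↦ by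
    obtain ⟨i, hi⟩ := hmin v
    exact Nat.mul_le_mul_left 4 (by simpa using (sum_le_and_three_mul_le (hle v) hi).1)) t
  rw [← mul_sum] at hmarkov
  have hsum := le_sum_sum_card_filter_adj hcard hdeg
  set T : Finset V := {v | 4 * ∑ i, #{a ∈ A i | S.Adj v a} + t < 4 * (k * t + h)}
  have hmarkov' : (#T : ℝ) * t + 4 * ∑ v, ∑ i, (#{a ∈ A i | S.Adj v a} : ℝ) ≤
      Fintype.card V * (4 * (k * t + h)) := mod_cast hmarkov
  push_cast at hsum
  have hN : (0 : ℝ) ≤ Fintype.card V := Nat.cast_nonneg _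
  refine le_of_mul_le_mul_right ?_ (show (0 : ℝ) < t from mod_cast ht)
  have hηtN := mul_le_mul_of_nonneg_right hη (show (0 : ℝ) ≤ t * Fintype.card V by positivity)
  have hξN := mul_le_mul_of_nonneg_right hξ hN
  linarith

lemma NoJoinedPair.exists_core [DecidableEq V] (hG : NoJoinedPair G (thickGraph G M) (k + 1) h)
    {A : Fin (k + 1) → Finset V} (hA : IsBlowUp (thickGraph G M) A) (hcard : ∀ i, #(A i) = t)
    (ht : 2 * h < t) {η ξ : ℝ} (hη : 8 * (k + 1) * k * η ≤ ξ) (hξ : 8 * (h + 1) ≤ ξ * t)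
    {B : Finset V} (hB : #B ≤ ξ * Fintype.card V)
    (hdeg : ∀ i, ∀ a ∈ A i,
      k * (1 / (k + 1) - η) * Fintype.card V ≤ #((thickGraph G M).neighborFinset a)) :
    ∃ (Z : Finset V) (ι : V → Fin (k + 1)), Disjoint Z B ∧ #Zᶜ ≤ 2 * ξ * Fintype.card V ∧
      ∀ e ∈ G, Set.InjOn ι ↑(e ∩ Z) := by
  have hmin := hA.exists_card_filter_adj_le hG
  let T : Finset V := {v | 4 * ∑ i, #{a ∈ A i | (thickGraph G M).Adj v a} + t <
    4 * (k * t + (h + 1))}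
  have hT : (#T : ℝ) ≤ ξ * Fintype.card V :=
    card_atypical_le hcard (Nat.zero_lt_of_lt ht) hη (by push_cast; exact hξ) hdeg hmin
  choose ι hι using hmin
  have htypical {v : V} (hv : v ∉ T) (j) (hj : j ≠ ι v) :
      3 * t ≤ 4 * #{a ∈ A j | (thickGraph G M).Adj v a} := by
    refine (sum_le_and_three_mul_le (f := fun i ↦ #{a ∈ A i | (thickGraph G M).Adj v a})
      (fun i ↦ ?_) (hι v)).2 ?_ j hj
    · exact hcard i ▸ card_filter_le _ _
    · simpa [T] using hv
  refine ⟨(B ∪ T)ᶜ, ι, ?_, ?_, fun e he u hu v hv huv ↦ ?_⟩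
  · exact disjoint_compl_left.mono_right subset_union_left
  · rw [compl_compl]
    have : (#(B ∪ T) : ℝ) ≤ #B + #T := mod_cast card_union_le B T
    linarith
  · simp only [coe_inter, Set.mem_inter_iff, mem_coe, mem_compl, mem_union, not_or] at hu hv
    refine hG.eq_of_mem_edge hA.isAlmostBlowUp_zero he hu.1 hv.1 (i := ι v) ?_ fun j hj ↦ ?_
    · rw [hcard]
      omega
    · have := htypical hu.2.2 j (huv ▸ hj)
      have := htypical hv.2.2 j hj
      rw [hcard]
      omega

end Core

section NearTuran

lemma cast_esymm_le (s : Multiset ℕ) {β : ℝ} (hs : ∀ x ∈ s, (x : ℝ) ≤ β) (n : ℕ) :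
    (s.esymm n : ℝ) ≤ (Multiset.card s).choose n * β ^ n := by
  induction s using Multiset.induction_on generalizing n with
  | empty => cases n <;> simp [Multiset.esymm, Multiset.powersetCard_zero_right]
  | cons a s ih =>
    have hs' : ∀ x ∈ s, (x : ℝ) ≤ β := fun x hx ↦ hs x (Multiset.mem_cons_of_mem hx)
    have ha : (a : ℝ) ≤ β := hs a (Multiset.mem_cons_self a s)
    cases n with
    | zero => simp [Multiset.esymm]
    | succ n =>
      rw [esymm_cons_succ, Multiset.card_cons, Nat.choose_succ_succ']
      push_cast
      have hmul := mul_le_mul ha (ih hs' n) (Nat.cast_nonneg _) ((Nat.cast_nonneg a).trans ha)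
      have hrest := ih hs' (n + 1)
      rw [pow_succ] at hrest ⊢
      linarith

lemma cast_esymm_cons_cons_le {s : Multiset ℕ} {x y r : ℕ} {b β δ N : ℝ}
    (hr : r ≤ Multiset.card s) (hN : 0 ≤ N) (hb : 0 ≤ b) (hbβ : b ≤ β) (hδ : 0 ≤ δ)
    (hs : ∀ z ∈ s, (z : ℝ) ≤ β * N) (hx : x ≤ δ * N) (hy : y ≤ 3 / 4 * b * N) :
    ((x ::ₘ y ::ₘ s).esymm (r + 1) : ℝ) ≤
      ((Multiset.card s + 1).choose (r + 1) * β ^ (r + 1) - b ^ (r + 1) / 4 +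
        (Multiset.card s + 1).choose r * δ * β ^ r) * N ^ (r + 1) := by
  set w := Multiset.card s
  have hβ : 0 ≤ β := hb.trans hbβ
  have hrest : (s.esymm (r + 1) : ℝ) ≤ w.choose (r + 1) * (β * N) ^ (r + 1) := cast_esymm_le s hs _
  have hyterm : (y : ℝ) * s.esymm r ≤ 3 / 4 * b * N * (w.choose r * (β * N) ^ r) :=
    mul_le_mul hy (cast_esymm_le s hs r) (by positivity) (by positivity)
  have hxterm : (x : ℝ) * (y ::ₘ s).esymm r ≤ δ * N * ((w + 1).choose r * (β * N) ^ r) := by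
    refine mul_le_mul hx ?_ (by positivity) (by positivity)
    have hys : ∀ z ∈ y ::ₘ s, (z : ℝ) ≤ β * N := Multiset.forall_mem_cons.2
      ⟨hy.trans (mul_le_mul_of_nonneg_right (by linarith) hN), hs⟩
    exact Multiset.card_cons y s ▸ cast_esymm_le _ hys r
  have hgain : b ^ (r + 1) / 4 ≤ w.choose r * ((β - 3 / 4 * b) * β ^ r) := calc
    b ^ (r + 1) / 4 = b / 4 * b ^ r := by ring
    _ ≤ (β - 3 / 4 * b) * β ^ r :=
      mul_le_mul (by linarith) (pow_le_pow_left₀ hb hbβ r) (by positivity) (by linarith)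
    _ ≤ _ := le_mul_of_one_le_left (mul_nonneg (by linarith) (by positivity))
      (mod_cast Nat.choose_pos hr)
  rw [esymm_cons_succ, esymm_cons_succ]
  push_cast
  calc _ ≤ w.choose (r + 1) * (β * N) ^ (r + 1) + 3 / 4 * b * N * (w.choose r * (β * N) ^ r) +
        δ * N * ((w + 1).choose r * (β * N) ^ r) := by gcongr
    _ = (w.choose (r + 1) * β ^ (r + 1) + w.choose r * (3 / 4 * b * β ^ r) +
        (w + 1).choose r * δ * β ^ r) * N ^ (r + 1) := by ring
    _ ≤ _ := by
      refine mul_le_mul_of_nonneg_right ?_ (by positivity)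
      rw [Nat.choose_succ_succ' w r, pow_succ β]
      push_cast
      linarith

lemma cast_esymm_map_le {ι : Type*} [Fintype ι] {k r : ℕ} (hι : Fintype.card ι = k + 1)
    (hrk : r + 1 ≤ k) {y : ι → ℕ} {i j : ι} (hij : j ≠ i)
    {b β δ N : ℝ} (hN : 0 ≤ N) (hb : 0 ≤ b) (hbβ : b ≤ β) (hδ : 0 ≤ δ)
    (hy : ∀ l, (y l : ℝ) ≤ β * N) (hi : y i ≤ δ * N) (hj : y j ≤ 3 / 4 * b * N) :
    (((univ : Finset ι).val.map y).esymm (r + 1) : ℝ) ≤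
      (k.choose (r + 1) * β ^ (r + 1) - b ^ (r + 1) / 4 + k.choose r * δ * β ^ r) *
        N ^ (r + 1) := by
  classical
  obtain ⟨w, rfl⟩ : ∃ w, k = w + 1 := Nat.exists_eq_succ_of_ne_zero (by omega)
  set s := ((univ.erase i).erase j).val.map y
  have hj' : j ∈ univ.erase i := mem_erase.2 ⟨hij, mem_univ j⟩
  have hcons : (univ : Finset ι).val.map y = y i ::ₘ y j ::ₘ s := by
    rw [← Multiset.map_cons, ← Multiset.map_cons, ← insert_val_of_notMem (notMem_erase j _),
      insert_erase hj', ← insert_val_of_notMem (notMem_erase i _), insert_erase (mem_univ i)]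
  have hcard : Multiset.card s = w := by
    rw [Multiset.card_map, card_val, card_erase_of_mem hj', card_erase_of_mem (mem_univ i),
      card_univ, hι]
    rfl
  rw [hcons]
  simpa only [hcard] using cast_esymm_cons_cons_le (s := s) (by omega) hN hb hbβ hδ
    (Multiset.forall_mem_map_iff.2 fun l _ ↦ hy l) hi hj

/-- The vertices of `Z` to which `ι` assigns the colour `i`. -/
def colorClass {V ι : Type*} [DecidableEq ι] (Z : Finset V) (c : V → ι) (i : ι) : Finset V :=
  {u ∈ Z | c u = i}

lemma mem_colorClass {V ι : Type*} [DecidableEq ι] {Z : Finset V} {c : V → ι} {i : ι} {u : V} :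
    u ∈ colorClass Z c i ↔ u ∈ Z ∧ c u = i := mem_filter

variable {V : Type*} [Fintype V] [DecidableEq V] {G : Finset (Finset V)} {S : SimpleGraph V}
  [DecidableRel S.Adj] {Z : Finset V} {k r h M : ℕ} {ι : V → Fin (k + 1)} {η ξ δ ε : ℝ}

/-- The set `Z` contains all but `2 ξ N` vertices, `ι` is a proper colouring of the graph that `S`
induces on `Z`, and the degrees of the vertices of `Z` are nearly those in the complete balanced
`(k + 1)`-partite graph. -/
structure IsNearTuran (S : SimpleGraph V) [DecidableRel S.Adj] (Z : Finset V) (ι : V → Fin (k + 1))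
    (η ξ : ℝ) : Prop where
  not_adj : ∀ ⦃u⦄, u ∈ Z → ∀ ⦃v⦄, v ∈ Z → ι u = ι v → ¬ S.Adj u v
  card_compl_le : #Zᶜ ≤ 2 * ξ * Fintype.card V
  le_card_neighborFinset :
    ∀ ⦃v⦄, v ∈ Z → k * (1 / (k + 1) - η) * Fintype.card V ≤ #(S.neighborFinset v)
  error_le : 8 * (k + 1) * k * η ≤ ξ
  error_nonneg : 0 ≤ η

lemma isNearTuran_thickGraph (hι : ∀ e ∈ G, Set.InjOn ι ↑(e ∩ Z))
    (hZ : #Zᶜ ≤ 2 * ξ * Fintype.card V) (hdeg : ∀ v ∈ Z,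
      k * (1 / (k + 1) - η) * Fintype.card V ≤ #((thickGraph G M).neighborFinset v))
    (hη : 8 * (k + 1) * k * η ≤ ξ) (hη0 : 0 ≤ η) : IsNearTuran (thickGraph G M) Z ι η ξ where
  not_adj u hu v hv huv hadj := by
    obtain ⟨e, he, hue, hve, -⟩ := hadj.2 ∅ (by simp) (by simp) (by simp)
    exact hadj.1 (hι e he (by simp [hue, hu]) (by simp [hve, hv]) huv)
  card_compl_le := hZ
  le_card_neighborFinset := hdeg
  error_le := hη
  error_nonneg := hη0

namespace IsNearTuran

lemma degree_bound (hS : IsNearTuran S Z ι η ξ) {v : V} (hv : v ∈ Z) :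
    (1 - 1 / (k + 1) - k * η) * Fintype.card V ≤ #(S.neighborFinset v) := by
  refine le_of_eq_of_le ?_ (hS.le_card_neighborFinset hv)
  field_simp
  ring

lemma mul_error_le (hS : IsNearTuran S Z ι η ξ) : k * η ≤ ξ / 8 ∧ k * (k * η) ≤ ξ / 8 := by
  have := hS.error_le
  have hkη : 0 ≤ k * η := mul_nonneg k.cast_nonneg hS.error_nonneg
  have := mul_nonneg (Nat.cast_nonneg (α := ℝ) k) hkη
  constructor <;> linarith

lemma nonneg (hS : IsNearTuran S Z ι η ξ) : 0 ≤ ξ := by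
  linarith [hS.mul_error_le.1, mul_nonneg (Nat.cast_nonneg (α := ℝ) k) hS.error_nonneg]

lemma disjoint_colorClass_neighborFinset (hS : IsNearTuran S Z ι η ξ) {v : V} (hv : v ∈ Z) :
    Disjoint (colorClass Z ι (ι v)) (S.neighborFinset v) :=
  disjoint_left.2 fun _ hu hadj ↦ hS.not_adj hv (mem_colorClass.1 hu).1 (mem_colorClass.1 hu).2.symm
    ((S.mem_neighborFinset _ _).1 hadj)

lemma card_colorClass_le (hS : IsNearTuran S Z ι η ξ) (i : Fin (k + 1)) :
    #(colorClass Z ι i) ≤ (1 / (k + 1) + k * η) * Fintype.card V := by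
  have hη := hS.error_nonneg
  obtain hempty | ⟨v, hv⟩ := (colorClass Z ι i).eq_empty_or_nonempty
  · rw [hempty, card_empty, Nat.cast_zero]
    positivity
  · obtain ⟨hvZ, rfl⟩ := mem_colorClass.1 hv
    have hcard : (#(colorClass Z ι (ι v)) + #(S.neighborFinset v) : ℝ) ≤ Fintype.card V := by
      rw [← Nat.cast_add, ← card_union_of_disjoint (hS.disjoint_colorClass_neighborFinset hvZ)]
      exact Nat.cast_le.2 (card_le_univ _)
    linarith [hS.degree_bound hvZ]

lemma card_colorClass_le_add (hS : IsNearTuran S Z ι η ξ) (i : Fin (k + 1)) :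
    #(colorClass Z ι i) ≤ (1 / (k + 1) + ξ) * Fintype.card V := by
  refine (hS.card_colorClass_le i).trans (mul_le_mul_of_nonneg_right ?_ (Nat.cast_nonneg _))
  linarith [hS.mul_error_le.1, hS.nonneg]

lemma le_card_colorClass (hS : IsNearTuran S Z ι η ξ) (i : Fin (k + 1)) :
    (1 / (k + 1) - 3 * ξ) * Fintype.card V ≤ #(colorClass Z ι i) := by
  have hsum : (#(colorClass Z ι i) : ℝ) + ∑ j ∈ univ.erase i, (#(colorClass Z ι j) : ℝ) = #Z := by
    rw [add_sum_erase _ (fun j ↦ (#(colorClass Z ι j) : ℝ)) (mem_univ i)]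
    exact_mod_cast (card_eq_sum_card_fiberwise fun _ _ ↦ mem_univ _).symm
  have hothers := sum_le_card_nsmul (univ.erase i) _ _ fun j _ ↦ hS.card_colorClass_le j
  rw [card_erase_of_mem (mem_univ i), card_univ, Fintype.card_fin, Nat.add_sub_cancel,
    nsmul_eq_mul] at hothers
  have hZ : (#Z + #Zᶜ : ℝ) = Fintype.card V := mod_cast card_add_card_compl Z
  have hZc := hS.card_compl_le
  have hN : (0 : ℝ) ≤ Fintype.card V := Nat.cast_nonneg _
  have hsplit : k * ((1 / (k + 1) + k * η) * Fintype.card V) =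
      (1 - 1 / (k + 1) + k * (k * η)) * Fintype.card V := by
    field_simp
    ring
  have := mul_le_mul_of_nonneg_right hS.mul_error_le.2 hN
  linarith [mul_nonneg hS.nonneg hN]

lemma card_filter_not_adj_le (hS : IsNearTuran S Z ι η ξ) {v : V} (hv : v ∈ Z) {j : Fin (k + 1)}
    (hj : ι v ≠ j) : #{w ∈ colorClass Z ι j | ¬ S.Adj v w} ≤ 4 * ξ * Fintype.card V := by
  have hdisj : Disjoint (colorClass Z ι (ι v) ∪ S.neighborFinset v)
      {w ∈ colorClass Z ι j | ¬ S.Adj v w} := by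
    refine disjoint_right.2 fun w hw hw' ↦ ?_
    rw [mem_filter, mem_colorClass] at hw
    rw [mem_union, mem_colorClass, SimpleGraph.mem_neighborFinset] at hw'
    exact hw'.elim (fun h ↦ hj (h.2.symm.trans hw.1.2)) hw.2
  have hcard : (#(colorClass Z ι (ι v)) + #(S.neighborFinset v) +
      #{w ∈ colorClass Z ι j | ¬ S.Adj v w} : ℝ) ≤ Fintype.card V := by
    rw [← Nat.cast_add, ← card_union_of_disjoint (hS.disjoint_colorClass_neighborFinset hv),
      ← Nat.cast_add, ← card_union_of_disjoint hdisj]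
    exact Nat.cast_le.2 (card_le_univ _)
  have hN : (0 : ℝ) ≤ Fintype.card V := Nat.cast_nonneg _
  have hkη := mul_nonneg (Nat.cast_nonneg (α := ℝ) k) hS.error_nonneg
  have := mul_le_mul_of_nonneg_right hS.mul_error_le.1 hN
  linarith [hS.degree_bound hv, hS.le_card_colorClass (ι v), mul_nonneg hkη hN]

lemma isAlmostBlowUp (hS : IsNearTuran S Z ι η ξ) :
    IsAlmostBlowUp S ⌊4 * ξ * Fintype.card V⌋₊ (colorClass Z ι) := fun _ _ hij _ hv ↦
  Nat.le_floor (hS.card_filter_not_adj_le (mem_colorClass.1 hv).1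
    ((mem_colorClass.1 hv).2.trans_ne hij))

end IsNearTuran

end NearTuran

section StrongColoring

open Topology

lemma mul_floor_add_one_lt {ξ N : ℝ} (hN : 1 ≤ ξ * N) (h : ℕ) :
    ((h + 1) * (⌊4 * ξ * N⌋₊ + 1) : ℝ) < 6 * (h + 1) * ξ * N := by
  have hfloor : (⌊4 * ξ * N⌋₊ : ℝ) ≤ 4 * ξ * N := Nat.floor_le (by linarith)
  have := mul_le_mul_of_nonneg_left hfloor (show (0 : ℝ) ≤ h + 1 by positivity)
  have := mul_le_mul_of_nonneg_left hN (show (0 : ℝ) ≤ h + 1 by positivity)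
  linarith [Nat.cast_nonneg (α := ℝ) h]

variable {V : Type*} [Fintype V] [DecidableEq V] {G : Finset (Finset V)} {Z : Finset V}
  {k r h M : ℕ} {ι : V → Fin (k + 1)} {η ξ δ ε : ℝ}

lemma IsRGraph.card_filter_mem_not_subset_mul_pow_le (hG : IsRGraph (r + 2) G) (Z : Finset V)
    (v : V) : #{e ∈ G | v ∈ e ∧ ¬ e.erase v ⊆ Z} ≤ #Zᶜ * Fintype.card V ^ r := by
  have hcover : {e ∈ G | v ∈ e ∧ ¬ e.erase v ⊆ Z} ⊆
      (Zᶜ.erase v).biUnion fun x ↦ {e ∈ G | {v, x} ⊆ e} := by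
    intro e he
    obtain ⟨he, hve, hZ⟩ := mem_filter.1 he
    obtain ⟨x, hx, hxZ⟩ := not_subset.1 hZ
    rw [mem_erase] at hx
    exact mem_biUnion.2 ⟨x, by simp [hx.1, hxZ], by simp [he, hve, hx.2, insert_subset_iff]⟩
  refine (card_le_card hcover).trans ((card_biUnion_le_card_mul _ _ _ fun x hx ↦ ?_).trans
    (Nat.mul_le_mul_right _ (card_le_card (erase_subset v _))))
  have hpair := hG.card_filter_subset_mul_pow_le {v, x}
  rw [card_pair (ne_of_mem_erase hx).symm, pow_add] at hpair
  exact Nat.le_of_mul_le_mul_right hpair (pow_pos (Fintype.card_pos_iff.2 ⟨v⟩) 2)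

lemma IsRGraph.card_filter_mem_le_esymm_add (hG : IsRGraph (r + 2) G) (M : ℕ)
    (hι : ∀ e ∈ G, Set.InjOn ι ↑(e ∩ Z)) (v : V) :
    #{e ∈ G | v ∈ e} ≤ ((univ : Finset (Fin (k + 1))).val.map fun i ↦
      #{u ∈ colorClass Z ι i | (thickGraph G M).Adj v u}).esymm (r + 1) +
        (M + #Zᶜ) * Fintype.card V ^ r := by
  have hthin : #{e ∈ G | v ∈ e ∧ ∃ x ∈ e, v ≠ x ∧ ¬ (thickGraph G M).Adj v x} ≤
      M * Fintype.card V ^ r := Nat.le_of_mul_le_mul_right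
    ((hG.card_filter_exists_not_adj_mul_le M v).trans_eq (by ring))
    (pow_pos (Fintype.card_pos_iff.2 ⟨v⟩) 2)
  have hout := hG.card_filter_mem_not_subset_mul_pow_le Z v
  let D : Finset V := {u ∈ Z | (thickGraph G M).Adj v u}
  have hcover : {e ∈ G | v ∈ e} ⊆ {e ∈ G | v ∈ e ∧ e.erase v ⊆ D} ∪
      ({e ∈ G | v ∈ e ∧ ∃ x ∈ e, v ≠ x ∧ ¬ (thickGraph G M).Adj v x} ∪
        {e ∈ G | v ∈ e ∧ ¬ e.erase v ⊆ Z}) := by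
    intro e
    simp only [mem_union, mem_filter, D, subset_iff, mem_erase]
    grind
  have hcross : #{e ∈ G | v ∈ e ∧ e.erase v ⊆ D} ≤
      #{f ∈ D.powersetCard (r + 1) | #(f.image ι) = r + 1} := by
    refine card_le_card_of_injOn (·.erase v) (fun e he ↦ ?_) fun e he e' he' h ↦ ?_
    · obtain ⟨he, hve, heD⟩ := mem_filter.1 he
      have hcard : #(e.erase v) = r + 1 := by rw [card_erase_of_mem hve, hG e he]; rfl
      refine mem_filter.2 ⟨mem_powersetCard.2 ⟨heD, hcard⟩, ?_⟩
      rw [card_image_of_injOn ((hι e he).mono _), hcard]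
      exact coe_subset.2 (subset_inter (erase_subset v e) (heD.trans (filter_subset _ Z)))
    · rw [← insert_erase (mem_filter.1 he).2.1, ← insert_erase (mem_filter.1 he').2.1]
      exact congrArg (insert v) h
  rw [card_filter_card_image_eq] at hcross
  simp only [D, filter_comm (fun u ↦ (thickGraph G M).Adj v u)] at hcross
  have := (card_le_card hcover).trans ((card_union_le _ _).trans
    (add_le_add_right (card_union_le _ _) _))
  simp only [colorClass]
  linarith

namespace IsNearTuran

lemma le_card_filter_adj (hS : IsNearTuran (thickGraph G M) Z ι η ξ) (hG : IsRGraph (r + 2) G)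
    (hι : ∀ e ∈ G, Set.InjOn ι ↑(e ∩ Z)) (hdeg : HasTuranDegrees G (r + 1) k ε) (hrk : r + 1 ≤ k)
    (hM : M ≤ ξ * Fintype.card V) (hδ : 0 ≤ δ)
    (hgap : k.choose (r + 1) * (1 / (k + 1) + ξ) ^ (r + 1) - (1 / (k + 1)) ^ (r + 1) / 4 +
      k.choose r * δ * (1 / (k + 1) + ξ) ^ r + 3 * ξ + ε <
        k.choose (r + 1) * (1 / (k + 1 : ℝ)) ^ (r + 1)) {v : V} {i j : Fin (k + 1)} (hj : j ≠ i)
    (hi : #{u ∈ colorClass Z ι i | (thickGraph G M).Adj v u} ≤ δ * Fintype.card V) :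
    (3 / 4 * (1 / (k + 1)) * Fintype.card V : ℝ) ≤
      #{u ∈ colorClass Z ι j | (thickGraph G M).Adj v u} := by
  by_contra! hlight
  have hN : (0 : ℝ) < Fintype.card V := mod_cast Fintype.card_pos_iff.2 ⟨v⟩
  let y (l : Fin (k + 1)) : ℕ := #{u ∈ colorClass Z ι l | (thickGraph G M).Adj v u}
  have hy (l) : (y l : ℝ) ≤ (1 / (k + 1) + ξ) * Fintype.card V :=
    (Nat.cast_le.2 (card_filter_le _ _)).trans (hS.card_colorClass_le_add l)
  have hupper := cast_esymm_map_le (Fintype.card_fin _) hrk hj hN.le (by positivity)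
    (le_add_of_nonneg_right hS.nonneg) hδ hy hi hlight.le
  have hlower : (#{e ∈ G | v ∈ e} : ℝ) ≤ ((univ : Finset (Fin (k + 1))).val.map y).esymm (r + 1) +
      (M + #Zᶜ) * (Fintype.card V : ℝ) ^ r := mod_cast hG.card_filter_mem_le_esymm_add M hι v
  have hlost : (M + #Zᶜ) * (Fintype.card V : ℝ) ^ r ≤ 3 * ξ * (Fintype.card V : ℝ) ^ (r + 1) := calc
    _ ≤ (3 * ξ * Fintype.card V) * (Fintype.card V : ℝ) ^ r := by
      gcongr
      linarith [hS.card_compl_le]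
    _ = _ := by ring
  have hdegree := hdeg v
  have := mul_lt_mul_of_pos_right hgap (pow_pos hN (r + 1))
  linarith

lemma exists_isStrongColoring (hS : IsNearTuran (thickGraph G M) Z ι η ξ)
    (hJ : NoJoinedPair G (thickGraph G M) (k + 1) h) (hN : 1 ≤ ξ * Fintype.card V)
    (hδ : 6 * (h + 1) * ξ + 3 * ξ ≤ 1 / (k + 1) / 2)
    (hother : ∀ v : V, ∀ i j, j ≠ i →
      #{u ∈ colorClass Z ι i | (thickGraph G M).Adj v u} ≤ 6 * (h + 1) * ξ * Fintype.card V →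
        (3 / 4 * (1 / (k + 1)) * Fintype.card V : ℝ) ≤
          #{u ∈ colorClass Z ι j | (thickGraph G M).Adj v u}) :
    ∃ χ : V → Fin (k + 1), IsStrongColoring G χ := by
  have hlight (v) : ∃ i, #{u ∈ colorClass Z ι i | (thickGraph G M).Adj v u} ≤
      6 * (h + 1) * ξ * Fintype.card V := by
    by_contra! hheavy
    obtain ⟨i, x, hx, hvx⟩ := hJ.exists_not_adj (v := v)
      (hS.isAlmostBlowUp.mono fun i ↦ filter_subset (fun u ↦ (thickGraph G M).Adj v u) _)
      fun i ↦ mod_cast (mul_floor_add_one_lt hN h).trans (hheavy i)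
    exact hvx (mem_filter.1 hx).2
  choose χ hχ using hlight
  set q := ⌊4 * ξ * Fintype.card V⌋₊
  have hq : (h * (q + 1) : ℝ) < 6 * (h + 1) * ξ * Fintype.card V :=
    lt_of_le_of_lt (by gcongr; linarith) (mul_floor_add_one_lt hN h)
  have hδN := mul_le_mul_of_nonneg_right hδ (Nat.cast_nonneg (Fintype.card V))
  refine ⟨χ, fun e he u hu v hv huv ↦ hJ.eq_of_mem_edge hS.isAlmostBlowUp he hu hv (i := χ u)
    ?_ fun j hj ↦ ?_⟩
  · suffices (h * (q + 1) : ℝ) < #(colorClass Z ι (χ u)) from mod_cast this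
    linarith [hS.le_card_colorClass (χ u)]
  · suffices (h * (q + 1) + #(colorClass Z ι j) : ℝ) <
        #{x ∈ colorClass Z ι j | (thickGraph G M).Adj u x} +
          #{x ∈ colorClass Z ι j | (thickGraph G M).Adj v x} from mod_cast this
    linarith [hother u _ j hj (hχ u), hother v _ j (huv ▸ hj) (hχ v), hS.card_colorClass_le_add j]

end IsNearTuran

lemma exists_gap (k r h : ℕ) : ∃ ξ : ℝ, 0 < ξ ∧ 6 * (h + 1) * ξ + 3 * ξ ≤ 1 / (k + 1) / 2 ∧
    k.choose (r + 1) * (1 / (k + 1) + ξ) ^ (r + 1) - (1 / (k + 1)) ^ (r + 1) / 4 +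
      k.choose r * (6 * (h + 1) * ξ) * (1 / (k + 1) + ξ) ^ r + 3 * ξ + ξ <
        k.choose (r + 1) * (1 / (k + 1 : ℝ)) ^ (r + 1) := by
  have hsmall : ∀ᶠ ξ : ℝ in 𝓝 0, 6 * (h + 1) * ξ + 3 * ξ < 1 / (k + 1) / 2 :=
    (ContinuousAt.tendsto (by fun_prop)).eventually_lt_const (by
      simp only [mul_zero, add_zero]
      positivity)
  have hgap : ∀ᶠ ξ : ℝ in 𝓝 0,
      k.choose (r + 1) * (1 / (k + 1) + ξ) ^ (r + 1) - (1 / (k + 1)) ^ (r + 1) / 4 +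
        k.choose r * (6 * (h + 1) * ξ) * (1 / (k + 1) + ξ) ^ r + 3 * ξ + ξ <
          k.choose (r + 1) * (1 / (k + 1 : ℝ)) ^ (r + 1) :=
    (ContinuousAt.tendsto (by fun_prop)).eventually_lt_const (by
      simp only [mul_zero, add_zero, zero_mul, sub_lt_self_iff]
      positivity)
  obtain ⟨ξ, hξ, hξ', hξ''⟩ := (eventually_mem_nhdsWithin.and
    ((hsmall.and hgap).filter_mono nhdsWithin_le_nhds)).exists (f := 𝓝[>] 0)
  exact ⟨ξ, hξ, hξ'.le, hξ''⟩

end StrongColoring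

section Stability

/-- The smallness conditions on `ε ≪ η ≪ ξ` under which minimum degree within `ε` of that of the
balanced complete `(k + 1)`-partite `(r + 2)`-graph forces a strong `(k + 1)`-colouring. Here `ε` is
the degree deficit, `η` the deficit of the thick degrees, and `ξ` bounds the fraction of vertices
outside the well-structured core as well as the deviation of the colour classes from `1 / (k + 1)`.
-/
structure IsStabilityConstants (k r h : ℕ) (ξ η ε : ℝ) : Prop where
  pos : 0 < ε
  le : ε ≤ ξ
  nonneg : 0 ≤ η
  le_part : η ≤ 1 / (k + 1)
  core : 8 * (k + 1) * k * η ≤ ξ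
  degree : 3 * ε < η * (1 / (k + 1 : ℝ)) ^ r
  cliques : (k.choose (r + 2) : ℝ) / k ^ (r + 2) + 3 * ε <
    k.choose (r + 1) * (1 / (k + 1 : ℝ)) ^ (r + 1) / ((r + 1 : ℕ) + 1)
  part : 6 * (h + 1) * ξ + 3 * ξ ≤ 1 / (k + 1) / 2
  gap : k.choose (r + 1) * (1 / (k + 1) + ξ) ^ (r + 1) - (1 / (k + 1)) ^ (r + 1) / 4 +
    k.choose r * (6 * (h + 1) * ξ) * (1 / (k + 1) + ξ) ^ r + 3 * ξ + ε <
      k.choose (r + 1) * (1 / (k + 1 : ℝ)) ^ (r + 1)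

lemma exists_isStabilityConstants {k r : ℕ} (h : ℕ) (hrk : r + 1 ≤ k) :
    ∃ ξ η ε : ℝ, IsStabilityConstants k r h ξ η ε := by
  obtain ⟨ξ, hξ, hpart, hgap⟩ := exists_gap k r h
  have hcliques := sub_pos.2 (choose_succ_div_pow_lt r.succ_pos hrk)
  obtain ⟨η, hη, hηξ⟩ : ∃ η : ℝ, 0 < η ∧ 8 * ((k : ℝ) + 1) ^ 2 * η = ξ :=
    ⟨ξ / (8 * (k + 1) ^ 2), by positivity, mul_div_cancel₀ ξ (by positivity)⟩
  have hdegree : 0 < η * (1 / (k + 1 : ℝ)) ^ r := by positivity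
  have hkη : 0 ≤ k * η := by positivity
  have hkη' : 0 ≤ (k : ℝ) ^ 2 * η := by positivity
  obtain ⟨ε, hε, hεlt⟩ := exists_between
    (lt_min hξ (lt_min (div_pos hdegree three_pos) (div_pos hcliques three_pos)))
  obtain ⟨hεξ, hεη, hεδ⟩ := by simpa only [lt_min_iff] using hεlt
  exact ⟨ξ, η, ε,
    { pos := hε
      le := hεξ.le
      nonneg := hη.le
      le_part := by
        have : 0 ≤ h * ξ := by positivity
        have : (0 : ℝ) < 1 / (k + 1) := by positivity
        linarith
      core := by linarith
      degree := (lt_div_iff₀' three_pos).1 hεη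
      cliques := lt_sub_iff_add_lt'.1 ((lt_div_iff₀' three_pos).1 hεδ)
      part := hpart
      gap := by linarith }⟩

lemma IsStabilityConstants.exists_isStrongColoring {V : Type*} [Fintype V] [DecidableEq V]
    {G : Finset (Finset V)} {k r h t M : ℕ} {ξ η ε : ℝ} (hC : IsStabilityConstants k r h ξ η ε)
    (hrk : r + 1 ≤ k) (hG : IsRGraph (r + 2) G)
    (hJ : NoJoinedPair G (thickGraph G M) (k + 1) h) (hdeg : HasTuranDegrees G (r + 1) k ε)
    (hN : 1 + M + (r + 2) * M / ε ≤ ε * Fintype.card V) (ht : 2 * h + 1 < t)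
    (hξt : 8 * (h + 1) ≤ ξ * t)
    (hcliques : ∀ s, s = r + 1 ∨ s = r + 2 → ∀ U : Finset V,
      (¬ ∃ A : Fin (k + 1) → Finset V, (∀ i, A i ⊆ U) ∧ (∀ i, #(A i) = t) ∧
        IsBlowUp (thickGraph G M) A) →
      (#(cliquesIn (thickGraph G M) U s) : ℝ) ≤
        k.choose s * (#U / k : ℝ) ^ s + ε * (Fintype.card V : ℝ) ^ s) :
    ∃ χ : V → Fin (k + 1), IsStrongColoring G χ := by
  have hε := hC.pos
  set B := exceptionalVertices G (r + 1) M ε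
  have hB : (#B : ℝ) ≤ (r + 2) * M / ε := by
    convert hG.card_exceptionalVertices_le M hε using 2
    push_cast
    ring
  have hξN : ε * Fintype.card V ≤ ξ * Fintype.card V := by
    gcongr
    exact hC.le
  have hM0 : (0 : ℝ) ≤ M := M.cast_nonneg
  have hB0 : (0 : ℝ) ≤ #B := Nat.cast_nonneg _
  have : Nonempty V := by
    by_contra! hempty
    rw [Fintype.card_eq_zero, Nat.cast_zero, mul_zero] at hN
    linarith
  have hthick (v) (hv : v ∉ B) :
      k * (1 / (k + 1) - η) * Fintype.card V ≤ #((thickGraph G M).neighborFinset v) := by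
    refine hdeg.le_card_neighborFinset hG hrk hC.nonneg hC.le_part hC.degree hv
      (hcliques _ (.inl rfl) _ ?_)
    rintro ⟨A, hAv, hcard, hA⟩
    obtain ⟨i, x, hx, hvx⟩ := hJ.exists_not_adj hA.isAlmostBlowUp_zero
      (fun i ↦ by rw [hcard]; omega) v
    exact hvx ((SimpleGraph.mem_neighborFinset _ _ _).1 (hAv i hx))
  obtain ⟨A, hAB, hcard, hA⟩ : ∃ A : Fin (k + 1) → Finset V, (∀ i, A i ⊆ Bᶜ) ∧
      (∀ i, #(A i) = t) ∧ IsBlowUp (thickGraph G M) A := by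
    by_contra hno
    exact (hcliques _ (.inr rfl) _ hno).not_gt
      (hdeg.lt_card_cliquesIn hG (by omega) hε.le hC.cliques (by linarith))
  obtain ⟨Z, ι, hZB, hZ, hι⟩ := hJ.exists_core hA hcard (by omega) hC.core hξt
    (B := B) (by linarith) fun i a ha ↦ hthick a (mem_compl.1 (hAB i ha))
  have hS := isNearTuran_thickGraph hι hZ (fun v hv ↦ hthick v (disjoint_left.1 hZB hv))
    hC.core hC.nonneg
  have hξ : 0 < ξ := hε.trans_le hC.le
  exact hS.exists_isStrongColoring hJ (by linarith) hC.part fun v i j hj ↦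
    hS.le_card_filter_adj hG hι hdeg hrk (by linarith) (by positivity) hC.gap hj

lemma IsCriticalColoring.exists_isStrongColoring {α : Type*} [Fintype α] [DecidableEq α]
    {F : SimpleGraph α} [DecidableRel F.Adj] {k r : ℕ} {c : α → Fin (k + 1)} {a b : α}
    (hc : IsCriticalColoring F c a b) (hrk : r + 1 ≤ k) :
    ∃ ε > 0, ∃ n₀, ∀ {V : Type*} [Fintype V] [DecidableEq V] {G : Finset (Finset V)},
      n₀ ≤ Fintype.card V → IsRGraph (r + 2) G → ¬ ContainsCopy (expansion (r + 2) F) G →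
      HasTuranDegrees G (r + 1) k ε → ∃ χ : V → Fin (k + 1), IsStrongColoring G χ := by
  set h := r + 2 + Fintype.card α
  set M := Fintype.card α + (#F.edgeFinset + 1) * (r + 2)
  obtain ⟨ξ, η, ε, hC⟩ := exists_isStabilityConstants h hrk
  have hξ : 0 < ξ := hC.pos.trans_le hC.le
  obtain ⟨t, ht⟩ := exists_nat_gt (max (2 * h + 1 : ℝ) (8 * (h + 1) / ξ))
  obtain ⟨ht, hξt⟩ := max_lt_iff.1 ht
  have ht : 2 * h + 1 < t := mod_cast ht
  obtain ⟨n₁, hn₁⟩ := exists_card_cliquesIn_le_of_no_isBlowUp k (by omega) (r + 1) (by omega) t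
    (by omega) ε hC.pos
  obtain ⟨n₂, hn₂⟩ := exists_card_cliquesIn_le_of_no_isBlowUp k (by omega) (r + 2) (by omega) t
    (by omega) ε hC.pos
  obtain ⟨n₃, hn₃⟩ := exists_nat_ge ((1 + M + (r + 2) * M / ε) / ε)
  refine ⟨ε, hC.pos, max n₁ (max n₂ n₃), fun {V} _ _ G hn hG hfree hdeg ↦ ?_⟩
  obtain ⟨hV₁, hV₂, hV₃⟩ := by simpa only [max_le_iff] using hn
  refine hC.exists_isStrongColoring hrk hG (hc.noJoinedPair hG le_rfl hfree) hdeg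
    ((div_le_iff₀' hC.pos).1 (hn₃.trans (mod_cast hV₃))) ht ((div_le_iff₀' hξ).1 hξt.le) ?_
  rintro s (rfl | rfl) U hno
  · exact hn₁ _ U hV₁ hno
  · exact hn₂ _ U hV₂ hno

end Stability

section CriticalGraphs

variable {α : Type*} {F : SimpleGraph α} {k : ℕ}

lemma exists_isCriticalColoring {e : Sym2 α} (he : e ∈ F.edgeSet) (hF : ¬ F.Colorable k)
    (hFe : (F.deleteEdges {e}).Colorable k) :
    ∃ (c : α → Fin k) (a b : α), IsCriticalColoring F c a b := by
  obtain ⟨a, b⟩ := e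
  obtain ⟨c⟩ := hFe
  have hproper ⦃x y⦄ (hxy : F.Adj x y) (hne : s(x, y) ≠ s(a, b)) : c x ≠ c y :=
    c.valid (SimpleGraph.deleteEdges_adj.2 ⟨hxy, hne⟩)
  refine ⟨c, a, b, he, ?_, hproper⟩
  by_contra hab
  refine hF ⟨.mk c fun {x y} hxy ↦ ?_⟩
  by_cases hxy' : s(x, y) = s(a, b)
  · obtain ⟨rfl, rfl⟩ | ⟨rfl, rfl⟩ := Sym2.eq_iff.1 hxy'
    · exact hab
    · exact Ne.symm hab
  · exact hproper hxy hxy'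

lemma not_containsCopy_turanGraph [Fintype α] [DecidableEq α] [DecidableRel F.Adj] (hk : 0 < k)
    (hF : ¬ F.Colorable k) (r n : ℕ) : ¬ ContainsCopy (expansion r F) (turanGraph r n k) := by
  rintro ⟨f, hf, hcopy⟩
  refine hF ⟨.mk (fun x ↦ (⟨f (.inl x) % k, Nat.mod_lt _ hk⟩ : Fin k)) fun {x y} hxy heq ↦ ?_⟩
  have hedge := hcopy _ (mem_image.2 ⟨⟨s(x, y), SimpleGraph.mem_edgeFinset.2 hxy⟩,
    mem_attach _ _, rfl⟩)
  have hinj := hf ((mem_filter.1 hedge).2 (f (.inl x)) (mem_image_of_mem _ (by simp [sym2ToFinset]))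
    (f (.inl y)) (mem_image_of_mem _ (by simp [sym2ToFinset])) (by simpa using heq))
  exact hxy.ne (Sum.inl_injective hinj)

end CriticalGraphs

section MinimumDegree

variable {V : Type*} [DecidableEq V]

/-- The hypergraph induced by `G` on the vertex set `U`. -/
def inducedOn (G : Finset (Finset V)) (U : Finset V) : Finset (Finset U) :=
  {e | e.map (.subtype _) ∈ G}

variable {G : Finset (Finset V)} {U : Finset V}

lemma mem_inducedOn {e : Finset U} : e ∈ inducedOn G U ↔ e.map (.subtype _) ∈ G := by
  simp [inducedOn]

lemma map_inducedOn (G : Finset (Finset V)) (U : Finset V) :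
    (inducedOn G U).map (mapEmbedding (.subtype _)).toEmbedding = {e ∈ G | e ⊆ U} := by
  ext e
  simp only [mem_map, mem_inducedOn, RelEmbedding.coe_toEmbedding, mapEmbedding_apply, mem_filter]
  constructor
  · rintro ⟨e, he, rfl⟩
    exact ⟨he, fun _ ↦ property_of_mem_map_subtype e⟩
  · rintro ⟨he, heU⟩
    have hmap := subtype_map_of_mem (p := (· ∈ U)) heU
    exact ⟨e.subtype (· ∈ U), hmap.symm ▸ he, hmap⟩

lemma card_inducedOn (G : Finset (Finset V)) (U : Finset V) :
    #(inducedOn G U) = #{e ∈ G | e ⊆ U} := by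
  rw [← map_inducedOn, card_map]

lemma card_filter_mem_inducedOn (v : U) :
    #{e ∈ inducedOn G U | v ∈ e} = #{e ∈ {e ∈ G | e ⊆ U} | ↑v ∈ e} := by
  rw [← map_inducedOn, filter_map, card_map]
  simp only [Function.comp_def, RelEmbedding.coe_toEmbedding, mapEmbedding_apply,
    Function.Embedding.subtype_apply, mem_map, SetLike.coe_eq_coe, exists_eq_right]

lemma IsRGraph.inducedOn {r : ℕ} (hG : IsRGraph r G) (U : Finset V) :
    IsRGraph r (inducedOn G U) := fun _ he ↦
  (card_map _).symm.trans (hG _ (mem_inducedOn.1 he))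

lemma ContainsCopy.of_inducedOn {β : Type*} {H : Finset (Finset β)}
    (h : ContainsCopy H (inducedOn G U)) : ContainsCopy H G := by
  obtain ⟨f, hf, hcopy⟩ := h
  refine ⟨fun x ↦ f x, Subtype.val_injective.comp hf, fun e he ↦ ?_⟩
  have hmem := mem_inducedOn.1 (hcopy e he)
  rwa [map_eq_image, image_image] at hmem

lemma card_inducedOn_le (v : U) :
    #(inducedOn G U) ≤ #{e ∈ inducedOn G U | v ∈ e} + #(inducedOn G (U.erase v)) := by
  rw [card_filter_mem_inducedOn, card_inducedOn, card_inducedOn,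
    ← card_filter_add_card_filter_not (s := {e ∈ G | e ⊆ U}) fun e ↦ ↑v ∈ e]
  simp only [subset_erase, filter_filter, le_refl]

-- Take `U` of least size among the sets for which `G[U]` exceeds `f #U` by more than the number of
-- vertices outside `U`; a small `U` does not span enough edges for that.
lemma exists_forall_le_degree_inducedOn [Fintype V] {f d : ℕ → ℕ}
    (hf : ∀ m, f m + d (m + 1) ≤ f (m + 1)) (hG : f (Fintype.card V) < #G) {L : ℕ}
    (hL : L + 2 ^ L ≤ Fintype.card V) :
    ∃ U : Finset V, L ≤ #U ∧ f #U < #(inducedOn G U) ∧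
      ∀ v, d #U ≤ #{e ∈ inducedOn G U | v ∈ e} := by
  have huniv : f #(univ : Finset V) + #(univ : Finset V)ᶜ < #(inducedOn G univ) := by
    rw [card_inducedOn]
    simpa using hG
  obtain ⟨U, hU, hmin⟩ := exists_min_image
    {U : Finset V | f #U + #Uᶜ < #(inducedOn G U)} card ⟨univ, by simpa using huniv⟩
  have hexcess := (mem_filter.1 hU).2
  refine ⟨U, ?_, by omega, fun v ↦ ?_⟩
  · by_contra! hlt
    have hcard : #(inducedOn G U) ≤ 2 ^ #U := by simpa using card_le_univ (inducedOn G U)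
    have := Nat.pow_le_pow_right two_pos hlt.le
    rw [card_compl] at hexcess
    omega
  · by_contra! hlt
    have hle := card_inducedOn_le (G := G) v
    have hcard := card_erase_add_one v.2
    have hstep := hf #(U.erase v)
    rw [hcard] at hstep
    have hcompl : #(U.erase v)ᶜ = #Uᶜ + 1 := by
      rw [compl_erase, card_insert_of_notMem (by simp)]
    have := hmin (U.erase v) (by simp only [mem_filter, mem_univ, true_and]; omega)
    omega

end MinimumDegree

section DegreeAsymptotics

open Filter Topology

lemma tendsto_natCast_pred_div_div (k : ℕ) :
    Tendsto (fun n : ℕ ↦ (((n - 1) / (k + 1) : ℕ) : ℝ) / n) atTop (𝓝 (1 / (k + 1))) := by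
  rw [← tendsto_add_atTop_iff_nat 1]
  have hfloor := (tendsto_nat_floor_mul_div_atTop (R := ℝ) (a := 1 / (k + 1))
    (by positivity)).comp tendsto_natCast_atTop_atTop
  convert (hfloor.mul (tendsto_natCast_div_add_atTop (1 : ℝ))).congr' ?_ using 1
  · simp
  · filter_upwards [eventually_ne_atTop 0] with n hn
    have hn' : (n : ℝ) ≠ 0 := mod_cast hn
    rw [Function.comp_apply, div_mul_div_cancel₀ hn', one_div_mul_eq_div, ← Nat.cast_add_one k,
      Nat.floor_div_eq_div, Nat.add_sub_cancel, ← Nat.cast_add_one n]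

lemma exists_forall_sub_mul_pow_le (k r : ℕ) {ε : ℝ} (hε : 0 < ε) :
    ∃ n₀ : ℕ, ∀ n ≥ n₀, (k.choose r * (1 / (k + 1 : ℝ)) ^ r - ε) * (n : ℝ) ^ r ≤
      (k.choose r * ((n - 1) / (k + 1)) ^ r : ℕ) := by
  have hlim := ((tendsto_natCast_pred_div_div k).pow r).const_mul (k.choose r : ℝ)
  refine eventually_atTop.1 ?_
  filter_upwards [hlim.eventually_const_lt (sub_lt_self _ hε), eventually_gt_atTop 0] with n hn hn0
  rw [Nat.cast_mul, Nat.cast_pow, ← le_div_iff₀ (by positivity), mul_div_assoc, ← div_pow]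
  exact hn.le

end DegreeAsymptotics

lemma IsCriticalColoring.exists_forall_card_le_turanNum {α : Type*} [Fintype α] [DecidableEq α]
    {F : SimpleGraph α} [DecidableRel F.Adj] {k r : ℕ} {c : α → Fin (k + 1)} {a b : α}
    (hc : IsCriticalColoring F c a b) (hrk : r + 1 ≤ k) :
    ∃ n₀, ∀ {V : Type*} [Fintype V] [DecidableEq V] {G : Finset (Finset V)},
      n₀ ≤ Fintype.card V → IsRGraph (r + 2) G → ¬ ContainsCopy (expansion (r + 2) F) G →
      #G ≤ turanNum (r + 2) (Fintype.card V) (k + 1) := by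
  obtain ⟨ε, hε, n₁, hcolor⟩ := hc.exists_isStrongColoring hrk
  obtain ⟨n₂, hdegree⟩ := exists_forall_sub_mul_pow_le k (r + 1) hε
  let L := max n₁ n₂
  refine ⟨L + 2 ^ L, fun {V} _ _ G hV hG hfree ↦ ?_⟩
  by_contra! hlarge
  obtain ⟨U, hLU, hlarge', hdegU⟩ := exists_forall_le_degree_inducedOn
    (d := fun m ↦ k.choose (r + 1) * ((m - 1) / (k + 1)) ^ (r + 1))
    (fun m ↦ turanNum_add_le_turanNum_succ (r + 1) m k) hlarge hV
  obtain ⟨hU₁, hU₂⟩ := max_le_iff.1 hLU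
  rw [← Fintype.card_coe U] at hU₁ hU₂ hdegU hlarge'
  obtain ⟨χ, hχ⟩ := hcolor hU₁ (hG.inducedOn U) (fun hcopy ↦ hfree hcopy.of_inducedOn)
    fun v ↦ (hdegree _ hU₂).trans (mod_cast hdegU v)
  exact hlarge'.not_ge (card_le_turanNum_of_isStrongColoring k.succ_pos (hG.inducedOn U) hχ)

lemma isRGraph_turanGraph (r n k : ℕ) : IsRGraph r (turanGraph r n k) := fun _ he ↦
  (mem_powersetCard.1 (mem_filter.1 he).1).2

/-- **Theorem (edge-critical case).**  Given a 2-graph `F` with `χ(F) = ℓ > r ≥ 2`, if `F` is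
edge-critical (deleting some edge lowers the chromatic number), then for all sufficiently
large `n`, `ex(n, H_F^(r)) = t_r(n, ℓ-1)`. -/
theorem turan_number_expansion_edge_critical {α : Type*} [Fintype α] [DecidableEq α]
    (r ℓ : ℕ) (hr : 2 ≤ r) (hrl : r < ℓ)
    (F : SimpleGraph α) [DecidableRel F.Adj] (hχ : F.chromaticNumber = (ℓ : ℕ∞))
    (hcrit : ∃ e ∈ F.edgeSet, (F.deleteEdges {e}).chromaticNumber < F.chromaticNumber) :
    ∃ n₀ : ℕ, ∀ n : ℕ, n₀ ≤ n → exNum r n (expansion r F) = turanNum r n (ℓ - 1) := by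
  obtain ⟨r, rfl⟩ := Nat.exists_eq_add_of_le' hr
  obtain ⟨k, rfl⟩ := Nat.exists_eq_add_of_le' (hr.trans hrl.le)
  obtain ⟨e, he, hlt⟩ := hcrit
  have hF : ¬ F.Colorable (k + 1) :=
    (SimpleGraph.chromaticNumber_eq_iff_colorable_not_colorable.1 hχ).2
  have hFe : (F.deleteEdges {e}).Colorable (k + 1) :=
    SimpleGraph.chromaticNumber_le_iff_colorable.1 (Order.le_of_lt_add_one
      (hlt.trans_eq (hχ.trans (Nat.cast_succ _))))
  obtain ⟨c, a, b, hc⟩ := exists_isCriticalColoring he hF hFe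
  obtain ⟨n₀, hn₀⟩ := hc.exists_forall_card_le_turanNum (r := r) (by omega)
  refine ⟨n₀, fun n hn ↦ IsGreatest.csSup_eq ⟨?_, ?_⟩⟩
  · exact ⟨turanGraph (r + 2) n (k + 1), isRGraph_turanGraph _ _ _,
      not_containsCopy_turanGraph k.succ_pos hF _ _, rfl⟩
  · rintro m ⟨G, hG, hfree, rfl⟩
    simpa using hn₀ (by simpa using hn) hG hfree
end
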